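/- arXiv:1011.4725 — 2 statements merged into one kernel-verified Lean document; each statement's English description precedes it below -/
import Mathlib

section
/- For every distortion pair (d1,d2) ∈ ℝ₊², the rate-distortion function is sandwiched between the cut-set lower bound and the compress-linear upper bound: max{ R_{X|Y}(d1), R_{Y|X}(d2) } ≤ R(d1,d2) ≤ max{ R^{WZ}_{X|Y}(d1), R^{WZ}_{Y|X}(d2) }. -/
open scoped BigOperators Classical

noncomputable section

namespace TWR

/-- Base-2 Shannon entropy of a finitely supported distribution (with the
convention `0 * log 0 = 0`, automatic since `Real.logb 2 0 = 0`). -/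
def H2 {α : Type} [Fintype α] (p : α → ℝ) : ℝ :=
  -∑ a, p a * Real.logb 2 (p a)

/-- `p` is a probability mass function. -/
def IsPmf {α : Type} [Fintype α] (p : α → ℝ) : Prop :=
  (∀ a, 0 ≤ p a) ∧ ∑ a, p a = 1

/-- `W` is a conditional pmf. -/
def IsCondPmf {α β : Type} [Fintype β] (W : α → β → ℝ) : Prop :=
  ∀ a, IsPmf (W a)

/-- Mutual information `I(A;B)` (base 2) of a joint pmf on `α × β`. -/
def MI {α β : Type} [Fintype α] [Fintype β] (p : α × β → ℝ) : ℝ :=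
  H2 (fun a => ∑ b, p (a, b)) + H2 (fun b => ∑ a, p (a, b)) - H2 p

/-- Conditional entropy `H(A|B)` of a joint pmf on `α × β`. -/
def condH {α β : Type} [Fintype α] [Fintype β] (p : α × β → ℝ) : ℝ :=
  H2 p - H2 (fun b => ∑ a, p (a, b))

/-- Conditional mutual information `I(A;C|B)` of a joint pmf on `α × β × γ`,
conditioning on the middle coordinate (`I(A;C|B) = H(A,B)+H(B,C)-H(A,B,C)-H(B)`). -/
def condMI {α β γ : Type} [Fintype α] [Fintype β] [Fintype γ] (p : α × β × γ → ℝ) : ℝ :=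
  H2 (fun ab : α × β => ∑ c, p (ab.1, ab.2, c)) +
    H2 (fun bc : β × γ => ∑ a, p (a, bc.1, bc.2)) -
    H2 p - H2 (fun b : β => ∑ a, ∑ c, p (a, b, c))

/-- Markov chain `A − B − C` for a joint pmf on `α × β × γ`. -/
def Markov {α β γ : Type} [Fintype α] [Fintype β] [Fintype γ] (p : α × β × γ → ℝ) : Prop :=
  ∀ a b c, p (a, b, c) * (∑ a', ∑ c', p (a', b, c')) =
    (∑ c', p (a, b, c')) * (∑ a', p (a', b, c))

variable {𝒳 𝒴 Xh Yh 𝒲 𝒰 𝒱 : Type}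
variable [Fintype 𝒳] [Fintype 𝒴] [Fintype Xh] [Fintype Yh]
variable [Fintype 𝒲] [Fintype 𝒰] [Fintype 𝒱]

/-- The i.i.d. block source. -/
def iid (q : 𝒳 × 𝒴 → ℝ) (n : ℕ) : (Fin n → 𝒳) × (Fin n → 𝒴) → ℝ :=
  fun xy => ∏ i, q (xy.1 i, xy.2 i)

/-- Average distortion at receiver 1 of the RD code `(f, g1, ·)`. -/
def Delta1 (q : 𝒳 × 𝒴 → ℝ) (δ1 : 𝒳 → Xh → ℝ) {n m : ℕ}
    (f : (Fin n → 𝒳) × (Fin n → 𝒴) → Fin m)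
    (g1 : Fin m × (Fin n → 𝒴) → Fin n → Xh) : ℝ :=
  ∑ xy : (Fin n → 𝒳) × (Fin n → 𝒴),
    iid q n xy * ((n : ℝ)⁻¹ * ∑ i, δ1 (xy.1 i) (g1 (f xy, xy.2) i))

/-- Average distortion at receiver 2 of the RD code `(f, ·, g2)`. -/
def Delta2 (q : 𝒳 × 𝒴 → ℝ) (δ2 : 𝒴 → Yh → ℝ) {n m : ℕ}
    (f : (Fin n → 𝒳) × (Fin n → 𝒴) → Fin m)
    (g2 : Fin m × (Fin n → 𝒳) → Fin n → Yh) : ℝ :=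
  ∑ xy : (Fin n → 𝒳) × (Fin n → 𝒴),
    iid q n xy * ((n : ℝ)⁻¹ * ∑ i, δ2 (xy.2 i) (g2 (f xy, xy.1) i))

/-- `r` is a `(d1,d2)`-achievable rate (source coding). -/
def RDAchievable (q : 𝒳 × 𝒴 → ℝ) (δ1 : 𝒳 → Xh → ℝ) (δ2 : 𝒴 → Yh → ℝ)
    (d1 d2 r : ℝ) : Prop :=
  ∀ ε > (0 : ℝ), ∃ (n m : ℕ) (f : (Fin n → 𝒳) × (Fin n → 𝒴) → Fin m)
    (g1 : Fin m × (Fin n → 𝒴) → Fin n → Xh)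
    (g2 : Fin m × (Fin n → 𝒳) → Fin n → Yh),
    0 < n ∧ Real.logb 2 m / n ≤ r + ε ∧
    Delta1 q δ1 f g1 ≤ d1 + ε ∧ Delta2 q δ2 f g2 ≤ d2 + ε

/-- The rate-distortion function `R(d1,d2)`. -/
def RD (q : 𝒳 × 𝒴 → ℝ) (δ1 : 𝒳 → Xh → ℝ) (δ2 : 𝒴 → Yh → ℝ) (d1 d2 : ℝ) : ℝ :=
  sInf {r : ℝ | 0 ≤ r ∧ RDAchievable q δ1 δ2 d1 d2 r}

/-- `r` is `(d1,d2)`-achievable with common reconstructions. -/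
def CRAchievable (q : 𝒳 × 𝒴 → ℝ) (δ1 : 𝒳 → Xh → ℝ) (δ2 : 𝒴 → Yh → ℝ)
    (d1 d2 r : ℝ) : Prop :=
  ∀ ε > (0 : ℝ), ∃ (n m : ℕ) (f : (Fin n → 𝒳) × (Fin n → 𝒴) → Fin m)
    (g1 : Fin m × (Fin n → 𝒴) → Fin n → Xh)
    (g2 : Fin m × (Fin n → 𝒳) → Fin n → Yh)
    (φ1 : Fin m × (Fin n → 𝒴) → Fin n → Yh)
    (φ2 : Fin m × (Fin n → 𝒳) → Fin n → Xh),
    0 < n ∧ Real.logb 2 m / n ≤ r + ε ∧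
    Delta1 q δ1 f g1 ≤ d1 + ε ∧ Delta2 q δ2 f g2 ≤ d2 + ε ∧
    (∑ xy : (Fin n → 𝒳) × (Fin n → 𝒴),
      if φ2 (f xy, xy.1) = g1 (f xy, xy.2) then 0 else iid q n xy) ≤ ε ∧
    (∑ xy : (Fin n → 𝒳) × (Fin n → 𝒴),
      if φ1 (f xy, xy.2) = g2 (f xy, xy.1) then 0 else iid q n xy) ≤ ε

/-- The common-reconstruction rate-distortion function `R_CR(d1,d2)`. -/
def CRRD (q : 𝒳 × 𝒴 → ℝ) (δ1 : 𝒳 → Xh → ℝ) (δ2 : 𝒴 → Yh → ℝ) (d1 d2 : ℝ) : ℝ :=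
  sInf {r : ℝ | 0 ≤ r ∧ CRAchievable q δ1 δ2 d1 d2 r}

/-- The conditional rate-distortion function `R_{X|Y}(d1)`. -/
def condRD (q : 𝒳 × 𝒴 → ℝ) (δ1 : 𝒳 → Xh → ℝ) (d1 : ℝ) : ℝ :=
  sInf {r : ℝ | ∃ W : 𝒳 × 𝒴 → Xh → ℝ, IsCondPmf W ∧
    (∑ x, ∑ y, ∑ xh, q (x, y) * W (x, y) xh * δ1 x xh) ≤ d1 ∧
    r = condMI (fun t : 𝒳 × 𝒴 × Xh => q (t.1, t.2.1) * W (t.1, t.2.1) t.2.2)}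

/-- Swap the two components of a joint source. -/
def swap (q : 𝒳 × 𝒴 → ℝ) : 𝒴 × 𝒳 → ℝ := fun t => q (t.2, t.1)

/-- The marginal rate-distortion function `R_X(d)`. -/
def margRD (qX : 𝒳 → ℝ) (δ1 : 𝒳 → Xh → ℝ) (d1 : ℝ) : ℝ :=
  sInf {r : ℝ | ∃ W : 𝒳 → Xh → ℝ, IsCondPmf W ∧
    (∑ x, ∑ xh, qX x * W x xh * δ1 x xh) ≤ d1 ∧
    r = MI (fun t : 𝒳 × Xh => qX t.1 * W t.1 t.2)}

def margX (q : 𝒳 × 𝒴 → ℝ) : 𝒳 → ℝ := fun x => ∑ y, q (x, y)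
def margY (q : 𝒳 × 𝒴 → ℝ) : 𝒴 → ℝ := fun y => ∑ x, q (x, y)

/-- The joint rate-distortion function `R_{XY}(d1,d2)`. -/
def jointRD (q : 𝒳 × 𝒴 → ℝ) (δ1 : 𝒳 → Xh → ℝ) (δ2 : 𝒴 → Yh → ℝ) (d1 d2 : ℝ) : ℝ :=
  sInf {r : ℝ | ∃ W : 𝒳 × 𝒴 → Xh × Yh → ℝ, IsCondPmf W ∧
    (∑ xy : 𝒳 × 𝒴, ∑ z : Xh × Yh, q xy * W xy z * δ1 xy.1 z.1) ≤ d1 ∧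
    (∑ xy : 𝒳 × 𝒴, ∑ z : Xh × Yh, q xy * W xy z * δ2 xy.2 z.2) ≤ d2 ∧
    r = MI (fun t : (𝒳 × 𝒴) × (Xh × Yh) => q t.1 * W t.1 t.2)}

/-- The Wyner–Ziv rate-distortion function `R^{WZ}_{X|Y}(d1)`
(with auxiliary alphabet of cardinality `|𝒳| + 1`). -/
def wzRD (q : 𝒳 × 𝒴 → ℝ) (δ1 : 𝒳 → Xh → ℝ) (d1 : ℝ) : ℝ :=
  sInf {r : ℝ | ∃ p : Fin (Fintype.card 𝒳 + 1) × 𝒳 × 𝒴 → ℝ, IsPmf p ∧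
    (∀ x y, (∑ a, p (a, x, y)) = q (x, y)) ∧ Markov p ∧
    (∃ π1 : Fin (Fintype.card 𝒳 + 1) × 𝒴 → Xh,
      (∑ a, ∑ x, ∑ y, p (a, x, y) * δ1 x (π1 (a, y))) ≤ d1) ∧
    r = condMI (fun t : 𝒳 × 𝒴 × Fin (Fintype.card 𝒳 + 1) => p (t.2.2, t.1, t.2.1))}

/-- The set over which the single-letter CR formula
`max{I(X;X̂,Ŷ|Y), I(Y;X̂,Ŷ|X)}` is minimised. -/
def crFormulaSet (q : 𝒳 × 𝒴 → ℝ) (δ1 : 𝒳 → Xh → ℝ) (δ2 : 𝒴 → Yh → ℝ)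
    (d1 d2 : ℝ) : Set ℝ :=
  {r : ℝ | ∃ W : 𝒳 × 𝒴 → Xh × Yh → ℝ, IsCondPmf W ∧
    (∑ x, ∑ y, ∑ z : Xh × Yh, q (x, y) * W (x, y) z * δ1 x z.1) ≤ d1 ∧
    (∑ x, ∑ y, ∑ z : Xh × Yh, q (x, y) * W (x, y) z * δ2 y z.2) ≤ d2 ∧
    r = max
      (condMI (fun t : 𝒳 × 𝒴 × (Xh × Yh) => q (t.1, t.2.1) * W (t.1, t.2.1) t.2.2))
      (condMI (fun t : 𝒴 × 𝒳 × (Xh × Yh) => q (t.2.1, t.1) * W (t.2.1, t.1) t.2.2))}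

/-- Joint law of source blocks and channel outputs for a JSC encoder. -/
def jscP (q : 𝒳 × 𝒴 → ℝ) (qUV : 𝒲 → 𝒰 × 𝒱 → ℝ) {n m : ℕ}
    (f : (Fin n → 𝒳) × (Fin n → 𝒴) → Fin m → 𝒲)
    (x : Fin n → 𝒳) (y : Fin n → 𝒴) (u : Fin m → 𝒰) (v : Fin m → 𝒱) : ℝ :=
  (∏ i, q (x i, y i)) * ∏ j, qUV (f (x, y) j) (u j, v j)

/-- `(d1,d2)` is achievable by joint source-channel coding with source rate `κs`
and channel rate `κc` (bandwidth expansion `κc/κs`). -/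
def JSCAchievable (q : 𝒳 × 𝒴 → ℝ) (qUV : 𝒲 → 𝒰 × 𝒱 → ℝ)
    (δ1 : 𝒳 → Xh → ℝ) (δ2 : 𝒴 → Yh → ℝ) (κs κc d1 d2 : ℝ) : Prop :=
  ∀ ε > (0 : ℝ), ∃ (t n m : ℕ) (f : (Fin n → 𝒳) × (Fin n → 𝒴) → Fin m → 𝒲)
    (g1 : (Fin m → 𝒰) × (Fin n → 𝒴) → Fin n → Xh)
    (g2 : (Fin m → 𝒱) × (Fin n → 𝒳) → Fin n → Yh),
    0 < t ∧ (n : ℝ) = κs * t ∧ (m : ℝ) = κc * t ∧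
    (∑ x : Fin n → 𝒳, ∑ y : Fin n → 𝒴, ∑ u : Fin m → 𝒰, ∑ v : Fin m → 𝒱,
      jscP q qUV f x y u v * ((n : ℝ)⁻¹ * ∑ i, δ1 (x i) (g1 (u, y) i))) ≤ d1 + ε ∧
    (∑ x : Fin n → 𝒳, ∑ y : Fin n → 𝒴, ∑ u : Fin m → 𝒰, ∑ v : Fin m → 𝒱,
      jscP q qUV f x y u v * ((n : ℝ)⁻¹ * ∑ i, δ2 (y i) (g2 (v, x) i))) ≤ d2 + ε

/-- `(d1,d2)` is achievable by joint source-channel coding with common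
reconstructions, source rate `κs` and channel rate `κc`. -/
def CRJSCAchievable (q : 𝒳 × 𝒴 → ℝ) (qUV : 𝒲 → 𝒰 × 𝒱 → ℝ)
    (δ1 : 𝒳 → Xh → ℝ) (δ2 : 𝒴 → Yh → ℝ) (κs κc d1 d2 : ℝ) : Prop :=
  ∀ ε > (0 : ℝ), ∃ (t n m : ℕ) (f : (Fin n → 𝒳) × (Fin n → 𝒴) → Fin m → 𝒲)
    (g1 : (Fin m → 𝒰) × (Fin n → 𝒴) → Fin n → Xh)
    (g2 : (Fin m → 𝒱) × (Fin n → 𝒳) → Fin n → Yh)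
    (φ1 : (Fin m → 𝒰) × (Fin n → 𝒴) → Fin n → Yh)
    (φ2 : (Fin m → 𝒱) × (Fin n → 𝒳) → Fin n → Xh),
    0 < t ∧ (n : ℝ) = κs * t ∧ (m : ℝ) = κc * t ∧
    (∑ x : Fin n → 𝒳, ∑ y : Fin n → 𝒴, ∑ u : Fin m → 𝒰, ∑ v : Fin m → 𝒱,
      jscP q qUV f x y u v * ((n : ℝ)⁻¹ * ∑ i, δ1 (x i) (g1 (u, y) i))) ≤ d1 + ε ∧
    (∑ x : Fin n → 𝒳, ∑ y : Fin n → 𝒴, ∑ u : Fin m → 𝒰, ∑ v : Fin m → 𝒱,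
      jscP q qUV f x y u v * ((n : ℝ)⁻¹ * ∑ i, δ2 (y i) (g2 (v, x) i))) ≤ d2 + ε ∧
    (∑ x : Fin n → 𝒳, ∑ y : Fin n → 𝒴, ∑ u : Fin m → 𝒰, ∑ v : Fin m → 𝒱,
      if φ2 (v, x) = g1 (u, y) then 0 else jscP q qUV f x y u v) ≤ ε ∧
    (∑ x : Fin n → 𝒳, ∑ y : Fin n → 𝒴, ∑ u : Fin m → 𝒰, ∑ v : Fin m → 𝒱,
      if φ1 (u, y) = g2 (v, x) then 0 else jscP q qUV f x y u v) ≤ ε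

/-- `I(W;U)` under the joint law `pW · qUV` (U-marginal of the broadcast channel). -/
def chMIU (qUV : 𝒲 → 𝒰 × 𝒱 → ℝ) (pW : 𝒲 → ℝ) : ℝ :=
  MI (fun t : 𝒲 × 𝒰 => pW t.1 * ∑ v, qUV t.1 (t.2, v))

/-- `I(W;V)` under the joint law `pW · qUV` (V-marginal of the broadcast channel). -/
def chMIV (qUV : 𝒲 → 𝒰 × 𝒱 → ℝ) (pW : 𝒲 → ℝ) : ℝ :=
  MI (fun t : 𝒲 × 𝒱 => pW t.1 * ∑ u, qUV t.1 (u, t.2))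

/-- The doubly symmetric binary source with crossover probability `ρ`. -/
def dsbs (ρ : ℝ) : Bool × Bool → ℝ :=
  fun t => if t.1 = t.2 then (1 - ρ) / 2 else ρ / 2

/-- The Hamming distortion measure. -/
def dHam {α : Type} : α → α → ℝ := fun a b => if a = b then 0 else 1

/-- The binary entropy function (base 2). -/
def binEnt (x : ℝ) : ℝ := -(x * Real.logb 2 x) - (1 - x) * Real.logb 2 (1 - x)

/-- A difference distortion measure built from a per-letter function of the
(modular) difference. -/
def diffD {l : ℕ} (δ : Fin l → ℝ) : Fin l → Fin l → ℝ := fun a b => δ (a - b)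

/-- Capacity of the modulo-additive channel with noise `pN` and input
distortion constraint `d`. -/
def Cadd {l : ℕ} (δ : Fin l → ℝ) (d : ℝ) (pN : Fin l → ℝ) : ℝ :=
  sSup {r : ℝ | ∃ pW : Fin l → ℝ, IsPmf pW ∧ (∑ w, pW w * δ w) ≤ d ∧
    r = MI (fun t : Fin l × Fin l => pW t.1 * pN (t.2 - t.1))}

/-- The minimax (worst-noise) capacity under distortion constraint `d`. -/
def Cworst {l : ℕ} (δ : Fin l → ℝ) (d : ℝ) : ℝ :=
  sInf {r : ℝ | ∃ pN : Fin l → ℝ, IsPmf pN ∧ (∑ x, pN x * δ x) ≤ d ∧ r = Cadd δ d pN}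

/-- Wyner's common information `K(X;Y)` (auxiliary alphabet of size 4). -/
def wynerK (q : 𝒳 × 𝒴 → ℝ) : ℝ :=
  sInf {r : ℝ | ∃ W : 𝒳 × 𝒴 → Fin 4 → ℝ, IsCondPmf W ∧
    Markov (fun t : 𝒳 × Fin 4 × 𝒴 => q (t.1, t.2.2) * W (t.1, t.2.2) t.2.1) ∧
    r = MI (fun t : (𝒳 × 𝒴) × Fin 4 => q t.1 * W t.1 t.2)}

/-- The one-description (Kimura–Uyematsu) upper bound `R_U*(d1,d2)`. -/
def oneDescUB (q : 𝒳 × 𝒴 → ℝ) (δ1 : 𝒳 → Xh → ℝ) (δ2 : 𝒴 → Yh → ℝ) (d1 d2 : ℝ) : ℝ :=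
  sInf {r : ℝ | ∃ W : 𝒳 × 𝒴 → Fin (Fintype.card 𝒳 * Fintype.card 𝒴 + 2) → ℝ,
    IsCondPmf W ∧
    (∃ π1 : Fin (Fintype.card 𝒳 * Fintype.card 𝒴 + 2) × 𝒴 → Xh,
      (∑ x, ∑ y, ∑ c, q (x, y) * W (x, y) c * δ1 x (π1 (c, y))) ≤ d1) ∧
    (∃ π2 : Fin (Fintype.card 𝒳 * Fintype.card 𝒴 + 2) × 𝒳 → Yh,
      (∑ x, ∑ y, ∑ c, q (x, y) * W (x, y) c * δ2 y (π2 (c, x))) ≤ d2) ∧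
    r = max
      (condMI (fun t : 𝒳 × 𝒴 × Fin (Fintype.card 𝒳 * Fintype.card 𝒴 + 2) =>
        q (t.1, t.2.1) * W (t.1, t.2.1) t.2.2))
      (condMI (fun t : 𝒴 × 𝒳 × Fin (Fintype.card 𝒳 * Fintype.card 𝒴 + 2) =>
        q (t.2.1, t.1) * W (t.2.1, t.1) t.2.2))}

end TWR

namespace TWR

/-- Indicator of a proposition, as a real number. -/
def ind (P : Prop) : ℝ := if P then 1 else 0

lemma ind_nonneg (P : Prop) : 0 ≤ ind P := by unfold ind; split_ifs <;> norm_num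
lemma ind_le_one (P : Prop) : ind P ≤ 1 := by unfold ind; split_ifs <;> norm_num
lemma ind_true {P : Prop} (h : P) : ind P = 1 := by simp [ind, h]
lemma ind_false {P : Prop} (h : ¬ P) : ind P = 0 := by simp [ind, h]
lemma ind_mono {P Q : Prop} (h : P → Q) : ind P ≤ ind Q := by
  by_cases hp : P
  · rw [ind_true hp, ind_true (h hp)]
  · rw [ind_false hp]; exact ind_nonneg _
lemma ind_or_le (P Q : Prop) : ind (P ∨ Q) ≤ ind P + ind Q := by
  by_cases hp : P
  · rw [ind_true (Or.inl hp), ind_true hp]; linarith [ind_nonneg Q]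
  · by_cases hq : Q
    · rw [ind_true (Or.inr hq), ind_true hq]; linarith [ind_nonneg P]
    · rw [ind_false (by tauto)]; linarith [ind_nonneg P, ind_nonneg Q]

/-- Jensen for the logarithm. -/
lemma sum_logb_le {ι : Type} [Fintype ι] (p t : ι → ℝ) (hp : IsPmf p)
    (ht : ∀ i, 0 < p i → 0 < t i) (M : ℝ) (hM : ∑ i, p i * t i ≤ M) :
    ∑ i, p i * Real.logb 2 (t i) ≤ Real.logb 2 M := by
  have hnn : ∀ i, 0 ≤ p i * t i := fun i => by
    rcases (hp.1 i).eq_or_lt with h | h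
    · rw [← h]; simp
    · exact mul_nonneg h.le (ht i h).le
  have hMpos : 0 < M := by
    obtain ⟨i, hi⟩ : ∃ i, 0 < p i := by
      by_contra! hcon
      have : ∑ i, p i ≤ 0 := Finset.sum_nonpos fun i _ => hcon i
      linarith [hp.2]
    have : p i * t i ≤ ∑ i, p i * t i :=
      Finset.single_le_sum (f := fun i => p i * t i) (fun i _ => hnn i) (Finset.mem_univ i)
    have := mul_pos hi (ht i hi)
    linarith
  have hl : 0 < Real.log 2 := Real.log_pos (by norm_num)
  have key : ∀ i, p i * Real.logb 2 (t i) ≤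
      p i * (Real.logb 2 M - 1 / Real.log 2) + (p i * t i) * (1 / (M * Real.log 2)) := by
    intro i
    rcases (hp.1 i).eq_or_lt with h | h
    · rw [← h]; simp
    · have h1 := ht i h
      have h2 : Real.log (t i / M) ≤ t i / M - 1 := Real.log_le_sub_one_of_pos (by positivity)
      rw [Real.log_div h1.ne' hMpos.ne'] at h2
      have h3 : Real.logb 2 (t i) ≤ (Real.logb 2 M - 1 / Real.log 2) +
          t i * (1 / (M * Real.log 2)) := by
        unfold Real.logb
        rw [div_le_iff₀ hl]
        have : (Real.log M / Real.log 2 - 1 / Real.log 2 + t i * (1 / (M * Real.log 2))) *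
          Real.log 2 = Real.log M - 1 + t i / M := by field_simp
        rw [this]; linarith
      calc p i * Real.logb 2 (t i) ≤ p i * _ := mul_le_mul_of_nonneg_left h3 h.le
        _ = _ := by ring
  calc ∑ i, p i * Real.logb 2 (t i) ≤ _ := Finset.sum_le_sum fun i _ => key i
    _ = (Real.logb 2 M - 1 / Real.log 2) + (∑ i, p i * t i) * (1 / (M * Real.log 2)) := by
      rw [Finset.sum_add_distrib, ← Finset.sum_mul, ← Finset.sum_mul, hp.2, one_mul]
    _ ≤ (Real.logb 2 M - 1 / Real.log 2) + M * (1 / (M * Real.log 2)) := by gcongr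
    _ = Real.logb 2 M := by field_simp; ring

lemma exists_le_avg {ι : Type} [Fintype ι] (p v : ι → ℝ) (hp : IsPmf p) (M : ℝ)
    (hM : ∑ i, p i * v i ≤ M) : ∃ i, v i ≤ M := by
  by_contra! hcon
  obtain ⟨i, hi⟩ : ∃ i, 0 < p i := by
    by_contra! hcon
    have : ∑ i, p i ≤ 0 := Finset.sum_nonpos fun i _ => hcon i
    linarith [hp.2]
  have : ∑ i, p i * M < ∑ i, p i * v i :=
    Finset.sum_lt_sum (fun i _ => mul_le_mul_of_nonneg_left (hcon i).le (hp.1 i))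
      ⟨i, Finset.mem_univ i, mul_lt_mul_of_pos_left (hcon i) hi⟩
  rw [← Finset.sum_mul, hp.2, one_mul] at this
  linarith

/-! ### Product distributions -/

section prod
variable {ι Z : Type} [Fintype ι] [DecidableEq ι] [Fintype Z]

lemma sum_prod_pi (F : ι → Z → ℝ) : ∑ z : ι → Z, ∏ i, F i (z i) = ∏ i, ∑ a, F i a :=
  (Fintype.prod_sum F).symm

lemma isPmf_pi (p : Z → ℝ) (hp : IsPmf p) : IsPmf (fun z : ι → Z => ∏ i, p (z i)) :=
  ⟨fun z => Finset.prod_nonneg fun i _ => hp.1 _, by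
    rw [sum_prod_pi (fun _ => p)]; simp [hp.2]⟩

lemma sum_pi_coord (p : Z → ℝ) (hp : ∑ z, p z = 1) (g : Z → ℝ) (j : ι) :
    ∑ z : ι → Z, (∏ i, p (z i)) * g (z j) = ∑ a, p a * g a := by
  have : ∀ z : ι → Z, (∏ i, p (z i)) * g (z j) =
      ∏ i, (p (z i) * if i = j then g (z i) else 1) := by
    intro z
    rw [Finset.prod_mul_distrib]; simp
  simp_rw [this]
  rw [sum_prod_pi (fun i a => p a * if i = j then g a else 1)]
  rw [Finset.prod_eq_single j]
  · simp
  · intro i _ hij; simp [hij, hp]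
  · simp

lemma sum_pi_pair (p : Z → ℝ) (hp : ∑ z, p z = 1) (g h : Z → ℝ) (j k : ι) (hjk : j ≠ k) :
    ∑ z : ι → Z, (∏ i, p (z i)) * (g (z j) * h (z k)) = (∑ a, p a * g a) * ∑ a, p a * h a := by
  have : ∀ z : ι → Z, (∏ i, p (z i)) * (g (z j) * h (z k)) =
      ∏ i, (p (z i) * ((if i = j then g (z i) else 1) * (if i = k then h (z i) else 1))) := by
    intro z
    rw [Finset.prod_mul_distrib, Finset.prod_mul_distrib]; simp
  simp_rw [this]
  rw [sum_prod_pi (fun i a => p a * ((if i = j then g a else 1) * (if i = k then h a else 1)))]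
  rw [← Finset.prod_subset (Finset.subset_univ {j, k}), Finset.prod_pair hjk]
  · simp [hjk, hjk.symm]
  · intro i _ hi
    simp only [Finset.mem_insert, Finset.mem_singleton, not_or] at hi
    simp [hi.1, hi.2, hp]

end prod

/-- Chebyshev. -/
lemma cheb {Z : Type} [Fintype Z] (p : Z → ℝ) (hp : IsPmf p) (f : Z → ℝ)
    (hf : ∑ z, p z * f z = 0) (n : ℕ) (hn : 0 < n) (γ : ℝ) (hγ : 0 < γ) :
    ∑ z : Fin n → Z, (∏ i, p (z i)) * ind ((n : ℝ) * γ ≤ ∑ i, f (z i)) ≤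
      (∑ z, p z * f z ^ 2) / γ ^ 2 / n := by
  have hn' : (0 : ℝ) < n := by exact_mod_cast hn
  have h1 : ∀ z : Fin n → Z, ind ((n : ℝ) * γ ≤ ∑ i, f (z i)) ≤
      (∑ i, f (z i)) ^ 2 * (1 / ((n : ℝ) * γ) ^ 2) := by
    intro z
    by_cases h : (n : ℝ) * γ ≤ ∑ i, f (z i)
    · rw [ind_true h, mul_one_div, le_div_iff₀ (by positivity), one_mul]
      exact pow_le_pow_left₀ (by positivity) h 2
    · rw [ind_false h]; positivity
  have h2 : ∑ z : Fin n → Z, (∏ i, p (z i)) * (∑ i, f (z i)) ^ 2 = n * ∑ z, p z * f z ^ 2 := by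
    have : ∀ z : Fin n → Z, (∏ i, p (z i)) * (∑ i, f (z i)) ^ 2 =
        ∑ j, ∑ k, (∏ i, p (z i)) * (f (z j) * f (z k)) := by
      intro z
      rw [sq, Finset.sum_mul_sum, Finset.mul_sum]
      exact Finset.sum_congr rfl fun j _ => Finset.mul_sum _ _ _
    simp_rw [this]
    rw [Finset.sum_comm]
    have h3 : ∀ j : Fin n, ∑ z : Fin n → Z, ∑ k, (∏ i, p (z i)) * (f (z j) * f (z k)) =
        ∑ z, p z * f z ^ 2 := by
      intro j
      rw [Finset.sum_comm, Finset.sum_eq_single j]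
      · rw [sum_pi_coord p hp.2 (fun a => f a * f a)]
        exact Finset.sum_congr rfl fun a _ => by ring
      · intro k _ hk
        rw [sum_pi_pair p hp.2 f f j k hk.symm, hf, zero_mul]
      · simp
    rw [Finset.sum_congr rfl fun j _ => h3 j]; simp
  calc _ ≤ ∑ z : Fin n → Z, (∏ i, p (z i)) * ((∑ i, f (z i)) ^ 2 * (1 / ((n : ℝ) * γ) ^ 2)) :=
        Finset.sum_le_sum fun z _ => mul_le_mul_of_nonneg_left (h1 z)
          (Finset.prod_nonneg fun i _ => hp.1 _)
    _ = (n * ∑ z, p z * f z ^ 2) * (1 / ((n : ℝ) * γ) ^ 2) := by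
        rw [← h2, Finset.sum_mul]; exact Finset.sum_congr rfl fun z _ => by ring
    _ = _ := by field_simp

/-- Weak law of large numbers. -/
lemma wlln {Z : Type} [Fintype Z] (p : Z → ℝ) (hp : IsPmf p) (f : Z → ℝ)
    (γ : ℝ) (hγ : 0 < γ) (ε : ℝ) (hε : 0 < ε) : ∃ n0 : ℕ, ∀ n ≥ n0,
    ∑ z : Fin n → Z, (∏ i, p (z i)) * ind ((n : ℝ) * (∑ a, p a * f a + γ) ≤ ∑ i, f (z i)) ≤ ε := by
  set μ := ∑ a, p a * f a with hμ
  set C := (∑ z, p z * (f z - μ) ^ 2) / γ ^ 2 with hC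
  have hCnn : 0 ≤ C := div_nonneg (Finset.sum_nonneg fun z _ =>
    mul_nonneg (hp.1 z) (sq_nonneg _)) (sq_nonneg _)
  refine ⟨max 1 ⌈C / ε⌉₊, fun n hn => ?_⟩
  have hn1 : 0 < n := lt_of_lt_of_le Nat.one_pos ((le_max_left _ _).trans hn)
  have hn' : (0 : ℝ) < n := by exact_mod_cast hn1
  have hn2 : C / ε ≤ n := (Nat.le_ceil _).trans (by exact_mod_cast (le_max_right _ _).trans hn)
  have h0 : ∑ z, p z * (f z - μ) = 0 := by
    simp_rw [mul_sub]; rw [Finset.sum_sub_distrib, ← Finset.sum_mul, hp.2, ← hμ]; ring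
  have := cheb p hp (fun z => f z - μ) h0 n hn1 γ hγ
  have hc : C / n ≤ ε := by
    rw [div_le_iff₀ hn']; rw [div_le_iff₀ hε] at hn2; linarith
  refine le_trans (Finset.sum_le_sum fun z _ => mul_le_mul_of_nonneg_left (ind_mono fun h => ?_)
    (Finset.prod_nonneg fun i _ => hp.1 _)) (this.trans hc)
  rw [Finset.sum_sub_distrib]; simp
  linarith

end TWR

namespace TWR

section info
variable {α β γ : Type} [Fintype α] [Fintype β] [Fintype γ]

lemma condMI_eq (p : α × β × γ → ℝ) : condMI p = ∑ t : α × β × γ, p t *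
    (Real.logb 2 (p t) + Real.logb 2 (∑ a, ∑ c, p (a, t.2.1, c))
      - Real.logb 2 (∑ c, p (t.1, t.2.1, c)) - Real.logb 2 (∑ a, p (a, t.2.1, t.2.2))) := by
  have h1 : H2 (fun ab : α × β => ∑ c, p (ab.1, ab.2, c)) =
      -∑ t : α × β × γ, p t * Real.logb 2 (∑ c, p (t.1, t.2.1, c)) := by
    unfold H2
    congr 1
    simp only [Fintype.sum_prod_type, Finset.sum_mul]
  have h2 : H2 (fun bc : β × γ => ∑ a, p (a, bc.1, bc.2)) =
      -∑ t : α × β × γ, p t * Real.logb 2 (∑ a, p (a, t.2.1, t.2.2)) := by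
    unfold H2
    congr 1
    rw [Fintype.sum_prod_type (f := fun t : α × β × γ => _), Finset.sum_comm]
    simp only [Finset.sum_mul]
  have h3 : H2 (fun b : β => ∑ a, ∑ c, p (a, b, c)) =
      -∑ t : α × β × γ, p t * Real.logb 2 (∑ a, ∑ c, p (a, t.2.1, c)) := by
    unfold H2
    congr 1
    simp only [Fintype.sum_prod_type, Finset.sum_mul]
    rw [Finset.sum_comm]
  unfold condMI
  rw [h1, h2, h3]
  unfold H2
  simp only [mul_add, mul_sub, Finset.sum_add_distrib, Finset.sum_sub_distrib]
  ring

lemma condMI_nonneg (p : α × β × γ → ℝ) (hp : IsPmf p) : 0 ≤ condMI p := by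
  rw [condMI_eq]
  have hnn := hp.1
  have hAB : ∀ t : α × β × γ, p t ≤ ∑ c, p (t.1, t.2.1, c) := fun t =>
    Finset.single_le_sum (f := fun c => p (t.1, t.2.1, c)) (fun c _ => hnn _) (Finset.mem_univ t.2.2)
  have hBC : ∀ t : α × β × γ, p t ≤ ∑ a, p (a, t.2.1, t.2.2) := fun t =>
    Finset.single_le_sum (f := fun a => p (a, t.2.1, t.2.2)) (fun c _ => hnn _) (Finset.mem_univ t.1)
  have hB : ∀ t : α × β × γ, ∑ c, p (t.1, t.2.1, c) ≤ ∑ a, ∑ c, p (a, t.2.1, c) := fun t =>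
    Finset.single_le_sum (f := fun a => ∑ c, p (a, t.2.1, c))
      (fun a _ => Finset.sum_nonneg fun c _ => hnn _) (Finset.mem_univ t.1)
  have key := sum_logb_le p (fun t => (∑ c, p (t.1, t.2.1, c)) * (∑ a, p (a, t.2.1, t.2.2)) /
      (p t * ∑ a, ∑ c, p (a, t.2.1, c))) hp (fun t ht => by
        have := hAB t; have := hBC t; have := hB t
        apply div_pos <;> apply mul_pos <;> linarith) 1 ?_
  · rw [Real.logb_one] at key
    have : ∀ t : α × β × γ, p t * (Real.logb 2 (p t) + Real.logb 2 (∑ a, ∑ c, p (a, t.2.1, c))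
      - Real.logb 2 (∑ c, p (t.1, t.2.1, c)) - Real.logb 2 (∑ a, p (a, t.2.1, t.2.2))) =
      - (p t * Real.logb 2 ((∑ c, p (t.1, t.2.1, c)) * (∑ a, p (a, t.2.1, t.2.2)) /
      (p t * ∑ a, ∑ c, p (a, t.2.1, c)))) := by
      intro t
      rcases (hnn t).eq_or_lt with h | h
      · rw [← h]; simp
      · have := hAB t; have := hBC t; have := hB t
        have e1 : 0 < ∑ c, p (t.1, t.2.1, c) := by linarith
        have e2 : 0 < ∑ a, p (a, t.2.1, t.2.2) := by linarith
        have e3 : 0 < ∑ a, ∑ c, p (a, t.2.1, c) := by linarith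
        rw [Real.logb_div (by positivity) (by positivity), Real.logb_mul (by positivity)
          (by positivity), Real.logb_mul (by positivity) (by positivity)]
        ring
    rw [Finset.sum_congr rfl fun t _ => this t, Finset.sum_neg_distrib]
    linarith
  · have hb : ∀ b, 0 ≤ ∑ a, ∑ c, p (a, b, c) := fun b =>
      Finset.sum_nonneg fun a _ => Finset.sum_nonneg fun c _ => hnn _
    calc _ ≤ ∑ t : α × β × γ, (∑ c, p (t.1, t.2.1, c)) * (∑ a, p (a, t.2.1, t.2.2)) /
            (∑ a, ∑ c, p (a, t.2.1, c)) := by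
          refine Finset.sum_le_sum fun t _ => ?_
          rcases (hnn t).eq_or_lt with h | h
          · rw [← h, zero_mul]
            exact div_nonneg (mul_nonneg (Finset.sum_nonneg fun c _ => hnn _)
              (Finset.sum_nonneg fun c _ => hnn _)) (hb _)
          · have := hAB t; have := hB t
            have e3 : 0 < ∑ a, ∑ c, p (a, t.2.1, c) := by linarith
            apply le_of_eq; field_simp
      _ = ∑ b, (∑ a, ∑ c, p (a, b, c)) * (∑ a, ∑ c, p (a, b, c)) / (∑ a, ∑ c, p (a, b, c)) := by
          rw [Fintype.sum_prod_type, Finset.sum_congr rfl fun a _ => Fintype.sum_prod_type _,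
            Finset.sum_comm]
          refine Finset.sum_congr rfl fun b _ => ?_
          simp only [← Finset.sum_div]
          congr 1
          simp only [← Finset.mul_sum]
          rw [← Finset.sum_mul]
          congr 1
          rw [Finset.sum_comm]
      _ ≤ ∑ b, ∑ a, ∑ c, p (a, b, c) := by
          refine Finset.sum_le_sum fun b _ => ?_
          rcases (hb b).eq_or_lt with h | h
          · rw [← h]; simp
          · rw [mul_div_assoc, div_self h.ne', mul_one]
      _ = 1 := by
          rw [Finset.sum_comm, ← hp.2]; simp only [Fintype.sum_prod_type]

lemma continuous_H2 : Continuous (fun p : α → ℝ => H2 p) := by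
  unfold H2 Real.logb
  refine (continuous_finsetSum _ fun a _ => ?_).neg
  have := (Real.continuous_mul_log.comp (continuous_apply (A := fun _ : α => ℝ) a)).div_const
    (Real.log 2)
  refine this.congr fun p => ?_
  simp only [Function.comp]; ring

lemma continuous_condMI : Continuous (fun p : α × β × γ → ℝ => condMI p) := by
  unfold condMI
  refine ((Continuous.add ?_ ?_).sub continuous_H2).sub ?_
  · exact continuous_H2.comp (by fun_prop)
  · exact continuous_H2.comp (by fun_prop)
  · exact continuous_H2.comp (by fun_prop)

end info

end TWR

namespace TWR

section conv
set_option linter.unusedSectionVars false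
variable {𝒳 𝒴 Xh Yh : Type} [Fintype 𝒳] [Fintype 𝒴] [Fintype Xh] [Fintype Yh]

lemma sum_iid (q : 𝒳 × 𝒴 → ℝ) (n : ℕ) (F : (Fin n → 𝒳) × (Fin n → 𝒴) → ℝ) :
    ∑ xy, iid q n xy * F xy =
      ∑ z : Fin n → 𝒳 × 𝒴, (∏ i, q (z i)) * F (fun i => (z i).1, fun i => (z i).2) := by
  symm
  refine Fintype.sum_equiv (Equiv.arrowProdEquivProdArrow (Fin n) (fun _ => 𝒳) (fun _ => 𝒴)) _ _ ?_
  intro z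
  rfl

lemma iid_isPmf (q : 𝒳 × 𝒴 → ℝ) (hq : IsPmf q) (n : ℕ) : IsPmf (iid q n) := by
  refine ⟨fun xy => Finset.prod_nonneg fun i _ => hq.1 _, ?_⟩
  have := sum_iid q n (fun _ => 1)
  simp only [mul_one] at this
  rw [this]
  exact (isPmf_pi q hq).2

lemma iid_coord (q : 𝒳 × 𝒴 → ℝ) (hq : IsPmf q) (n : ℕ) (h : 𝒳 × 𝒴 → ℝ) (i : Fin n) :
    ∑ xy, iid q n xy * h (xy.1 i, xy.2 i) = ∑ t, q t * h t := by
  rw [sum_iid q n (fun xy => h (xy.1 i, xy.2 i))]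
  exact sum_pi_coord q hq.2 h i

/-- The empirical single-letter law induced by a code. -/
def pe (q : 𝒳 × 𝒴 → ℝ) {n : ℕ} (G : (Fin n → 𝒳) × (Fin n → 𝒴) → Fin n → Xh) :
    𝒳 × 𝒴 × Xh → ℝ := fun t =>
  ∑ xy, iid q n xy * ((n : ℝ)⁻¹ * ∑ i, ind (t = (xy.1 i, xy.2 i, G xy i)))

lemma sum_pe (q : 𝒳 × 𝒴 → ℝ) {n : ℕ} (G : (Fin n → 𝒳) × (Fin n → 𝒴) → Fin n → Xh)
    (h : 𝒳 × 𝒴 × Xh → ℝ) : ∑ t, pe q G t * h t =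
      ∑ xy, iid q n xy * ((n : ℝ)⁻¹ * ∑ i, h (xy.1 i, xy.2 i, G xy i)) := by
  unfold pe
  simp only [Finset.sum_mul]
  rw [Finset.sum_comm]
  refine Finset.sum_congr rfl fun xy _ => ?_
  simp only [mul_assoc, ← Finset.mul_sum]
  congr 2
  simp only [Finset.sum_mul]
  rw [Finset.sum_comm]
  refine Finset.sum_congr rfl fun i _ => ?_
  simp [ind]

lemma pe_nonneg (q : 𝒳 × 𝒴 → ℝ) (hq : IsPmf q) {n : ℕ}
    (G : (Fin n → 𝒳) × (Fin n → 𝒴) → Fin n → Xh) (t) : 0 ≤ pe q G t :=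
  Finset.sum_nonneg fun xy _ => mul_nonneg ((iid_isPmf q hq n).1 xy)
    (mul_nonneg (by positivity) (Finset.sum_nonneg fun i _ => ind_nonneg _))

lemma pe_marg (q : 𝒳 × 𝒴 → ℝ) (hq : IsPmf q) {n : ℕ} (hn : 0 < n)
    (G : (Fin n → 𝒳) × (Fin n → 𝒴) → Fin n → Xh) (x : 𝒳) (y : 𝒴) :
    ∑ c, pe q G (x, y, c) = q (x, y) := by
  have hn' : (n : ℝ) ≠ 0 := by exact_mod_cast hn.ne'
  have h := sum_pe q G (fun t => ind ((t.1, t.2.1) = (x, y)))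
  have e1 : ∑ t, pe q G t * ind ((t.1, t.2.1) = (x, y)) = ∑ c, pe q G (x, y, c) := by
    rw [Fintype.sum_prod_type, Finset.sum_eq_single x, Fintype.sum_prod_type,
      Finset.sum_eq_single y]
    · simp [ind]
    · intro b _ hb; simp [ind, hb]
    · simp
    · intro b _ hb; simp [ind, hb]
    · simp
  rw [← e1, h]
  have e2 : ∀ xy : (Fin n → 𝒳) × (Fin n → 𝒴),
      iid q n xy * ((n : ℝ)⁻¹ * ∑ i, ind ((xy.1 i, xy.2 i) = (x, y))) =
      ∑ i, (n : ℝ)⁻¹ * (iid q n xy * ind ((xy.1 i, xy.2 i) = (x, y))) := by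
    intro xy
    rw [← Finset.mul_sum, ← Finset.mul_sum]; ring
  simp only [e2]
  rw [Finset.sum_comm]
  simp only [← Finset.mul_sum]
  rw [Finset.sum_congr rfl fun i _ => iid_coord q hq n (fun t => ind (t = (x, y))) i]
  simp [ind, hn']

lemma pe_pos (q : 𝒳 × 𝒴 → ℝ) (hq : IsPmf q) {n : ℕ} (hn : 0 < n)
    (G : (Fin n → 𝒳) × (Fin n → 𝒴) → Fin n → Xh) (xy) (h : 0 < iid q n xy) (i : Fin n) :
    0 < pe q G (xy.1 i, xy.2 i, G xy i) := by
  have hn' : (0 : ℝ) < n := by exact_mod_cast hn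
  unfold pe
  refine Finset.sum_pos' (fun z _ => mul_nonneg ((iid_isPmf q hq n).1 z)
    (mul_nonneg (by positivity) (Finset.sum_nonneg fun i _ => ind_nonneg _)))
    ⟨xy, Finset.mem_univ _, mul_pos h (mul_pos (by positivity) ?_)⟩
  exact Finset.sum_pos' (fun i _ => ind_nonneg _) ⟨i, Finset.mem_univ _, by
    rw [ind_true rfl]; norm_num⟩

lemma pe_condMI (q : 𝒳 × 𝒴 → ℝ) (hq : IsPmf q) {n m : ℕ} (hn : 0 < n)
    (f : (Fin n → 𝒳) × (Fin n → 𝒴) → Fin m) (g1 : Fin m × (Fin n → 𝒴) → Fin n → Xh) :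
    condMI (pe q (fun xy => g1 (f xy, xy.2))) ≤ Real.logb 2 m / n := by
  set G : (Fin n → 𝒳) × (Fin n → 𝒴) → Fin n → Xh := fun xy => g1 (f xy, xy.2) with hG
  have hn' : (0 : ℝ) < n := by exact_mod_cast hn
  have hP := iid_isPmf q hq n
  have pnn := pe_nonneg q hq G
  set p := pe q G with hp
  set r : 𝒴 → Xh → ℝ := fun y c => ∑ a, p (a, y, c) with hr
  set qY : 𝒴 → ℝ := fun y => ∑ x, q (x, y) with hqY
  have rnn : ∀ y c, 0 ≤ r y c := fun y c => Finset.sum_nonneg fun a _ => pnn _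
  have qYnn : ∀ y, 0 ≤ qY y := fun y => Finset.sum_nonneg fun a _ => hq.1 _
  have hpr : ∀ x y c, p (x, y, c) ≤ r y c := fun x y c =>
    Finset.single_le_sum (f := fun a => p (a, y, c)) (fun a _ => pnn _) (Finset.mem_univ x)
  have hqq : ∀ x y, q (x, y) ≤ qY y := fun x y =>
    Finset.single_le_sum (f := fun a => q (a, y)) (fun a _ => hq.1 _) (Finset.mem_univ x)
  have hpq : ∀ x y c, p (x, y, c) ≤ q (x, y) := fun x y c => by
    rw [← pe_marg q hq hn G x y]
    exact Finset.single_le_sum (f := fun c => p (x, y, c)) (fun a _ => pnn _) (Finset.mem_univ c)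
  rw [condMI_eq]
  simp only [hp, pe_marg q hq hn G]
  rw [sum_pe q G (fun t => Real.logb 2 (p t) + Real.logb 2 (qY t.2.1) - Real.logb 2 (q (t.1, t.2.1))
    - Real.logb 2 (r t.2.1 t.2.2))]
  set lam : 𝒳 → 𝒴 → Xh → ℝ := fun x y c => p (x, y, c) * qY y / (q (x, y) * r y c) with hlam
  have lamnn : ∀ x y c, 0 ≤ lam x y c := fun x y c =>
    div_nonneg (mul_nonneg (pnn _) (qYnn _)) (mul_nonneg (hq.1 _) (rnn _ _))
  have key := sum_logb_le (iid q n) (fun xy => ∏ i, lam (xy.1 i) (xy.2 i) (G xy i)) hP ?_ m ?_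
  · rw [le_div_iff₀ hn']
    refine le_trans (le_of_eq ?_) key
    rw [Finset.sum_mul]
    refine Finset.sum_congr rfl fun xy _ => ?_
    rcases (hP.1 xy).eq_or_lt with h | h
    · rw [← h]; simp
    · have hpos := fun i => pe_pos q hq hn G xy h i
      rw [Real.logb_prod]
      · rw [mul_assoc, mul_comm (_ * _) (n : ℝ), mul_inv_cancel_left₀ hn'.ne']
        congr 1
        refine Finset.sum_congr rfl fun i _ => ?_
        have h1 : 0 < p (xy.1 i, xy.2 i, G xy i) := hpos i
        have h2 := h1.trans_le (hpr _ _ _)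
        have h3 := h1.trans_le (hpq _ _ _)
        have h4 := h3.trans_le (hqq _ _)
        simp only [hlam]
        rw [Real.logb_div (by positivity) (by positivity), Real.logb_mul h1.ne' h4.ne',
          Real.logb_mul h3.ne' h2.ne']
        ring
      · intro i _
        have h1 : 0 < p (xy.1 i, xy.2 i, G xy i) := hpos i
        have h2 := h1.trans_le (hpr _ _ _)
        have h3 := h1.trans_le (hpq _ _ _)
        have h4 := h3.trans_le (hqq _ _)
        simp only [hlam]
        positivity
  · intro xy h
    refine Finset.prod_pos fun i _ => ?_
    have h1 : 0 < p (xy.1 i, xy.2 i, G xy i) := pe_pos q hq hn G xy h i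
    have h2 := h1.trans_le (hpr _ _ _)
    have h3 := h1.trans_le (hpq _ _ _)
    have h4 := h3.trans_le (hqq _ _)
    simp only [hlam]
    positivity
  · have hstep : ∀ xy : (Fin n → 𝒳) × (Fin n → 𝒴),
        iid q n xy * ∏ i, lam (xy.1 i) (xy.2 i) (G xy i) ≤
        ∑ b : Fin m, ∏ i, (q (xy.1 i, xy.2 i) * lam (xy.1 i) (xy.2 i) (g1 (b, xy.2) i)) := by
      intro xy
      have := Finset.single_le_sum (f := fun b : Fin m =>
        ∏ i, (q (xy.1 i, xy.2 i) * lam (xy.1 i) (xy.2 i) (g1 (b, xy.2) i)))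
        (fun b _ => Finset.prod_nonneg fun i _ => mul_nonneg (hq.1 _) (lamnn _ _ _))
        (Finset.mem_univ (f xy))
      refine le_trans (le_of_eq ?_) this
      rw [Finset.prod_mul_distrib]; rfl
    have hcol : ∀ y c, ∑ x, q (x, y) * lam x y c ≤ qY y := by
      intro y c
      have h1 : ∀ x, q (x, y) * lam x y c ≤ qY y * (p (x, y, c) / r y c) := by
        intro x
        rcases (hq.1 (x, y)).eq_or_lt with h | h
        · rw [← h, zero_mul]; exact mul_nonneg (qYnn _) (div_nonneg (pnn _) (rnn _ _))
        · apply le_of_eq; simp only [hlam]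
          rw [mul_div_assoc', mul_div_mul_left _ _ h.ne']; ring
      refine (Finset.sum_le_sum fun x _ => h1 x).trans ?_
      rw [← Finset.mul_sum, ← Finset.sum_div]
      exact mul_le_of_le_one_right (qYnn _) (div_self_le_one (r y c))
    calc _ ≤ ∑ xy : (Fin n → 𝒳) × (Fin n → 𝒴), ∑ b : Fin m,
          ∏ i, (q (xy.1 i, xy.2 i) * lam (xy.1 i) (xy.2 i) (g1 (b, xy.2) i)) :=
          Finset.sum_le_sum fun xy _ => hstep xy
      _ = ∑ b : Fin m, ∑ y : Fin n → 𝒴, ∑ x : Fin n → 𝒳,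
          ∏ i, (q (x i, y i) * lam (x i) (y i) (g1 (b, y) i)) := by
          rw [Finset.sum_comm]
          refine Finset.sum_congr rfl fun b _ => ?_
          rw [Fintype.sum_prod_type, Finset.sum_comm]
      _ ≤ ∑ b : Fin m, ∑ y : Fin n → 𝒴, ∏ i, qY (y i) := by
          refine Finset.sum_le_sum fun b _ => Finset.sum_le_sum fun y _ => ?_
          rw [sum_prod_pi (fun i x => q (x, y i) * lam x (y i) (g1 (b, y) i))]
          exact Finset.prod_le_prod (fun i _ => Finset.sum_nonneg fun x _ =>
            mul_nonneg (hq.1 _) (lamnn _ _ _)) fun i _ => hcol _ _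
      _ = m := by
          have : ∑ y, qY y = 1 := by
            rw [← hq.2, Fintype.sum_prod_type, Finset.sum_comm]
          rw [sum_prod_pi (fun _ => qY)]; simp [this]

lemma converse_code [Nonempty Xh] (q : 𝒳 × 𝒴 → ℝ) (hq : IsPmf q) (δ1 : 𝒳 → Xh → ℝ)
    {n m : ℕ} (hn : 0 < n)
    (f : (Fin n → 𝒳) × (Fin n → 𝒴) → Fin m) (g1 : Fin m × (Fin n → 𝒴) → Fin n → Xh) :
    ∃ W : 𝒳 × 𝒴 → Xh → ℝ, IsCondPmf W ∧
    (∑ x, ∑ y, ∑ xh, q (x, y) * W (x, y) xh * δ1 x xh) ≤ Delta1 q δ1 f g1 ∧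
    condMI (fun t : 𝒳 × 𝒴 × Xh => q (t.1, t.2.1) * W (t.1, t.2.1) t.2.2) ≤ Real.logb 2 m / n := by
  set G : (Fin n → 𝒳) × (Fin n → 𝒴) → Fin n → Xh := fun xy => g1 (f xy, xy.2) with hG
  obtain ⟨c0⟩ := ‹Nonempty Xh›
  let W : 𝒳 × 𝒴 → Xh → ℝ := fun xy c =>
    if q xy = 0 then (if c = c0 then 1 else 0) else pe q G (xy.1, xy.2, c) / q xy
  have hqW : ∀ x y c, q (x, y) * W (x, y) c = pe q G (x, y, c) := by
    intro x y c
    by_cases h : q (x, y) = 0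
    · have h1 := pe_marg q hq hn G x y
      rw [h, Finset.sum_eq_zero_iff_of_nonneg (fun c _ => pe_nonneg q hq G _)] at h1
      rw [h, h1 c (Finset.mem_univ _), zero_mul]
    · simp only [W, if_neg h]; field_simp
  refine ⟨W, fun xy => ⟨fun c => ?_, ?_⟩, ?_, ?_⟩
  · simp only [W]; split_ifs <;> try norm_num
    exact div_nonneg (pe_nonneg q hq G _) (hq.1 _)
  · by_cases h : q xy = 0
    · simp [W, h]
    · simp only [W, if_neg h]
      rw [← Finset.sum_div, pe_marg q hq hn G]; exact div_self h
  · simp only [hqW]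
    have := sum_pe q G (fun t => δ1 t.1 t.2.2)
    simp only [Fintype.sum_prod_type (f := fun t : 𝒳 × 𝒴 × Xh => _),
      Fintype.sum_prod_type (f := fun t : 𝒴 × Xh => _)] at this
    exact this.le
  · have : (fun t : 𝒳 × 𝒴 × Xh => q (t.1, t.2.1) * W (t.1, t.2.1) t.2.2) = pe q G := by
      funext t; exact hqW _ _ _
    rw [this]
    exact pe_condMI q hq hn f g1

lemma qW_isPmf (q : 𝒳 × 𝒴 → ℝ) (hq : IsPmf q) (W : 𝒳 × 𝒴 → Xh → ℝ) (hW : IsCondPmf W) :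
    IsPmf (fun t : 𝒳 × 𝒴 × Xh => q (t.1, t.2.1) * W (t.1, t.2.1) t.2.2) := by
  refine ⟨fun t => mul_nonneg (hq.1 _) ((hW _).1 _), ?_⟩
  rw [← hq.2]
  simp only [Fintype.sum_prod_type, ← Finset.mul_sum, (hW _).2, mul_one]

/-- The cut-set bound for one receiver. -/
lemma converse [Nonempty Xh] (q : 𝒳 × 𝒴 → ℝ) (hq : IsPmf q) (δ1 : 𝒳 → Xh → ℝ) (d r : ℝ)
    (H : ∀ ε > (0 : ℝ), ∃ (n m : ℕ) (f : (Fin n → 𝒳) × (Fin n → 𝒴) → Fin m)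
      (g1 : Fin m × (Fin n → 𝒴) → Fin n → Xh),
      0 < n ∧ Real.logb 2 m / n ≤ r + ε ∧ Delta1 q δ1 f g1 ≤ d + ε) :
    condRD q δ1 d ≤ r := by
  obtain ⟨ε, hεdef⟩ : ∃ ε : ℕ → ℝ, ε = fun k : ℕ => 1 / ((k : ℝ) + 1) := ⟨_, rfl⟩
  have hε : ∀ k, 0 < ε k := fun k => by rw [hεdef]; positivity
  obtain ⟨dist, hdist⟩ : ∃ D : (𝒳 × 𝒴 → Xh → ℝ) → ℝ, ∀ W, D W =
    ∑ x, ∑ y, ∑ xh, q (x, y) * W (x, y) xh * δ1 x xh := ⟨_, fun _ => rfl⟩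
  obtain ⟨mi, hmi⟩ : ∃ D : (𝒳 × 𝒴 → Xh → ℝ) → ℝ, ∀ W, D W =
    condMI (fun t : 𝒳 × 𝒴 × Xh => q (t.1, t.2.1) * W (t.1, t.2.1) t.2.2) := ⟨_, fun _ => rfl⟩
  have hex : ∀ k : ℕ, ∃ W : 𝒳 × 𝒴 → Xh → ℝ, IsCondPmf W ∧ dist W ≤ d + ε k ∧ mi W ≤ r + ε k := by
    intro k
    obtain ⟨n, m, f, g1, hn, h1, h2⟩ := H (ε k) (hε k)
    obtain ⟨W, hW, h3, h4⟩ := converse_code q hq δ1 hn f g1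
    exact ⟨W, hW, by rw [hdist]; exact h3.trans h2, by rw [hmi]; exact h4.trans h1⟩
  choose W hW hd hm using hex
  have hcomp : IsCompact (Set.univ.pi fun _ : 𝒳 × 𝒴 => stdSimplex ℝ Xh) :=
    isCompact_univ_pi fun _ => isCompact_stdSimplex ℝ Xh
  obtain ⟨V, hV, φ, hφ, hlim⟩ := hcomp.tendsto_subseq (x := W) (fun k xy _ => hW k xy)
  have hcd : Continuous dist := by
    rw [funext hdist]; fun_prop
  have hcm : Continuous mi := by
    rw [funext hmi]
    exact continuous_condMI.comp (f := fun W : 𝒳 × 𝒴 → Xh → ℝ =>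
      fun t : 𝒳 × 𝒴 × Xh => q (t.1, t.2.1) * W (t.1, t.2.1) t.2.2) (by fun_prop)
  have hε0 : Filter.Tendsto (fun k => ε (φ k)) Filter.atTop (nhds 0) := by
    rw [hεdef]
    exact tendsto_one_div_add_atTop_nhds_zero_nat.comp hφ.tendsto_atTop
  have l1 : dist V ≤ d := by
    have := le_of_tendsto_of_tendsto' ((hcd.tendsto V).comp hlim)
      (hε0.const_add d) (fun k => hd (φ k))
    simpa using this
  have l2 : mi V ≤ r := by
    have := le_of_tendsto_of_tendsto' ((hcm.tendsto V).comp hlim)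
      (hε0.const_add r) (fun k => hm (φ k))
    simpa using this
  refine le_trans (csInf_le ⟨0, ?_⟩ ⟨V, fun xy => hV xy (Set.mem_univ _), by rw [← hdist]; exact l1, rfl⟩)
    (by rw [← hmi]; exact l2)
  rintro _ ⟨U, hU, _, rfl⟩
  exact condMI_nonneg _ (qW_isPmf q hq U hU)

lemma swap_isPmf (q : 𝒳 × 𝒴 → ℝ) (hq : IsPmf q) : IsPmf (swap q) :=
  ⟨fun t => hq.1 _, by
    rw [← hq.2]; exact Fintype.sum_equiv (Equiv.prodComm 𝒴 𝒳) _ _ fun t => rfl⟩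

lemma delta2_swap (q : 𝒳 × 𝒴 → ℝ) (δ2 : 𝒴 → Yh → ℝ) {n m : ℕ}
    (f : (Fin n → 𝒳) × (Fin n → 𝒴) → Fin m) (g2 : Fin m × (Fin n → 𝒳) → Fin n → Yh) :
    Delta1 (swap q) δ2 (fun yx => f (yx.2, yx.1)) g2 = Delta2 q δ2 f g2 := by
  unfold Delta1 Delta2
  exact Fintype.sum_equiv (Equiv.prodComm (Fin n → 𝒴) (Fin n → 𝒳)) _ _ fun t => rfl

end conv

end TWR

namespace TWR

section oneshot
variable {X Y A : Type} [Fintype X] [Fintype Y] [Fintype A]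

lemma bin_collision (N m : ℕ) (hm : 0 < m) (j k : Fin N) :
    ∑ B : Fin N → Fin m, (∏ _i : Fin N, (1 / (m : ℝ))) * ind (j ≠ k ∧ B j = B k) ≤ 1 / m := by
  have hm' : (m : ℝ) ≠ 0 := by exact_mod_cast hm.ne'
  by_cases hjk : j = k
  · simp [ind, hjk]
  · have h1 : ∀ B : Fin N → Fin m, ind (j ≠ k ∧ B j = B k) =
        ∑ b : Fin m, ind (B j = b) * ind (B k = b) := by
      intro B
      by_cases h : B j = B k
      · rw [ind_true ⟨hjk, h⟩]; simp [ind, h]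
      · rw [ind_false (by tauto)]; simp [ind, h]
    simp only [h1, Finset.mul_sum]
    rw [Finset.sum_comm]
    have h2 : ∀ b : Fin m, ∑ B : Fin N → Fin m, (∏ _i : Fin N, (1 / (m : ℝ))) *
        (ind (B j = b) * ind (B k = b)) = 1 / m * (1 / m) := by
      intro b
      have := sum_pi_pair (fun _ : Fin m => 1 / (m : ℝ)) (by simp [hm']) (fun a => ind (a = b))
        (fun a => ind (a = b)) j k hjk
      rw [this]
      simp [ind]
    rw [Finset.sum_congr rfl fun b _ => h2 b]
    simp [hm']

lemma binning (q : X × Y → ℝ) (hq : IsPmf q) (D : X → A → Y → Prop) (T : A → Y → Prop)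
    (N m : ℕ) (hN : 0 < N) (hm : 0 < m) (c : Fin N → A) (J : X → Fin N) :
    ∃ (f : X → Fin m) (g : Fin m → Y → A),
      ∑ xy : X × Y, q xy * ind (D xy.1 (g (f xy.1) xy.2) xy.2) ≤
        ∑ xy : X × Y, q xy * ind (D xy.1 (c (J xy.1)) xy.2 ∨ ¬ T (c (J xy.1)) xy.2) +
        (1 / (m : ℝ)) * ∑ j, ∑ xy : X × Y, q xy * ind (T (c j) xy.2) := by
  have hm' : (m : ℝ) ≠ 0 := by exact_mod_cast hm.ne'
  let g : (Fin N → Fin m) → Fin m → Y → A := fun B b y =>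
    if h : ∃ j, B j = b ∧ T (c j) y then c h.choose else c ⟨0, hN⟩
  have hpt : ∀ (B : Fin N → Fin m) (x : X) (y : Y), ind (D x (g B (B (J x)) y) y) ≤
      ind (D x (c (J x)) y ∨ ¬ T (c (J x)) y) +
      ∑ j, ind (j ≠ J x ∧ B j = B (J x)) * ind (T (c j) y) := by
    intro B x y
    have hs : 0 ≤ ∑ j, ind (j ≠ J x ∧ B j = B (J x)) * ind (T (c j) y) :=
      Finset.sum_nonneg fun j _ => mul_nonneg (ind_nonneg _) (ind_nonneg _)
    by_cases hT : T (c (J x)) y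
    · have hex : ∃ j, B j = B (J x) ∧ T (c j) y := ⟨J x, rfl, hT⟩
      have hg : g B (B (J x)) y = c hex.choose := dif_pos hex
      by_cases hJ : hex.choose = J x
      · rw [hg, hJ]
        linarith [ind_mono (P := D x (c (J x)) y) (Q := D x (c (J x)) y ∨ ¬ T (c (J x)) y) Or.inl]
      · have h1 := Finset.single_le_sum
          (f := fun j => ind (j ≠ J x ∧ B j = B (J x)) * ind (T (c j) y))
          (fun j _ => mul_nonneg (ind_nonneg _) (ind_nonneg _)) (Finset.mem_univ hex.choose)
        rw [ind_true ⟨hJ, hex.choose_spec.1⟩, ind_true hex.choose_spec.2] at h1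
        linarith [ind_le_one (D x (g B (B (J x)) y) y),
          ind_nonneg (D x (c (J x)) y ∨ ¬ T (c (J x)) y)]
    · rw [ind_true (P := D x (c (J x)) y ∨ ¬ T (c (J x)) y) (Or.inr hT)]
      linarith [ind_le_one (D x (g B (B (J x)) y) y)]
  have hu : IsPmf (fun _ : Fin m => 1 / (m : ℝ)) := ⟨fun _ => by positivity, by simp [hm']⟩
  refine Exists.elim (exists_le_avg (fun _ : Fin N → Fin m => ∏ _i : Fin N, (1 / (m : ℝ)))
    (fun B => ∑ xy : X × Y, q xy * ind (D xy.1 (g B (B (J xy.1)) xy.2) xy.2))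
    (isPmf_pi (ι := Fin N) _ hu)
    (∑ xy : X × Y, q xy * ind (D xy.1 (c (J xy.1)) xy.2 ∨ ¬ T (c (J xy.1)) xy.2) +
        (1 / (m : ℝ)) * ∑ j, ∑ xy : X × Y, q xy * ind (T (c j) xy.2)) ?avg) (fun B hB => ?main)
  case main => exact ⟨fun x => B (J x), g B, hB⟩
  case avg =>
    have hw := isPmf_pi (ι := Fin N) _ hu
    set w : ℝ := ∏ _i : Fin N, (1 / (m : ℝ)) with hwdef
    have hwnn : 0 ≤ w := hw.1 (fun _ => ⟨0, hm⟩)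
    have hwsum : ∑ _B : Fin N → Fin m, w = 1 := hw.2
    calc _ ≤ ∑ B : Fin N → Fin m, w * ∑ xy : X × Y, q xy *
            (ind (D xy.1 (c (J xy.1)) xy.2 ∨ ¬ T (c (J xy.1)) xy.2) +
              ∑ j, ind (j ≠ J xy.1 ∧ B j = B (J xy.1)) * ind (T (c j) xy.2)) := by
          refine Finset.sum_le_sum fun B _ => mul_le_mul_of_nonneg_left ?_ hwnn
          exact Finset.sum_le_sum fun xy _ => mul_le_mul_of_nonneg_left (hpt B _ _) (hq.1 _)
      _ = (∑ _B : Fin N → Fin m, w) * (∑ xy : X × Y, q xy *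
            ind (D xy.1 (c (J xy.1)) xy.2 ∨ ¬ T (c (J xy.1)) xy.2)) +
            ∑ j, ∑ xy : X × Y, (q xy * ind (T (c j) xy.2)) *
              ∑ B : Fin N → Fin m, w * ind (j ≠ J xy.1 ∧ B j = B (J xy.1)) := by
          simp only [mul_add, Finset.sum_add_distrib, Finset.mul_sum, Finset.sum_mul]
          congr 1
          · rw [Finset.sum_comm]
          · rw [Finset.sum_comm, Finset.sum_comm (γ := Fin N)]
            refine Finset.sum_congr rfl fun xy _ => ?_
            rw [Finset.sum_comm]
            exact Finset.sum_congr rfl fun j _ => Finset.sum_congr rfl fun B _ => by ring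
      _ ≤ (∑ _B : Fin N → Fin m, w) * (∑ xy : X × Y, q xy *
            ind (D xy.1 (c (J xy.1)) xy.2 ∨ ¬ T (c (J xy.1)) xy.2)) +
            ∑ j, ∑ xy : X × Y, (q xy * ind (T (c j) xy.2)) * (1 / m) := by
          gcongr with j _ xy _
          · exact mul_nonneg (hq.1 _) (ind_nonneg _)
          · exact bin_collision N m hm j (J xy.1)
      _ = _ := by
          rw [hwsum, one_mul]
          congr 1
          simp only [Finset.mul_sum]
          exact Finset.sum_congr rfl fun j _ => Finset.sum_congr rfl fun xy _ => by ring

lemma exp_bound (u t : ℝ) (hu0 : 0 ≤ u) (hu1 : u ≤ 1) :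
    Real.exp (-(u * t)) ≤ 1 - u + Real.exp (-t) := by
  have h := convexOn_exp.2 (Set.mem_univ (0 : ℝ)) (Set.mem_univ (-t)) (sub_nonneg.2 hu1) hu0
    (by ring)
  simp only [smul_eq_mul, mul_zero, zero_add, Real.exp_zero, mul_one] at h
  have h2 : u * Real.exp (-t) ≤ Real.exp (-t) := mul_le_of_le_one_left (Real.exp_pos _).le hu1
  rw [show -(u * t) = u * -t by ring]
  linarith

lemma covering (W PA : A → ℝ) (hW : IsPmf W) (hPA : IsPmf PA) (G : A → Prop) (K : ℝ) (hK : 0 < K)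
    (hG : ∀ a, G a → W a ≤ K * PA a) (N : ℕ) :
    ∑ c : Fin N → A, (∏ j, PA (c j)) * ind (∀ j, ¬ G (c j)) ≤
      ∑ a, W a * ind (¬ G a) + Real.exp (-(N / K)) := by
  have h1 : ∀ c : Fin N → A, (∏ j, PA (c j)) * ind (∀ j, ¬ G (c j)) =
      ∏ j, (PA (c j) * ind (¬ G (c j))) := by
    intro c
    rw [Finset.prod_mul_distrib]
    congr 1
    by_cases h : ∀ j, ¬ G (c j)
    · rw [ind_true h, Finset.prod_eq_one fun j _ => ind_true (h j)]
    · rw [ind_false h]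
      push Not at h
      obtain ⟨j, hj⟩ := h
      rw [Finset.prod_eq_zero (Finset.mem_univ j) (ind_false (not_not.2 hj))]
  simp only [h1]
  rw [sum_prod_pi (fun _ a => PA a * ind (¬ G a))]
  have hc : ∀ (P : A → ℝ), IsPmf P → ∑ a, P a * ind (¬ G a) = 1 - ∑ a, P a * ind (G a) := by
    intro P hP
    rw [← hP.2, ← Finset.sum_sub_distrib]
    refine Finset.sum_congr rfl fun a _ => ?_
    by_cases h : G a
    · rw [ind_true h, ind_false (not_not.2 h)]; ring
    · rw [ind_false h, ind_true h]; ring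
  set u := ∑ a, W a * ind (G a) with hu
  have hu0 : 0 ≤ u := Finset.sum_nonneg fun a _ => mul_nonneg (hW.1 a) (ind_nonneg _)
  have hu1 : u ≤ 1 := by
    have h0 : 0 ≤ ∑ a, W a * ind (¬ G a) :=
      Finset.sum_nonneg fun a _ => mul_nonneg (hW.1 a) (ind_nonneg _)
    rw [hc W hW] at h0; linarith
  have huv : u / K ≤ ∑ a, PA a * ind (G a) := by
    rw [div_le_iff₀ hK, hu, Finset.sum_mul]
    refine Finset.sum_le_sum fun a _ => ?_
    by_cases h : G a
    · rw [ind_true h]; linarith [hG a h]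
    · rw [ind_false h]; simp
  rw [hc W hW, hc PA hPA]
  rw [Finset.prod_const, Finset.card_univ, Fintype.card_fin]
  have h0 : 0 ≤ 1 - ∑ a, PA a * ind (G a) := by
    rw [← hc PA hPA]; exact Finset.sum_nonneg fun a _ => mul_nonneg (hPA.1 a) (ind_nonneg _)
  have h2 : 1 - ∑ a, PA a * ind (G a) ≤ Real.exp (-(u / K)) := by
    linarith [Real.add_one_le_exp (-(u / K))]
  calc _ ≤ Real.exp (-(u / K)) ^ N := pow_le_pow_left₀ h0 h2 N
    _ = Real.exp (-(u * (N / K))) := by rw [← Real.exp_nat_mul]; congr 1; ring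
    _ ≤ _ := exp_bound u _ hu0 hu1

lemma oneshot (q : X × Y → ℝ) (hq : IsPmf q) (W : X → A → ℝ) (hW : IsCondPmf W)
    (PA : A → ℝ) (hPA : IsPmf PA) (D : X → A → Y → Prop) (T : A → Y → Prop)
    (K s : ℝ) (hK : 0 < K) (hs : 0 < s) (N m : ℕ) (hN : 0 < N) (hm : 0 < m) :
    ∃ (f : X → Fin m) (g : Fin m → Y → A),
      ∑ xy : X × Y, q xy * ind (D xy.1 (g (f xy.1) xy.2) xy.2) ≤
        s + ((∑ xy : X × Y, ∑ a, q xy * W xy.1 a * ind (K * PA a < W xy.1 a)) +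
          (∑ xy : X × Y, ∑ a, q xy * W xy.1 a * ind (D xy.1 a xy.2 ∨ ¬ T a xy.2)) / s +
          Real.exp (-(N / K))) +
        N / m * ∑ a, ∑ xy : X × Y, PA a * q xy * ind (T a xy.2) := by
  set qX : X → ℝ := fun x => ∑ y, q (x, y) with hqX
  have qXnn : ∀ x, 0 ≤ qX x := fun x => Finset.sum_nonneg fun y _ => hq.1 _
  have qXsum : ∑ x, qX x = 1 := by rw [← hq.2, Fintype.sum_prod_type]
  set Φ : X → A → ℝ := fun x a => ∑ y, q (x, y) * ind (D x a y ∨ ¬ T a y) with hΦ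
  have Φnn : ∀ x a, 0 ≤ Φ x a := fun x a =>
    Finset.sum_nonneg fun y _ => mul_nonneg (hq.1 _) (ind_nonneg _)
  have Φle : ∀ x a, Φ x a ≤ qX x := fun x a =>
    Finset.sum_le_sum fun y _ => mul_le_of_le_one_right (hq.1 _) (ind_le_one _)
  let G : X → A → Prop := fun x a => W x a ≤ K * PA a ∧ Φ x a ≤ s * qX x
  let J : (Fin N → A) → X → Fin N := fun c x =>
    if h : ∃ j, G x (c j) then h.choose else ⟨0, hN⟩
  have hJ : ∀ (c : Fin N → A) (x : X), Φ x (c (J c x)) ≤ s * qX x + qX x * ind (∀ j, ¬ G x (c j)) := by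
    intro c x
    by_cases h : ∃ j, G x (c j)
    · have : J c x = h.choose := dif_pos h
      rw [this]
      have h1 := h.choose_spec.2
      have h2 := mul_nonneg (qXnn x) (ind_nonneg (∀ j, ¬ G x (c j)))
      linarith
    · push Not at h
      rw [ind_true h]
      have := mul_nonneg hs.le (qXnn x)
      linarith [Φle x (c (J c x))]
  have hw := isPmf_pi (ι := Fin N) PA hPA
  refine Exists.elim (exists_le_avg (fun c : Fin N → A => ∏ j, PA (c j))
    (fun c => (∑ x, Φ x (c (J c x))) + (1 / (m : ℝ)) * ∑ j, ∑ xy : X × Y, q xy * ind (T (c j) xy.2))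
    hw (s + ((∑ xy : X × Y, ∑ a, q xy * W xy.1 a * ind (K * PA a < W xy.1 a)) +
          (∑ xy : X × Y, ∑ a, q xy * W xy.1 a * ind (D xy.1 a xy.2 ∨ ¬ T a xy.2)) / s +
          Real.exp (-(N / K))) +
        N / m * ∑ a, ∑ xy : X × Y, PA a * q xy * ind (T a xy.2)) ?avg) (fun c hc => ?main)
  case main =>
    obtain ⟨f, g, hfg⟩ := binning q hq D T N m hN hm c (J c)
    refine ⟨f, g, hfg.trans (le_trans (le_of_eq ?_) hc)⟩
    congr 1
    rw [Fintype.sum_prod_type]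
  case avg =>
    simp only [mul_add, Finset.sum_add_distrib]
    have wnn : ∀ c : Fin N → A, 0 ≤ ∏ j, PA (c j) := hw.1
    refine add_le_add ?_ ?_
    · calc _ ≤ ∑ c : Fin N → A, (∏ j, PA (c j)) *
              ∑ x, (s * qX x + qX x * ind (∀ j, ¬ G x (c j))) :=
            Finset.sum_le_sum fun c _ => mul_le_mul_of_nonneg_left
              (Finset.sum_le_sum fun x _ => hJ c x) (wnn c)
        _ = (∑ c : Fin N → A, (∏ j, PA (c j))) * s +
            ∑ x, qX x * ∑ c : Fin N → A, (∏ j, PA (c j)) * ind (∀ j, ¬ G x (c j)) := by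
            simp only [Finset.sum_add_distrib, mul_add, ← Finset.mul_sum, qXsum, mul_one,
              ← Finset.sum_mul]
            congr 1
            simp only [Finset.mul_sum]
            rw [Finset.sum_comm]
            exact Finset.sum_congr rfl fun x _ => Finset.sum_congr rfl fun c _ => by ring
        _ ≤ (∑ c : Fin N → A, (∏ j, PA (c j))) * s +
            ∑ x, qX x * (∑ a, W x a * ind (¬ G x a) + Real.exp (-(N / K))) := by
            gcongr with x _
            · exact qXnn x
            · exact covering (W x) PA (hW x) hPA (G x) K hK (fun a h => h.1) N
        _ = s + (∑ x, ∑ a, qX x * (W x a * ind (¬ G x a)) + Real.exp (-(N / K))) := by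
            rw [hw.2, one_mul]
            simp only [mul_add, Finset.sum_add_distrib, ← Finset.sum_mul, qXsum, one_mul,
              Finset.mul_sum]
        _ ≤ s + (∑ x, ∑ a, (qX x * (W x a * ind (K * PA a < W x a)) + W x a * Φ x a / s)
              + Real.exp (-(N / K))) := by
            gcongr with x _ a _
            have hWn := (hW x).1 a
            have hΦn := Φnn x a
            by_cases h1 : K * PA a < W x a
            · rw [ind_true h1]
              have : qX x * (W x a * ind (¬ G x a)) ≤ qX x * (W x a * 1) :=
                mul_le_mul_of_nonneg_left (mul_le_mul_of_nonneg_left (ind_le_one _) hWn) (qXnn x)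
              have : 0 ≤ W x a * Φ x a / s := by positivity
              linarith
            · rw [ind_false h1]
              by_cases h2 : Φ x a ≤ s * qX x
              · rw [ind_false (not_not.2 ⟨not_lt.1 h1, h2⟩)]
                have : 0 ≤ W x a * Φ x a / s := by positivity
                simpa using this
              · push Not at h2
                rw [ind_true (fun h => absurd h.2 (not_le.2 h2))]
                have : qX x * W x a ≤ W x a * Φ x a / s := by
                  rw [le_div_iff₀ hs]
                  calc qX x * W x a * s = W x a * (s * qX x) := by ring
                    _ ≤ _ := mul_le_mul_of_nonneg_left h2.le hWn
                simpa using this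
        _ = _ := by
            congr 2
            simp only [Finset.sum_add_distrib]
            congr 1
            · rw [Fintype.sum_prod_type]
              refine Finset.sum_congr rfl fun x _ => ?_
              rw [Finset.sum_comm]
              refine Finset.sum_congr rfl fun a _ => ?_
              simp only [hqX, Finset.sum_mul]
              exact Finset.sum_congr rfl fun y _ => by ring
            · rw [Fintype.sum_prod_type, Finset.sum_div]
              refine Finset.sum_congr rfl fun x _ => ?_
              rw [Finset.sum_comm, Finset.sum_div]
              refine Finset.sum_congr rfl fun a _ => ?_
              simp only [hΦ, Finset.mul_sum]
              congr 1
              exact Finset.sum_congr rfl fun y _ => by ring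
    · apply le_of_eq
      have e : ∀ j : Fin N, ∑ c : Fin N → A, (∏ j, PA (c j)) *
          (∑ xy : X × Y, q xy * ind (T (c j) xy.2)) =
          ∑ a, ∑ xy : X × Y, PA a * q xy * ind (T a xy.2) := by
        intro j
        rw [sum_pi_coord PA hPA.2 (fun a => ∑ xy : X × Y, q xy * ind (T a xy.2)) j]
        simp only [Finset.mul_sum, mul_assoc]
      calc _ = 1 / (m : ℝ) * ∑ j : Fin N, ∑ c : Fin N → A, (∏ j, PA (c j)) *
          (∑ xy : X × Y, q xy * ind (T (c j) xy.2)) := by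
            rw [Finset.sum_comm, Finset.mul_sum]
            refine Finset.sum_congr rfl fun c _ => ?_
            rw [← Finset.mul_sum]; ring
        _ = _ := by
            rw [Finset.sum_congr rfl fun j _ => e j]
            simp only [Finset.sum_const, Finset.card_univ, Fintype.card_fin, nsmul_eq_mul]
            ring

end oneshot

end TWR

namespace TWR

lemma log_event {n : ℕ} (u v : Fin n → ℝ) (hu : ∀ i, 0 < u i) (hv : ∀ i, 0 < v i) (c : ℝ)
    (h : (2 : ℝ) ^ ((n : ℝ) * c) * ∏ i, v i < ∏ i, u i) :
    (n : ℝ) * c ≤ ∑ i, (Real.logb 2 (u i) - Real.logb 2 (v i)) := by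
  have hvp : 0 < ∏ i, v i := Finset.prod_pos fun i _ => hv i
  have h1 := Real.logb_le_logb_of_le (b := 2) (by norm_num) (by positivity) h.le
  rw [Real.logb_mul (by positivity) hvp.ne', Real.logb_rpow (by norm_num) (by norm_num),
    Real.logb_prod _ _ fun i _ => (hv i).ne', Real.logb_prod _ _ fun i _ => (hu i).ne'] at h1
  rw [Finset.sum_sub_distrib]
  linarith

section asym
variable {𝒳 𝒴 Xh A : Type} [Fintype 𝒳] [Fintype 𝒴] [Fintype Xh] [Fintype A]

lemma sum_iid3 (q : 𝒳 × 𝒴 → ℝ) (W : 𝒳 → A → ℝ) (n : ℕ)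
    (F : (Fin n → 𝒳) → (Fin n → 𝒴) → (Fin n → A) → ℝ) :
    ∑ xy : (Fin n → 𝒳) × (Fin n → 𝒴), ∑ a : Fin n → A,
      iid q n xy * (∏ i, W (xy.1 i) (a i)) * F xy.1 xy.2 a =
    ∑ z : Fin n → (𝒳 × 𝒴) × A, (∏ i, (q (z i).1 * W (z i).1.1 (z i).2)) *
      F (fun i => (z i).1.1) (fun i => (z i).1.2) (fun i => (z i).2) := by
  simp only [mul_assoc, ← Finset.mul_sum]
  rw [sum_iid q n (fun xy => ∑ a : Fin n → A, (∏ i, W (xy.1 i) (a i)) * F xy.1 xy.2 a)]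
  have h := sum_iid (fun z : (𝒳 × 𝒴) × A => q z.1 * W z.1.1 z.2) n
    (fun za => F (fun i => (za.1 i).1) (fun i => (za.1 i).2) za.2)
  simp only at h
  rw [← h, Fintype.sum_prod_type]
  refine Finset.sum_congr rfl fun z _ => ?_
  rw [Finset.mul_sum]
  refine Finset.sum_congr rfl fun a _ => ?_
  simp only [iid, Finset.prod_mul_distrib]
  ring

/-- Joint law of `((X,Y),A)`. -/
def pz (q : 𝒳 × 𝒴 → ℝ) (W : 𝒳 → A → ℝ) : (𝒳 × 𝒴) × A → ℝ := fun z => q z.1 * W z.1.1 z.2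
def pA (q : 𝒳 × 𝒴 → ℝ) (W : 𝒳 → A → ℝ) : A → ℝ := fun a => ∑ xy, q xy * W xy.1 a
def pAY (q : 𝒳 × 𝒴 → ℝ) (W : 𝒳 → A → ℝ) : A × 𝒴 → ℝ := fun t => ∑ x, q (x, t.2) * W x t.1
def i1 (q : 𝒳 × 𝒴 → ℝ) (W : 𝒳 → A → ℝ) : (𝒳 × 𝒴) × A → ℝ := fun z =>
  Real.logb 2 (W z.1.1 z.2) - Real.logb 2 (pA q W z.2)
def i2 (q : 𝒳 × 𝒴 → ℝ) (W : 𝒳 → A → ℝ) : (𝒳 × 𝒴) × A → ℝ := fun z =>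
  Real.logb 2 (pA q W z.2 * margY q z.1.2) - Real.logb 2 (pAY q W (z.2, z.1.2))

lemma pz_isPmf (q : 𝒳 × 𝒴 → ℝ) (hq : IsPmf q) (W : 𝒳 → A → ℝ) (hW : IsCondPmf W) :
    IsPmf (pz q W) := by
  refine ⟨fun t => mul_nonneg (hq.1 _) ((hW _).1 _), ?_⟩
  rw [← hq.2]
  unfold pz
  simp only [Fintype.sum_prod_type, ← Finset.mul_sum, (hW _).2, mul_one]

lemma pA_isPmf (q : 𝒳 × 𝒴 → ℝ) (hq : IsPmf q) (W : 𝒳 → A → ℝ) (hW : IsCondPmf W) :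
    IsPmf (pA q W) := by
  refine ⟨fun t => Finset.sum_nonneg fun _ _ => mul_nonneg (hq.1 _) ((hW _).1 _), ?_⟩
  rw [← (pz_isPmf q hq W hW).2, Fintype.sum_prod_type (f := pz q W), Finset.sum_comm]
  rfl

lemma pAY_isPmf (q : 𝒳 × 𝒴 → ℝ) (hq : IsPmf q) (W : 𝒳 → A → ℝ) (hW : IsCondPmf W) :
    IsPmf (pAY q W) := by
  refine ⟨fun t => Finset.sum_nonneg fun _ _ => mul_nonneg (hq.1 _) ((hW _).1 _), ?_⟩
  rw [← (pA_isPmf q hq W hW).2]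
  unfold pAY pA
  simp only [Fintype.sum_prod_type]
  refine Finset.sum_congr rfl fun a _ => ?_
  rw [Finset.sum_comm]

lemma supp_pos (q : 𝒳 × 𝒴 → ℝ) (hq : IsPmf q) (W : 𝒳 → A → ℝ) (hW : IsCondPmf W)
    (z : (𝒳 × 𝒴) × A) (hz : 0 < pz q W z) : 0 < q z.1 ∧ 0 < W z.1.1 z.2 ∧ 0 < pA q W z.2 ∧
      0 < margY q z.1.2 ∧ 0 < pAY q W (z.2, z.1.2) := by
  have h0 := hz
  unfold pz at hz
  have hqn := hq.1 z.1
  have hWn := (hW z.1.1).1 z.2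
  have hq0 : 0 < q z.1 := lt_of_le_of_ne hqn fun h => by rw [← h] at hz; simp at hz
  have hW0 : 0 < W z.1.1 z.2 := lt_of_le_of_ne hWn fun h => by rw [← h] at hz; simp at hz
  refine ⟨hq0, hW0, ?_, ?_, ?_⟩
  · exact hz.trans_le (Finset.single_le_sum (f := fun xy : 𝒳 × 𝒴 => q xy * W xy.1 z.2)
      (fun _ _ => mul_nonneg (hq.1 _) ((hW _).1 _)) (Finset.mem_univ z.1))
  · exact hq0.trans_le (Finset.single_le_sum (f := fun x => q (x, z.1.2))
      (fun _ _ => hq.1 _) (Finset.mem_univ z.1.1))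
  · exact hz.trans_le (Finset.single_le_sum (f := fun x => q (x, z.1.2) * W x z.2)
      (fun _ _ => mul_nonneg (hq.1 _) ((hW _).1 _)) (Finset.mem_univ z.1.1))

lemma i1_nonneg (q : 𝒳 × 𝒴 → ℝ) (hq : IsPmf q) (W : 𝒳 → A → ℝ) (hW : IsCondPmf W) :
    0 ≤ ∑ z, pz q W z * i1 q W z := by
  have hp := pz_isPmf q hq W hW
  have hA := pA_isPmf q hq W hW
  have key := sum_logb_le (pz q W) (fun z => pA q W z.2 / W z.1.1 z.2) hp (fun z hz => by
    obtain ⟨_, h2, h3, _⟩ := supp_pos q hq W hW z hz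
    positivity) 1 ?_
  · rw [Real.logb_one] at key
    have : ∑ z, pz q W z * i1 q W z =
        - ∑ z, pz q W z * Real.logb 2 (pA q W z.2 / W z.1.1 z.2) := by
      rw [← Finset.sum_neg_distrib]
      refine Finset.sum_congr rfl fun z _ => ?_
      rcases (hp.1 z).eq_or_lt with h | h
      · rw [← h]; simp
      · obtain ⟨_, h2, h3, _⟩ := supp_pos q hq W hW z h
        rw [Real.logb_div h3.ne' h2.ne']
        unfold i1; ring
    rw [this]; linarith
  · calc _ ≤ ∑ z : (𝒳 × 𝒴) × A, q z.1 * pA q W z.2 := by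
          refine Finset.sum_le_sum fun z _ => ?_
          rcases (hp.1 z).eq_or_lt with h | h
          · rw [← h, zero_mul]; exact mul_nonneg (hq.1 _) (hA.1 _)
          · obtain ⟨_, h2, h3, _⟩ := supp_pos q hq W hW z h
            unfold pz
            apply le_of_eq; field_simp
      _ = 1 := by
          simp only [Fintype.sum_prod_type (f := fun z : (𝒳 × 𝒴) × A => _), ← Finset.mul_sum,
            hA.2, mul_one, hq.2]

lemma packing (q : 𝒳 × 𝒴 → ℝ) (hq : IsPmf q) (W : 𝒳 → A → ℝ) (hW : IsCondPmf W) (n : ℕ)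
    (τ : ℝ) (hτ : 0 < τ) :
    ∑ a : Fin n → A, ∑ xy : (Fin n → 𝒳) × (Fin n → 𝒴), (∏ i, pA q W (a i)) * iid q n xy *
      ind (τ * ∏ i, (pA q W (a i) * margY q (xy.2 i)) ≤ ∏ i, pAY q W (a i, xy.2 i)) ≤ 1 / τ := by
  have hA := pA_isPmf q hq W hW
  have hAY := pAY_isPmf q hq W hW
  have h1 := (iid_isPmf (pAY q W) hAY n).2
  rw [Fintype.sum_prod_type] at h1
  rw [show 1 / τ = ∑ a : Fin n → A, ∑ y : Fin n → 𝒴, iid (pAY q W) n (a, y) * (1 / τ) by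
    simp only [← Finset.sum_mul]; rw [h1, one_mul]]
  refine Finset.sum_le_sum fun a _ => ?_
  rw [Fintype.sum_prod_type, Finset.sum_comm]
  refine Finset.sum_le_sum fun y _ => ?_
  simp only [← Finset.sum_mul, ← Finset.mul_sum]
  have h2 : ∑ x : Fin n → 𝒳, iid q n (x, y) = ∏ i, margY q (y i) := by
    unfold iid margY
    exact sum_prod_pi (fun i x => q (x, y i))
  rw [h2, ← Finset.prod_mul_distrib]
  by_cases h : τ * ∏ i, (pA q W (a i) * margY q (y i)) ≤ ∏ i, pAY q W (a i, y i)
  · rw [ind_true h, mul_one, mul_one_div, le_div_iff₀ hτ, mul_comm]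
    exact h
  · rw [ind_false h, mul_zero]
    exact mul_nonneg ((iid_isPmf _ hAY n).1 _) (by positivity)

end asym

end TWR

namespace TWR

section asym
variable {𝒳 𝒴 Xh A : Type} [Fintype 𝒳] [Fintype 𝒴] [Fintype Xh] [Fintype A]

lemma wz_code (q : 𝒳 × 𝒴 → ℝ) (hq : IsPmf q) (W : 𝒳 → A → ℝ) (hW : IsCondPmf W)
    (δ : 𝒳 → Xh → ℝ) (dmax : ℝ) (hdm : 0 ≤ dmax) (hδ : ∀ x c, 0 ≤ δ x c ∧ δ x c ≤ dmax)
    (π : A × 𝒴 → Xh) (d : ℝ) (hd : ∑ z, pz q W z * δ z.1.1 (π (z.2, z.1.2)) ≤ d)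
    (ε : ℝ) (hε : 0 < ε) : ∃ n0 : ℕ, ∀ n ≥ n0, ∀ m : ℕ,
      (2 : ℝ) ^ ((n : ℝ) * ((∑ z, pz q W z * i1 q W z) + (∑ z, pz q W z * i2 q W z) + ε)) ≤ m →
      ∃ (f : (Fin n → 𝒳) → Fin m) (g : Fin m → (Fin n → 𝒴) → Fin n → Xh),
        ∑ xy, iid q n xy * ((n : ℝ)⁻¹ * ∑ i, δ (xy.1 i) (g (f xy.1) xy.2 i)) ≤ d + ε := by
  have hp := pz_isPmf q hq W hW
  have hI1 := i1_nonneg q hq W hW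
  set I1 := ∑ z, pz q W z * i1 q W z with hI1def
  set I2 := ∑ z, pz q W z * i2 q W z with hI2def
  obtain ⟨γ, hγdef⟩ : ∃ γ, γ = ε / 4 := ⟨_, rfl⟩
  have hγ : 0 < γ := by rw [hγdef]; positivity
  obtain ⟨e, hedef⟩ : ∃ e, e = ε / (2 * (dmax + 1)) := ⟨_, rfl⟩
  have he : 0 < e := by rw [hedef]; positivity
  obtain ⟨s, hsdef⟩ : ∃ s, s = e / 5 := ⟨_, rfl⟩
  have hs : 0 < s := by rw [hsdef]; positivity
  obtain ⟨n1, h1⟩ := wlln (pz q W) hp (i1 q W) γ hγ (e / 5) (by positivity)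
  obtain ⟨n2, h2⟩ := wlln (pz q W) hp (i2 q W) γ hγ (s * (e / 10)) (by positivity)
  obtain ⟨n3, h3⟩ := wlln (pz q W) hp (fun z => δ z.1.1 (π (z.2, z.1.2))) γ hγ (s * (e / 10))
    (by positivity)
  obtain ⟨n4, h4⟩ : ∃ n4 : ℕ, ∀ n ≥ n4, 2 * (2 : ℝ) ^ (-((n : ℝ) * γ)) ≤ e / 5 := by
    have hb1 : (2 : ℝ) ^ (-γ) < 1 := Real.rpow_lt_one_of_one_lt_of_neg (by norm_num) (by linarith)
    have ht := (tendsto_pow_atTop_nhds_zero_of_lt_one (by positivity) hb1).const_mul 2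
    rw [mul_zero] at ht
    have := ht.eventually (ge_mem_nhds (show (0 : ℝ) < e / 5 by positivity))
    rw [Filter.eventually_atTop] at this
    obtain ⟨n4, h⟩ := this
    refine ⟨n4, fun n hn => ?_⟩
    have := h n hn
    rwa [← Real.rpow_natCast, ← Real.rpow_mul (by norm_num), show -γ * (n : ℝ) = -((n : ℝ) * γ) by ring]
      at this
  refine ⟨max 1 (max (max n1 n2) (max n3 n4)), fun n hn m hm => ?_⟩
  simp only [ge_iff_le, max_le_iff] at hn
  obtain ⟨hn0, ⟨hn1, hn2⟩, hn3, hn4⟩ := hn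
  replace h1 := h1 n hn1
  replace h2 := h2 n hn2
  replace h3 := h3 n hn3
  replace h4 := h4 n hn4
  have hn' : (0 : ℝ) < n := by exact_mod_cast hn0
  have hmpos : (0 : ℝ) < m := lt_of_lt_of_le (by positivity) hm
  have hm0 : 0 < m := by exact_mod_cast hmpos
  obtain ⟨K, hK⟩ : ∃ K : ℝ, K = 2 ^ ((n : ℝ) * (I1 + γ)) := ⟨_, rfl⟩
  have hKpos : 0 < K := by rw [hK]; positivity
  obtain ⟨τ, hτ⟩ : ∃ τ : ℝ, τ = 2 ^ ((n : ℝ) * (-I2 - γ)) := ⟨_, rfl⟩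
  have hτpos : 0 < τ := by rw [hτ]; positivity
  obtain ⟨L, hL⟩ : ∃ L : ℝ, L = 2 ^ ((n : ℝ) * (I1 + 2 * γ)) := ⟨_, rfl⟩
  have hL1 : 1 ≤ L := by rw [hL]; exact Real.one_le_rpow (by norm_num) (by positivity)
  have hNL : L ≤ (⌈L⌉₊ : ℝ) := Nat.le_ceil L
  have hNL2 : (⌈L⌉₊ : ℝ) ≤ 2 * L := by
    have := Nat.ceil_lt_add_one (show 0 ≤ L by linarith)
    linarith
  have hN0 : 0 < ⌈L⌉₊ := Nat.ceil_pos.2 (by linarith)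
  let D : (Fin n → 𝒳) → (Fin n → A) → (Fin n → 𝒴) → Prop := fun x a y =>
    (n : ℝ) * (d + γ) ≤ ∑ i, δ (x i) (π (a i, y i))
  let T : (Fin n → A) → (Fin n → 𝒴) → Prop := fun a y =>
    τ * ∏ i, (pA q W (a i) * margY q (y i)) ≤ ∏ i, pAY q W (a i, y i)
  have hWn : IsCondPmf (fun (x : Fin n → 𝒳) (a : Fin n → A) => ∏ i, W (x i) (a i)) := by
    intro x
    refine ⟨fun a => Finset.prod_nonneg fun i _ => (hW _).1 _, ?_⟩
    rw [sum_prod_pi (fun i a => W (x i) a)]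
    exact Finset.prod_eq_one fun i _ => (hW _).2
  obtain ⟨f, g, hfg⟩ := oneshot (iid q n) (iid_isPmf q hq n)
    (fun (x : Fin n → 𝒳) (a : Fin n → A) => ∏ i, W (x i) (a i)) hWn
    (fun a : Fin n → A => ∏ i, pA q W (a i)) (isPmf_pi _ (pA_isPmf q hq W hW)) D T K s hKpos hs
    ⌈L⌉₊ m hN0 hm0
  have hsupp : ∀ z : Fin n → (𝒳 × 𝒴) × A, (∏ i, pz q W (z i)) ≠ 0 → ∀ i, 0 < pz q W (z i) := by
    intro z hz i
    exact lt_of_le_of_ne (hp.1 _) (Ne.symm (Finset.prod_ne_zero_iff.1 hz i (Finset.mem_univ i)))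
  have hprodnn : ∀ z : Fin n → (𝒳 × 𝒴) × A, 0 ≤ ∏ i, pz q W (z i) := fun z =>
    Finset.prod_nonneg fun i _ => hp.1 _
  -- the covering failure
  have B1 : ∑ xy : (Fin n → 𝒳) × (Fin n → 𝒴), ∑ a : Fin n → A, iid q n xy *
      (∏ i, W (xy.1 i) (a i)) * ind (K * ∏ i, pA q W (a i) < ∏ i, W (xy.1 i) (a i)) ≤ e / 5 := by
    rw [sum_iid3 q W n (fun x y a => ind (K * ∏ i, pA q W (a i) < ∏ i, W (x i) (a i)))]
    refine le_trans (Finset.sum_le_sum fun z _ => ?_) h1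
    by_cases hz : (∏ i, pz q W (z i)) = 0
    · exact le_of_eq (by rw [show (∏ i, (q (z i).1 * W (z i).1.1 (z i).2)) = 0 from hz, hz]; simp)
    · refine mul_le_mul_of_nonneg_left (ind_mono fun h => ?_) (hprodnn z)
      rw [hK] at h
      exact log_event (fun i => W (z i).1.1 (z i).2) (fun i => pA q W (z i).2)
        (fun i => (supp_pos q hq W hW _ (hsupp z hz i)).2.1)
        (fun i => (supp_pos q hq W hW _ (hsupp z hz i)).2.2.1) _ h
  -- the failure of typicality
  have B2 : ∑ xy : (Fin n → 𝒳) × (Fin n → 𝒴), ∑ a : Fin n → A, iid q n xy *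
      (∏ i, W (xy.1 i) (a i)) * ind (D xy.1 a xy.2 ∨ ¬ T a xy.2) ≤
        s * (e / 10) + s * (e / 10) := by
    rw [sum_iid3 q W n (fun x y a => ind (D x a y ∨ ¬ T a y))]
    refine le_trans ?_ (add_le_add h3 h2)
    rw [← Finset.sum_add_distrib]
    refine Finset.sum_le_sum fun z _ => ?_
    rw [← mul_add]
    by_cases hz : (∏ i, pz q W (z i)) = 0
    · exact le_of_eq (by rw [show (∏ i, (q (z i).1 * W (z i).1.1 (z i).2)) = 0 from hz, hz]; simp)
    · refine mul_le_mul_of_nonneg_left ((ind_or_le _ _).trans (add_le_add (ind_mono fun h => ?_)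
        (ind_mono fun h => ?_))) (hprodnn z)
      · refine le_trans ?_ h
        gcongr
      · have h' := not_le.1 h
        refine log_event (fun i => pA q W (z i).2 * margY q (z i).1.2)
          (fun i => pAY q W ((z i).2, (z i).1.2))
          (fun i => mul_pos (supp_pos q hq W hW _ (hsupp z hz i)).2.2.1
            (supp_pos q hq W hW _ (hsupp z hz i)).2.2.2.1)
          (fun i => (supp_pos q hq W hW _ (hsupp z hz i)).2.2.2.2) _ ?_
        have e1 : (2 : ℝ) ^ ((n : ℝ) * (I2 + γ)) * τ = 1 := by
          rw [hτ, ← Real.rpow_add (by norm_num), show (n : ℝ) * (I2 + γ) + n * (-I2 - γ) = 0 by ring,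
            Real.rpow_zero]
        have := mul_lt_mul_of_pos_left h' (show (0 : ℝ) < 2 ^ ((n : ℝ) * (I2 + γ)) by positivity)
        rwa [← mul_assoc, e1, one_mul] at this
  have B3 : Real.exp (-((⌈L⌉₊ : ℝ) / K)) ≤ e / 5 := by
    have e1 : (2 : ℝ) ^ ((n : ℝ) * γ) ≤ (⌈L⌉₊ : ℝ) / K := by
      rw [le_div_iff₀ hKpos]
      refine le_trans (le_of_eq ?_) hNL
      rw [hK, hL, ← Real.rpow_add (by norm_num)]
      congr 1; ring
    have hpos : (0 : ℝ) < 2 ^ ((n : ℝ) * γ) := by positivity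
    calc Real.exp (-((⌈L⌉₊ : ℝ) / K)) ≤ Real.exp (-(2 : ℝ) ^ ((n : ℝ) * γ)) :=
          Real.exp_le_exp.2 (by linarith)
      _ ≤ ((2 : ℝ) ^ ((n : ℝ) * γ))⁻¹ := by
          rw [Real.exp_neg]
          exact inv_anti₀ hpos (by linarith [Real.add_one_le_exp ((2 : ℝ) ^ ((n : ℝ) * γ))])
      _ = (2 : ℝ) ^ (-((n : ℝ) * γ)) := (Real.rpow_neg (by norm_num) _).symm
      _ ≤ 2 * (2 : ℝ) ^ (-((n : ℝ) * γ)) := by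
          have : (0 : ℝ) < (2 : ℝ) ^ (-((n : ℝ) * γ)) := by positivity
          linarith
      _ ≤ e / 5 := h4
  have B4 : (⌈L⌉₊ : ℝ) / m * ∑ a : Fin n → A, ∑ xy : (Fin n → 𝒳) × (Fin n → 𝒴),
      (∏ i, pA q W (a i)) * iid q n xy * ind (T a xy.2) ≤ e / 5 := by
    refine le_trans (mul_le_mul_of_nonneg_left (packing q hq W hW n τ hτpos) (by positivity)) ?_
    refine le_trans ?_ h4
    rw [div_mul_div_comm, mul_one, div_le_iff₀ (by positivity)]
    have e1 : L = (2 : ℝ) ^ (-((n : ℝ) * γ)) * ((2 : ℝ) ^ ((n : ℝ) * (I1 + I2 + ε)) * τ) := by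
      rw [hL, hτ, ← Real.rpow_add (by norm_num), ← Real.rpow_add (by norm_num)]
      congr 1
      rw [hγdef]; ring
    calc (⌈L⌉₊ : ℝ) ≤ 2 * L := hNL2
      _ = 2 * (2 : ℝ) ^ (-((n : ℝ) * γ)) * ((2 : ℝ) ^ ((n : ℝ) * (I1 + I2 + ε)) * τ) := by
          rw [mul_assoc, ← e1]
      _ ≤ _ := by gcongr
  have herr : ∑ xy : (Fin n → 𝒳) × (Fin n → 𝒴), iid q n xy *
      ind (D xy.1 (g (f xy.1) xy.2) xy.2) ≤ e := by
    refine hfg.trans ?_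
    have B2' : (∑ xy : (Fin n → 𝒳) × (Fin n → 𝒴), ∑ a : Fin n → A, iid q n xy *
      (∏ i, W (xy.1 i) (a i)) * ind (D xy.1 a xy.2 ∨ ¬ T a xy.2)) / s ≤ e / 5 := by
      rw [div_le_iff₀ hs]; linarith
    linarith
  refine ⟨f, fun b y i => π (g b y i, y i), ?_⟩
  have hpt : ∀ xy : (Fin n → 𝒳) × (Fin n → 𝒴),
      (n : ℝ)⁻¹ * ∑ i, δ (xy.1 i) (π (g (f xy.1) xy.2 i, xy.2 i)) ≤
        (d + γ) + dmax * ind (D xy.1 (g (f xy.1) xy.2) xy.2) := by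
    intro xy
    have hd0 : 0 ≤ d := le_trans (Finset.sum_nonneg fun z _ => mul_nonneg (hp.1 z) (hδ _ _).1) hd
    rw [inv_mul_le_iff₀ hn']
    by_cases h : D xy.1 (g (f xy.1) xy.2) xy.2
    · rw [ind_true h]
      have : ∑ i, δ (xy.1 i) (π (g (f xy.1) xy.2 i, xy.2 i)) ≤ ∑ _i : Fin n, dmax :=
        Finset.sum_le_sum fun i _ => (hδ _ _).2
      simp only [Finset.sum_const, Finset.card_univ, Fintype.card_fin, nsmul_eq_mul] at this
      refine this.trans ?_
      gcongr
      linarith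
    · rw [ind_false h]
      have := not_le.1 h
      simp only [mul_zero, add_zero]
      exact this.le
  calc _ ≤ ∑ xy : (Fin n → 𝒳) × (Fin n → 𝒴), iid q n xy *
        ((d + γ) + dmax * ind (D xy.1 (g (f xy.1) xy.2) xy.2)) :=
        Finset.sum_le_sum fun xy _ => mul_le_mul_of_nonneg_left (hpt xy) ((iid_isPmf q hq n).1 xy)
    _ = (d + γ) + dmax * ∑ xy : (Fin n → 𝒳) × (Fin n → 𝒴), iid q n xy *
        ind (D xy.1 (g (f xy.1) xy.2) xy.2) := by
        simp only [mul_add, Finset.sum_add_distrib, ← Finset.sum_mul, (iid_isPmf q hq n).2, one_mul]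
        rw [Finset.mul_sum]
        congr 1
        exact Finset.sum_congr rfl fun xy _ => by ring
    _ ≤ (d + γ) + dmax * e := by gcongr
    _ ≤ d + ε := by
        have : dmax * e ≤ ε / 2 := by
          rw [hedef, ← mul_div_assoc, div_le_div_iff₀ (by positivity) (by norm_num)]
          nlinarith
        linarith

end asym

end TWR

namespace TWR

section fin
variable {𝒳 𝒴 Xh Yh : Type} [Fintype 𝒳] [Fintype 𝒴] [Fintype Xh] [Fintype Yh]

/-- Values over which the Wyner–Ziv infimum is taken. -/
def wzSet (q : 𝒳 × 𝒴 → ℝ) (δ1 : 𝒳 → Xh → ℝ) (d1 : ℝ) : Set ℝ :=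
  {r : ℝ | ∃ p : Fin (Fintype.card 𝒳 + 1) × 𝒳 × 𝒴 → ℝ, IsPmf p ∧
    (∀ x y, (∑ a, p (a, x, y)) = q (x, y)) ∧ Markov p ∧
    (∃ π1 : Fin (Fintype.card 𝒳 + 1) × 𝒴 → Xh,
      (∑ a, ∑ x, ∑ y, p (a, x, y) * δ1 x (π1 (a, y))) ≤ d1) ∧
    r = condMI (fun t : 𝒳 × 𝒴 × Fin (Fintype.card 𝒳 + 1) => p (t.2.2, t.1, t.2.1))}

lemma wzRD_eq (q : 𝒳 × 𝒴 → ℝ) (δ1 : 𝒳 → Xh → ℝ) (d1 : ℝ) :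
    wzRD q δ1 d1 = sInf (wzSet q δ1 d1) := rfl

lemma markov_kernel {A : Type} [Fintype A] [Nonempty A] (q : 𝒳 × 𝒴 → ℝ) (hq : IsPmf q)
    (p : A × 𝒳 × 𝒴 → ℝ) (hp : IsPmf p) (hpq : ∀ x y, (∑ a, p (a, x, y)) = q (x, y))
    (hM : Markov p) :
    ∃ W : 𝒳 → A → ℝ, IsCondPmf W ∧ ∀ a x y, p (a, x, y) = q (x, y) * W x a := by
  obtain ⟨a0⟩ := ‹Nonempty A›
  have hX : ∀ x, (∑ a', ∑ c', p (a', x, c')) = margX q x := fun x => by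
    rw [Finset.sum_comm]; simp only [hpq]; rfl
  have hXn : ∀ x, 0 ≤ margX q x := fun x => Finset.sum_nonneg fun _ _ => hq.1 _
  refine ⟨fun x a => if margX q x = 0 then (if a = a0 then 1 else 0)
    else (∑ y, p (a, x, y)) / margX q x, ?_, ?_⟩
  · intro x
    by_cases h : margX q x = 0
    · constructor
      · intro a; simp only [h, if_true]; split_ifs <;> norm_num
      · simp [h]
    · constructor
      · intro a; simp only [h, if_false]
        exact div_nonneg (Finset.sum_nonneg fun _ _ => hp.1 _) (hXn x)
      · simp only [h, if_false]
        rw [← Finset.sum_div, hX, div_self h]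
  · intro a x y
    by_cases h : margX q x = 0
    · have hq0 : q (x, y) = 0 :=
        (Finset.sum_eq_zero_iff_of_nonneg (fun y _ => hq.1 (x, y))).1 h y (Finset.mem_univ _)
      have : p (a, x, y) = 0 :=
        (Finset.sum_eq_zero_iff_of_nonneg (fun a _ => hp.1 (a, x, y))).1
          ((hpq x y).trans hq0) a (Finset.mem_univ _)
      rw [this, hq0, zero_mul]
    · have := hM a x y
      rw [hX, hpq] at this
      simp only [h, if_false]
      field_simp
      linarith

lemma condMI_split {A : Type} [Fintype A] (q : 𝒳 × 𝒴 → ℝ) (hq : IsPmf q) (W : 𝒳 → A → ℝ)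
    (hW : IsCondPmf W) :
    condMI (fun t : 𝒳 × 𝒴 × A => q (t.1, t.2.1) * W t.1 t.2.2) =
      (∑ z, pz q W z * i1 q W z) + ∑ z, pz q W z * i2 q W z := by
  rw [condMI_eq, ← Finset.sum_add_distrib]
  refine Fintype.sum_equiv (Equiv.prodAssoc 𝒳 𝒴 A).symm _ _ ?_
  rintro ⟨x, y, a⟩
  simp only [Equiv.prodAssoc_symm_apply]
  rcases (pz_isPmf q hq W hW).1 ((x, y), a) |>.eq_or_lt with h | h
  · rw [← h]
    have : q (x, y) * W x a = 0 := h.symm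
    rw [this]; ring
  · obtain ⟨h1, h2, h3, h4, h5⟩ := supp_pos q hq W hW _ h
    simp only at h1 h2 h3 h4 h5
    have e1 : ∑ c, q (x, y) * W x c = q (x, y) := by
      rw [← Finset.mul_sum, (hW x).2, mul_one]
    have e2 : ∑ x', ∑ c, q (x', y) * W x' c = margY q y := by
      unfold margY
      refine Finset.sum_congr rfl fun x' _ => ?_
      rw [← Finset.mul_sum, (hW x').2, mul_one]
    have e3 : ∑ x', q (x', y) * W x' a = pAY q W (a, y) := rfl
    rw [e1, e2, e3]
    unfold pz i1 i2
    simp only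
    rw [Real.logb_mul h1.ne' h2.ne', Real.logb_mul h3.ne' h4.ne']
    ring

lemma wz_elem (q : 𝒳 × 𝒴 → ℝ) (hq : IsPmf q) (δ : 𝒳 → Xh → ℝ) (dmax : ℝ) (hdm : 0 ≤ dmax)
    (hδ : ∀ x c, 0 ≤ δ x c ∧ δ x c ≤ dmax) (d r : ℝ) (hr : r ∈ wzSet q δ d) :
    0 ≤ r ∧ ∀ ε > (0 : ℝ), ∃ n0 : ℕ, ∀ n ≥ n0, ∀ m : ℕ, (2 : ℝ) ^ ((n : ℝ) * (r + ε)) ≤ m →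
      ∃ (f : (Fin n → 𝒳) → Fin m) (g : Fin m → (Fin n → 𝒴) → Fin n → Xh),
        ∑ xy : (Fin n → 𝒳) × (Fin n → 𝒴), iid q n xy *
          ((n : ℝ)⁻¹ * ∑ i, δ (xy.1 i) (g (f xy.1) xy.2 i)) ≤ d + ε := by
  obtain ⟨p, hp, hpq, hM, ⟨π, hπ⟩, rfl⟩ := hr
  obtain ⟨W, hW, hpW⟩ := markov_kernel q hq p hp hpq hM
  simp only [hpW] at hπ ⊢
  rw [condMI_split q hq W hW]
  constructor
  · rw [← condMI_split q hq W hW]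
    refine condMI_nonneg _ ⟨fun t => mul_nonneg (hq.1 _) ((hW _).1 _), ?_⟩
    rw [← (pz_isPmf q hq W hW).2]
    exact Fintype.sum_equiv (Equiv.prodAssoc 𝒳 𝒴 _).symm _ _ fun t => rfl
  · intro ε hε
    refine wz_code q hq W hW δ dmax hdm hδ π d (le_of_eq_of_le ?_ hπ) ε hε
    rw [Fintype.sum_prod_type, Finset.sum_comm]
    refine Finset.sum_congr rfl fun a _ => ?_
    rw [Fintype.sum_prod_type]
    rfl

lemma wz_nonempty (q : 𝒳 × 𝒴 → ℝ) (hq : IsPmf q) (δ : 𝒳 → Xh → ℝ)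
    (hn : ∀ x, ∃ xh, δ x xh = 0) (d : ℝ) (hd : 0 ≤ d) : (wzSet q δ d).Nonempty := by
  choose z hz using hn
  obtain ⟨e, he⟩ : ∃ e : 𝒳 → Fin (Fintype.card 𝒳 + 1), Function.Injective e :=
    ⟨fun x => (Fintype.equivFin 𝒳 x).castSucc,
      (Fin.castSucc_injective _).comp (Fintype.equivFin 𝒳).injective⟩
  have hne : Nonempty 𝒳 := by
    by_contra h
    rw [not_nonempty_iff] at h
    have := hq.2
    simp at this
  have hmarg : ∀ x y, ∑ a, (if a = e x then q (x, y) else 0) = q (x, y) := fun x y => by simp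
  refine ⟨_, fun t => if t.1 = e t.2.1 then q t.2 else 0, ⟨?_, ?_⟩, ?_, ?_,
    ⟨fun t => z (Function.invFun e t.1), ?_⟩, rfl⟩
  · intro t; dsimp only; split_ifs
    · exact hq.1 _
    · exact le_rfl
  · rw [Fintype.sum_prod_type, Finset.sum_comm, ← hq.2]
    exact Finset.sum_congr rfl fun t _ => hmarg t.1 t.2
  · exact hmarg
  · intro a x y
    simp only [hmarg]
    rw [Finset.sum_comm]
    simp only [hmarg]
    by_cases h : a = e x
    · simp only [h, if_true]; ring
    · simp [h]
  · refine le_of_eq_of_le ?_ hd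
    refine Finset.sum_eq_zero fun a _ => Finset.sum_eq_zero fun x _ =>
      Finset.sum_eq_zero fun y _ => ?_
    by_cases h : a = e x
    · subst h
      simp only [Function.leftInverse_invFun he x, hz, mul_zero]
    · simp [h]

lemma ach (q : 𝒳 × 𝒴 → ℝ) (hq : IsPmf q)
    (δ1 : 𝒳 → Xh → ℝ) (δ2 : 𝒴 → Yh → ℝ) (d1max d2max : ℝ)
    (h1m : 0 ≤ d1max) (h2m : 0 ≤ d2max)
    (hδ1 : ∀ x xh, 0 ≤ δ1 x xh ∧ δ1 x xh ≤ d1max)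
    (hδ2 : ∀ y yh, 0 ≤ δ2 y yh ∧ δ2 y yh ≤ d2max)
    (d1 d2 r1 r2 : ℝ) (hr1 : r1 ∈ wzSet q δ1 d1) (hr2 : r2 ∈ wzSet (swap q) δ2 d2) :
    0 ≤ max r1 r2 ∧ RDAchievable q δ1 δ2 d1 d2 (max r1 r2) := by
  obtain ⟨p1, H1⟩ := wz_elem q hq δ1 d1max h1m hδ1 d1 r1 hr1
  obtain ⟨_, H2⟩ := wz_elem (swap q) (swap_isPmf q hq) δ2 d2max h2m hδ2 d2 r2 hr2
  refine ⟨le_max_of_le_left p1, fun ε hε => ?_⟩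
  obtain ⟨r, hr⟩ : ∃ r, r = max r1 r2 := ⟨_, rfl⟩
  have hr1 : r1 ≤ r := hr ▸ le_max_left _ _
  have hr2 : r2 ≤ r := hr ▸ le_max_right _ _
  rw [← hr]
  obtain ⟨n1, K1⟩ := H1 (ε / 2) (half_pos hε)
  obtain ⟨n2, K2⟩ := H2 (ε / 2) (half_pos hε)
  obtain ⟨n3, hn3⟩ := exists_nat_ge (2 / ε)
  obtain ⟨n, hn⟩ : ∃ n, n = n1 + n2 + n3 + 1 := ⟨_, rfl⟩
  have hn0 : 0 < n := by omega
  have hn0' : (0 : ℝ) < n := by exact_mod_cast hn0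
  have hnε : 2 / ε ≤ (n : ℝ) := hn3.trans (by exact_mod_cast (by omega : n3 ≤ n))
  have hnε' : 1 ≤ (n : ℝ) * (ε / 2) := by
    rw [div_le_iff₀ hε] at hnε; linarith
  obtain ⟨T, hT⟩ : ∃ T : ℝ, T = (2 : ℝ) ^ ((n : ℝ) * (r + ε / 2)) := ⟨_, rfl⟩
  have hT1 : 1 ≤ T := by
    rw [hT]
    apply Real.one_le_rpow (by norm_num)
    have : 0 ≤ r := p1.trans hr1
    positivity
  obtain ⟨m, hm⟩ : ∃ m, m = ⌈T⌉₊ := ⟨_, rfl⟩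
  have hmT : T ≤ m := hm ▸ Nat.le_ceil T
  have hmT2 : (m : ℝ) ≤ 2 * T := by
    have := Nat.ceil_lt_add_one (by linarith : 0 ≤ T)
    rw [← hm] at this; linarith
  have hm0 : 0 < m := by
    have : (0 : ℝ) < m := by linarith
    exact_mod_cast this
  haveI : NeZero m := ⟨hm0.ne'⟩
  have hle : ∀ s, s ≤ r → (2 : ℝ) ^ ((n : ℝ) * (s + ε / 2)) ≤ m := fun s hs => by
    refine le_trans ?_ hmT
    rw [hT]
    apply Real.rpow_le_rpow_of_exponent_le (by norm_num)
    gcongr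
  obtain ⟨f1, g1, hc1⟩ := K1 n (by omega) m (hle r1 hr1)
  obtain ⟨f2, g2, hc2⟩ := K2 n (by omega) m (hle r2 hr2)
  refine ⟨n, m, fun xy => f1 xy.1 + f2 xy.2, fun bb => g1 (bb.1 - f2 bb.2) bb.2,
    fun bx => g2 (bx.1 - f1 bx.2) bx.2, hn0, ?_, ?_, ?_⟩
  · rw [div_le_iff₀ hn0']
    have h := Real.logb_le_logb_of_le (b := 2) (by norm_num) (by exact_mod_cast hm0) hmT2
    rw [Real.logb_mul (by norm_num) (by linarith), hT,
      Real.logb_rpow (by norm_num) (by norm_num), Real.logb_self_eq_one (by norm_num)] at h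
    linarith
  · unfold Delta1
    simp only [add_sub_cancel_right]
    linarith
  · rw [← delta2_swap]
    unfold Delta1
    simp only [add_sub_cancel_left]
    linarith

end fin

end TWR

open TWR in
/-- Theorem 8, first part: the RD function is sandwiched
between the cut-set lower bound and the compress-linear upper bound. -/
theorem rd_sandwich
    {𝒳 𝒴 Xh Yh : Type} [Fintype 𝒳] [Fintype 𝒴] [Fintype Xh] [Fintype Yh]
    (q : 𝒳 × 𝒴 → ℝ) (hq : IsPmf q)
    (δ1 : 𝒳 → Xh → ℝ) (δ2 : 𝒴 → Yh → ℝ) (d1max d2max : ℝ)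
    (hδ1 : ∀ x xh, 0 ≤ δ1 x xh ∧ δ1 x xh ≤ d1max)
    (hδ2 : ∀ y yh, 0 ≤ δ2 y yh ∧ δ2 y yh ≤ d2max)
    (hδ1n : ∀ x, ∃ xh, δ1 x xh = 0) (hδ2n : ∀ y, ∃ yh, δ2 y yh = 0)
    (d1 d2 : ℝ) (hd1 : 0 ≤ d1) (hd2 : 0 ≤ d2) :
    max (condRD q δ1 d1) (condRD (swap q) δ2 d2) ≤ RD q δ1 δ2 d1 d2 ∧
    RD q δ1 δ2 d1 d2 ≤ max (wzRD q δ1 d1) (wzRD (swap q) δ2 d2) := by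
  have hne : Nonempty (𝒳 × 𝒴) := by
    by_contra h
    rw [not_nonempty_iff] at h
    have := hq.2
    rw [Finset.univ_eq_empty, Finset.sum_empty] at this
    exact zero_ne_one this
  obtain ⟨x0, y0⟩ := hne
  obtain ⟨xh0, hx0⟩ := hδ1n x0
  obtain ⟨yh0, hy0⟩ := hδ2n y0
  haveI : Nonempty Xh := ⟨xh0⟩
  haveI : Nonempty Yh := ⟨yh0⟩
  have h1m : 0 ≤ d1max := (hδ1 x0 xh0).1.trans (hδ1 x0 xh0).2
  have h2m : 0 ≤ d2max := (hδ2 y0 yh0).1.trans (hδ2 y0 yh0).2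
  have N1 := wz_nonempty q hq δ1 hδ1n d1 hd1
  have N2 := wz_nonempty (swap q) (swap_isPmf q hq) δ2 hδ2n d2 hd2
  have A := ach q hq δ1 δ2 d1max d2max h1m h2m hδ1 hδ2 d1 d2
  constructor
  · obtain ⟨s1, hs1⟩ := N1
    obtain ⟨s2, hs2⟩ := N2
    refine le_csInf ⟨_, A s1 s2 hs1 hs2⟩ ?_
    rintro r ⟨_, hr⟩
    refine max_le (converse q hq δ1 d1 r fun ε hε => ?_)
      (converse (swap q) (swap_isPmf q hq) δ2 d2 r fun ε hε => ?_)
    · obtain ⟨n, m, f, g1, g2, h0, h1, h2, h3⟩ := hr ε hε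
      exact ⟨n, m, f, g1, h0, h1, h2⟩
    · obtain ⟨n, m, f, g1, g2, h0, h1, h2, h3⟩ := hr ε hε
      exact ⟨n, m, fun yx => f (yx.2, yx.1), g2, h0, h1, by rw [delta2_swap]; exact h3⟩
  · rw [wzRD_eq, wzRD_eq]
    refine le_of_forall_pos_le_add fun ε hε => ?_
    obtain ⟨s1, hs1, hl1⟩ := exists_lt_of_csInf_lt N1 (lt_add_of_pos_right _ hε)
    obtain ⟨s2, hs2, hl2⟩ := exists_lt_of_csInf_lt N2 (lt_add_of_pos_right _ hε)
    have hle : RD q δ1 δ2 d1 d2 ≤ max s1 s2 :=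
      csInf_le ⟨0, fun r hr => hr.1⟩ (A s1 s2 hs1 hs2)
    refine hle.trans (max_le ?_ ?_)
    · exact hl1.le.trans (add_le_add_left (le_max_left _ _) _)
    · exact hl2.le.trans (add_le_add_left (le_max_right _ _) _)
end
end

section
/- For every (d1,d2) ∈ ℝ₊², the common-reconstruction rate-distortion function satisfies R_CR(d1,d2) ≤ max{ R_{XY}(d1,d2) − R_X(d1), R_{XY}(d1,d2) − R_Y(d2) }, where R_{XY} is the joint RD function and R_X, R_Y are the marginal RD functions. -/
open scoped BigOperators Classical

noncomputable section

namespace TWR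

lemma aux_sum_pi_prod {ι α : Type} [Fintype ι] [DecidableEq ι] [Fintype α] (g : ι → α → ℝ) :
    ∑ f : ι → α, ∏ i, g i (f i) = ∏ i, ∑ a, g i a :=
  (Fintype.prod_sum g).symm

lemma aux_E_one {ι α : Type} [Fintype ι] [DecidableEq ι] [Fintype α] (p : α → ℝ)
    (hp : ∑ a, p a = 1) : ∑ f : ι → α, ∏ i, p (f i) = 1 := by
  rw [aux_sum_pi_prod (fun _ a => p a)]; simp [hp]

lemma aux_E_two {ι α : Type} [Fintype ι] [DecidableEq ι] [Fintype α] (p : α → ℝ)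
    (hp : ∑ a, p a = 1) (F G : α → ℝ) (i j : ι) (hij : i ≠ j) :
    ∑ f : ι → α, (∏ i, p (f i)) * (F (f i) * G (f j)) =
      (∑ a, p a * F a) * (∑ a, p a * G a) := by
  have h1 : ∀ f : ι → α, (∏ i, p (f i)) * (F (f i) * G (f j)) =
      ∏ l, (p (f l) * ((if l = i then F (f l) else 1) * (if l = j then G (f l) else 1))) := by
    intro f
    simp only [Finset.prod_mul_distrib, Finset.prod_ite_eq', Finset.mem_univ, if_true]
  simp_rw [h1]
  rw [aux_sum_pi_prod (fun l a => p a * ((if l = i then F a else 1) * (if l = j then G a else 1)))]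
  have h2 : ∀ l, ∑ a, p a * ((if l = i then F a else 1) * (if l = j then G a else 1)) =
      (if l = i then ∑ a, p a * F a else 1) * (if l = j then ∑ a, p a * G a else 1) := by
    intro l
    by_cases hi : l = i
    · have hj : l ≠ j := fun h => hij (hi.symm.trans h)
      simp [hi, hij]
    · by_cases hj : l = j
      · simp [hj, Ne.symm hij]
      · simp [hi, hj, hp]
  simp_rw [h2]
  simp only [Finset.prod_mul_distrib, Finset.prod_ite_eq', Finset.mem_univ, if_true]

lemma aux_E_coord {ι α : Type} [Fintype ι] [DecidableEq ι] [Fintype α] (p : α → ℝ)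
    (hp : ∑ a, p a = 1) (F : α → ℝ) (k : ι) :
    ∑ f : ι → α, (∏ i, p (f i)) * F (f k) = ∑ a, p a * F a := by
  have h1 : ∀ f : ι → α, (∏ i, p (f i)) * F (f k) =
      ∏ l, (p (f l) * (if l = k then F (f l) else 1)) := by
    intro f
    simp only [Finset.prod_mul_distrib, Finset.prod_ite_eq', Finset.mem_univ, if_true]
  simp_rw [h1]
  rw [aux_sum_pi_prod (fun l a => p a * (if l = k then F a else 1))]
  have h2 : ∀ l, ∑ a, p a * (if l = k then F a else 1) =
      (if l = k then ∑ a, p a * F a else 1) := by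
    intro l
    by_cases hi : l = k
    · simp [hi]
    · simp [hi, hp]
  simp_rw [h2]
  simp [Finset.prod_ite_eq']

lemma aux_var {α : Type} [Fintype α] (p : α → ℝ)
    (hp : ∑ a, p a = 1) (ψ : α → ℝ) (hψ : ∑ a, p a * ψ a = 0) (n : ℕ) :
    ∑ f : Fin n → α, (∏ i, p (f i)) * (∑ i, ψ (f i)) ^ 2 = n * ∑ a, p a * ψ a ^ 2 := by
  have h1 : ∀ f : Fin n → α, (∏ i, p (f i)) * (∑ i, ψ (f i)) ^ 2 =
      ∑ i, ∑ j, (∏ i, p (f i)) * (ψ (f i) * ψ (f j)) := by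
    intro f
    rw [sq, Finset.sum_mul_sum, Finset.mul_sum]
    simp_rw [Finset.mul_sum]
  simp_rw [h1]
  rw [Finset.sum_comm]
  have h2 : ∀ i : Fin n, ∑ f : Fin n → α, ∑ j, (∏ i, p (f i)) * (ψ (f i) * ψ (f j)) =
      ∑ a, p a * ψ a ^ 2 := by
    intro i
    rw [Finset.sum_comm, Finset.sum_eq_single i]
    · rw [← aux_E_coord p hp (fun a => ψ a ^ 2) i]
      simp [sq]
    · intro j _ hj
      rw [aux_E_two p hp ψ ψ i j (Ne.symm hj), hψ, zero_mul]
    · simp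
  simp_rw [h2]
  simp

lemma aux_cheb {α : Type} [Fintype α] (p : α → ℝ) (hp0 : ∀ a, 0 ≤ p a)
    (hp : ∑ a, p a = 1) (φ : α → ℝ) (η : ℝ) (hη : 0 < η) (n : ℕ) (hn : 0 < n) :
    ∑ f : Fin n → α, (∏ i, p (f i)) *
      (if n * ((∑ a, p a * φ a) + η) < ∑ i, φ (f i) then 1 else 0) ≤
      (∑ a, p a * (φ a - ∑ a, p a * φ a) ^ 2) / (η ^ 2 * n) := by
  set μ := ∑ a, p a * φ a with hμ
  have hn' : (0 : ℝ) < n := by exact_mod_cast hn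
  have hv := aux_var p hp (fun a => φ a - μ)
    (by simp [mul_sub, Finset.sum_sub_distrib, ← Finset.sum_mul, hp, ← hμ]) n
  have hpos : 0 < (n * η) ^ 2 := by positivity
  calc _ ≤ ∑ f : Fin n → α, ((∏ i, p (f i)) * (∑ i, (φ (f i) - μ)) ^ 2) / (n * η) ^ 2 := by
        apply Finset.sum_le_sum
        intro f _
        rw [mul_div_assoc]
        apply mul_le_mul_of_nonneg_left _ (Finset.prod_nonneg fun i _ => hp0 _)
        split_ifs with h
        · rw [one_le_div hpos]
          apply pow_le_pow_left₀ (by positivity)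
          simp [Finset.sum_sub_distrib]
          linarith
        · positivity
    _ = _ := by
        rw [← Finset.sum_div, hv]
        field_simp

/-- There is an element at most the weighted average. -/
lemma aux_exists_le_avg {Ω : Type} [Fintype Ω] (w e : Ω → ℝ) (hw0 : ∀ a, 0 ≤ w a)
    (hw : ∑ a, w a = 1) (b : ℝ) (h : ∑ a, w a * e a ≤ b) : ∃ a, e a ≤ b := by
  by_contra! hc
  have h1 : ∑ a, w a * b < ∑ a, w a * e a := by
    apply Finset.sum_lt_sum
    · intro a _
      exact mul_le_mul_of_nonneg_left (hc a).le (hw0 a)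
    · by_contra! h2
      have : ∀ a, w a = 0 := by
        intro a
        by_contra h0
        have := h2 a (Finset.mem_univ _)
        exact absurd (le_of_mul_le_mul_left this (lt_of_le_of_ne (hw0 a) (Ne.symm h0))) (not_le.2 (hc a))
      simp [this] at hw
  rw [← Finset.sum_mul, hw, one_mul] at h1
  linarith

lemma aux_bins {K M : ℕ} (hM : 0 < M) (k k' : Fin K) (h : k' ≠ k) :
    ∑ B : Fin K → Fin M, (∏ _i : Fin K, (1 / (M : ℝ))) * (if B k' = B k then 1 else 0) = 1 / M := by
  have hM' : (M : ℝ) ≠ 0 := by positivity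
  have h1 : ∀ B : Fin K → Fin M, (∏ _i : Fin K, (1 / (M : ℝ))) * (if B k' = B k then 1 else 0) =
      ∑ b : Fin M, (∏ _i : Fin K, (1 / (M : ℝ))) *
        ((if B k' = b then 1 else 0) * (if B k = b then 1 else 0)) := by
    intro B
    rw [← Finset.mul_sum]
    congr 1
    simp only [ite_mul, one_mul, zero_mul, Finset.sum_ite_eq, Finset.mem_univ, if_true]
    simp only [eq_comm]
  simp_rw [h1]
  rw [Finset.sum_comm]
  have h2 : ∀ b : Fin M, ∑ B : Fin K → Fin M, (∏ _i : Fin K, (1 / (M : ℝ))) *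
        ((if B k' = b then 1 else 0) * (if B k = b then 1 else 0)) = 1 / M * (1 / M) := by
    intro b
    rw [aux_E_two (fun _ : Fin M => 1 / (M : ℝ)) (by simp [hM']) (fun c => if c = b then 1 else 0)
      (fun c => if c = b then 1 else 0) k' k h]
    simp
  simp_rw [h2]
  simp
  field_simp

end TWR

namespace TWR

lemma aux_oneshot {X Y Z : Type} [Fintype X] [Fintype Y] [Fintype Z]
    (q : X × Y → ℝ) (hq0 : ∀ s, 0 ≤ q s) (PZ : Z → ℝ) (h0 : ∀ z, 0 ≤ PZ z) (h1 : ∑ z, PZ z = 1)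
    (A : X × Y → Z → Prop) (A1 : Y → Z → Prop) (A2 : X → Z → Prop)
    (hA1 : ∀ s z, A s z → A1 s.2 z) (hA2 : ∀ s z, A s z → A2 s.1 z)
    (K M : ℕ) (hK : 0 < K) (hM : 0 < M) :
    ∃ (f : X × Y → Fin M) (e1 : Fin M → Y → Z) (e2 : Fin M → X → Z),
      ∑ s, q s * (if A s (e1 (f s) s.2) ∧ e1 (f s) s.2 = e2 (f s) s.1 then 0 else 1) ≤
      ∑ s, q s * ((1 - ∑ z, PZ z * (if A s z then 1 else 0)) ^ K +
        K / M * ((∑ z, PZ z * (if A1 s.2 z then 1 else 0)) +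
          ∑ z, PZ z * (if A2 s.1 z then 1 else 0))) := by
  have hM' : (M : ℝ) ≠ 0 := by positivity
  let k0 : Fin K := ⟨0, hK⟩
  let sel : (Fin K → Z) → X × Y → Fin K := fun C s =>
    if h : ∃ k, A s (C k) then Classical.choose h else k0
  let e1 : (Fin K → Z) → (Fin K → Fin M) → Fin M → Y → Z := fun C B m y =>
    if h : ∃ k, B k = m ∧ A1 y (C k) then C (Classical.choose h) else C k0
  let e2 : (Fin K → Z) → (Fin K → Fin M) → Fin M → X → Z := fun C B m x =>
    if h : ∃ k, B k = m ∧ A2 x (C k) then C (Classical.choose h) else C k0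
  let f : (Fin K → Z) → (Fin K → Fin M) → X × Y → Fin M := fun C B s => B (sel C s)
  let err : (Fin K → Z) → (Fin K → Fin M) → X × Y → ℝ := fun C B s =>
    if A s (e1 C B (f C B s) s.2) ∧ e1 C B (f C B s) s.2 = e2 C B (f C B s) s.1 then 0 else 1
  let t : (Fin K → Z) → X × Y → Fin K → ℝ := fun C s k' =>
    if k' = sel C s then 0 else
      ((if A1 s.2 (C k') then 1 else 0) + (if A2 s.1 (C k') then 1 else 0))
  have ht0 : ∀ C s k', 0 ≤ t C s k' := by
    intro C s k'
    simp only [t]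
    split_ifs <;> norm_num
  -- pointwise bound
  have hpt : ∀ C B s, err C B s ≤ (∏ k, (1 - (if A s (C k) then (1 : ℝ) else 0))) +
      ∑ k', t C s k' * (if B k' = B (sel C s) then 1 else 0) := by
    intro C B s
    have hs0 : ∀ k', 0 ≤ t C s k' * (if B k' = B (sel C s) then (1 : ℝ) else 0) := by
      intro k'
      apply mul_nonneg (ht0 _ _ _)
      split_ifs <;> norm_num
    have hp0 : 0 ≤ (∏ k, (1 - (if A s (C k) then (1 : ℝ) else 0))) := by
      apply Finset.prod_nonneg
      intro k _
      split_ifs <;> norm_num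
    have herr1 : err C B s ≤ 1 := by
      simp only [err]; split_ifs <;> norm_num
    by_cases hn : ∃ k, A s (C k)
    · have hsel : A s (C (sel C s)) := by
        simp only [sel, dif_pos hn]
        exact Classical.choose_spec hn
      have key : ∀ k', k' ≠ sel C s → B k' = B (sel C s) →
          (A1 s.2 (C k') ∨ A2 s.1 (C k')) → err C B s ≤ (∏ k, (1 - (if A s (C k) then (1 : ℝ) else 0))) +
      ∑ k', t C s k' * (if B k' = B (sel C s) then 1 else 0) := by
        intro k' hne hB hA
        have h3 := Finset.single_le_sum (fun k _ => hs0 k) (Finset.mem_univ k')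
        have h4 : 1 ≤ t C s k' * (if B k' = B (sel C s) then (1 : ℝ) else 0) := by
          simp only [t, hne, hB, if_true, if_false, mul_one]
          rcases hA with h | h
          · simp only [h, if_true]; split_ifs <;> norm_num
          · simp only [h, if_true]; split_ifs <;> norm_num
        linarith
      have x1 : ∃ k, B k = B (sel C s) ∧ A1 s.2 (C k) := ⟨_, rfl, hA1 _ _ hsel⟩
      have x2 : ∃ k, B k = B (sel C s) ∧ A2 s.1 (C k) := ⟨_, rfl, hA2 _ _ hsel⟩
      have y1 : e1 C B (f C B s) s.2 = C (Classical.choose x1) := by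
        simp only [e1, f]; rw [dif_pos x1]
      have y2 : e2 C B (f C B s) s.1 = C (Classical.choose x2) := by
        simp only [e2, f]; rw [dif_pos x2]
      by_cases c1 : Classical.choose x1 = sel C s
      · by_cases c2 : Classical.choose x2 = sel C s
        · have : err C B s = 0 := by
            simp only [err]
            rw [y1, y2, c1, c2, if_pos ⟨hsel, rfl⟩]
          rw [this]
          exact add_nonneg hp0 (Finset.sum_nonneg fun k _ => hs0 k)
        · exact key _ c2 (Classical.choose_spec x2).1 (Or.inr (Classical.choose_spec x2).2)
      · exact key _ c1 (Classical.choose_spec x1).1 (Or.inl (Classical.choose_spec x1).2)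
    · push Not at hn
      have : (∏ k, (1 - (if A s (C k) then (1 : ℝ) else 0))) = 1 := by
        apply Finset.prod_eq_one
        intro k _
        simp [hn k]
      rw [this]
      have := Finset.sum_nonneg (fun k (_ : k ∈ Finset.univ) => hs0 k)
      linarith
  have hBsum : ∑ _B : Fin K → Fin M, (∏ _i : Fin K, (1 / (M : ℝ))) = 1 :=
    aux_E_one (fun _ : Fin M => 1 / (M : ℝ)) (by simp [hM'])
  have hCsum : ∑ C : Fin K → Z, ∏ i, PZ (C i) = 1 := aux_E_one PZ h1
  -- expectation over bins
  have hB : ∀ C s, ∑ B : Fin K → Fin M, (∏ _i : Fin K, (1 / (M : ℝ))) * err C B s ≤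
      (∏ k, (1 - (if A s (C k) then (1 : ℝ) else 0))) +
      1 / M * ∑ k', ((if A1 s.2 (C k') then 1 else 0) + (if A2 s.1 (C k') then 1 else 0)) := by
    intro C s
    calc _ ≤ ∑ B : Fin K → Fin M, (∏ _i : Fin K, (1 / (M : ℝ))) *
          ((∏ k, (1 - (if A s (C k) then (1 : ℝ) else 0))) +
            ∑ k', t C s k' * (if B k' = B (sel C s) then 1 else 0)) := by
          apply Finset.sum_le_sum
          intro B _
          exact mul_le_mul_of_nonneg_left (hpt C B s) (Finset.prod_nonneg fun i _ => by positivity)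
      _ = (∏ k, (1 - (if A s (C k) then (1 : ℝ) else 0))) +
            ∑ k', t C s k' * ∑ B : Fin K → Fin M, (∏ _i : Fin K, (1 / (M : ℝ))) *
              (if B k' = B (sel C s) then 1 else 0) := by
          simp_rw [mul_add]
          rw [Finset.sum_add_distrib, ← Finset.sum_mul, hBsum, one_mul]
          congr 1
          simp_rw [Finset.mul_sum]
          rw [Finset.sum_comm]
          refine Finset.sum_congr rfl fun _ _ => Finset.sum_congr rfl fun _ _ => by ring
      _ ≤ _ := by
          gcongr
          rw [Finset.mul_sum]
          apply Finset.sum_le_sum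
          intro k' _
          by_cases hk : k' = sel C s
          · simp only [t, hk, if_true, zero_mul]
            apply mul_nonneg (by positivity)
            split_ifs <;> norm_num
          · rw [aux_bins hM _ _ hk]
            simp only [t, hk, if_false]
            rw [mul_comm]
  -- expectation over codebooks
  have hC : ∀ s, ∑ C : Fin K → Z, (∏ i, PZ (C i)) *
      ∑ B : Fin K → Fin M, (∏ _i : Fin K, (1 / (M : ℝ))) * err C B s ≤
      (1 - ∑ z, PZ z * (if A s z then 1 else 0)) ^ K +
        K / M * ((∑ z, PZ z * (if A1 s.2 z then 1 else 0)) +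
          ∑ z, PZ z * (if A2 s.1 z then 1 else 0)) := by
    intro s
    calc _ ≤ ∑ C : Fin K → Z, (∏ i, PZ (C i)) *
          ((∏ k, (1 - (if A s (C k) then (1 : ℝ) else 0))) +
          1 / M * ∑ k', ((if A1 s.2 (C k') then 1 else 0) + (if A2 s.1 (C k') then 1 else 0))) := by
          apply Finset.sum_le_sum
          intro C _
          exact mul_le_mul_of_nonneg_left (hB C s) (Finset.prod_nonneg fun i _ => h0 _)
      _ = _ := by
          simp_rw [mul_add]
          rw [Finset.sum_add_distrib]
          congr 1
          · simp_rw [← Finset.prod_mul_distrib]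
            rw [aux_sum_pi_prod (fun _ z => PZ z * (1 - (if A s z then (1 : ℝ) else 0)))]
            simp [mul_sub, Finset.sum_sub_distrib, h1]
          · have : ∀ C : Fin K → Z, (∏ i, PZ (C i)) *
                (1 / M * ∑ k', ((if A1 s.2 (C k') then (1:ℝ) else 0) + (if A2 s.1 (C k') then 1 else 0)))
                = ∑ k', 1 / M * ((∏ i, PZ (C i)) *
                  ((if A1 s.2 (C k') then (1:ℝ) else 0) + (if A2 s.1 (C k') then 1 else 0))) := by
              intro C
              rw [Finset.mul_sum, Finset.mul_sum]
              exact Finset.sum_congr rfl fun _ _ => by ring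
            simp_rw [this]
            rw [Finset.sum_comm]
            have h5 : ∀ k', ∑ C : Fin K → Z, 1 / (M : ℝ) * ((∏ i, PZ (C i)) *
                  ((if A1 s.2 (C k') then (1:ℝ) else 0) + (if A2 s.1 (C k') then 1 else 0))) =
                1 / (M : ℝ) * ((∑ z, PZ z * (if A1 s.2 z then 1 else 0)) +
                  ∑ z, PZ z * (if A2 s.1 z then 1 else 0)) := by
              intro k'
              rw [← Finset.mul_sum, aux_E_coord PZ h1
                (fun z => (if A1 s.2 z then (1:ℝ) else 0) + (if A2 s.1 z then 1 else 0)) k']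
              simp_rw [mul_add]
              rw [Finset.sum_add_distrib, mul_add]
            simp_rw [h5]
            simp
            ring
  obtain ⟨⟨C, B⟩, hCB⟩ := aux_exists_le_avg
    (fun ω : (Fin K → Z) × (Fin K → Fin M) => (∏ i, PZ (ω.1 i)) * (∏ _i : Fin K, (1 / (M : ℝ))))
    (fun ω => ∑ s, q s * err ω.1 ω.2 s)
    (fun ω => mul_nonneg (Finset.prod_nonneg fun i _ => h0 _)
      (Finset.prod_nonneg fun i _ => by positivity))
    (by
      rw [Fintype.sum_prod_type]
      simp only
      simp_rw [← Finset.mul_sum, hBsum, mul_one]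
      exact hCsum)
    (∑ s, q s * ((1 - ∑ z, PZ z * (if A s z then 1 else 0)) ^ K +
        K / M * ((∑ z, PZ z * (if A1 s.2 z then 1 else 0)) +
          ∑ z, PZ z * (if A2 s.1 z then 1 else 0))))
    (by
      calc _ = ∑ s, q s * (∑ C : Fin K → Z, (∏ i, PZ (C i)) *
            ∑ B : Fin K → Fin M, (∏ _i : Fin K, (1 / (M : ℝ))) * err C B s) := by
            rw [Fintype.sum_prod_type]
            simp only
            simp_rw [Finset.mul_sum]
            conv_rhs => rw [Finset.sum_comm]
            refine Finset.sum_congr rfl fun a _ => ?_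
            conv_rhs => rw [Finset.sum_comm]
            refine Finset.sum_congr rfl fun b _ => Finset.sum_congr rfl fun s _ => ?_
            ring
        _ ≤ _ := Finset.sum_le_sum fun s _ => mul_le_mul_of_nonneg_left (hC s) (hq0 s))
  exact ⟨f C B, e1 C B, e2 C B, hCB⟩

end TWR

namespace TWR

lemma aux_cover (q α v a : ℝ) (K : ℕ) (hq : 0 ≤ q) (hα1 : α ≤ 1) (hv0 : 0 ≤ v)
    (hv : v ≤ q) (ha : 0 < a) (h : v ≤ a * (q * α)) :
    q * (1 - α) ^ K ≤ (q - v) + q * Real.exp (-(K / a)) := by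
  rcases hq.eq_or_lt with h0 | h0
  · subst h0
    have : v = 0 := le_antisymm hv hv0
    simp [this]
  · set u := v / q with hu
    have huq : v = q * u := by rw [hu]; field_simp
    have hu0 : 0 ≤ u := by positivity
    have hu1 : u ≤ 1 := by rw [hu, div_le_one h0]; exact hv
    have hαu : u / a ≤ α := by
      rw [div_le_iff₀ ha]
      have : q * u ≤ q * (α * a) := by rw [← huq]; linarith
      exact le_of_mul_le_mul_left this h0
    have e1 : (1 - α) ^ K ≤ Real.exp (-(K * (u / a))) := by
      calc (1 - α) ^ K ≤ (Real.exp (-α)) ^ K := by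
            apply pow_le_pow_left₀ (by linarith)
            have := Real.add_one_le_exp (-α)
            linarith
        _ = Real.exp (-(K * α)) := by rw [← Real.exp_nat_mul]; ring_nf
        _ ≤ _ := by
            apply Real.exp_le_exp.2
            have : (K : ℝ) * (u / a) ≤ K * α := mul_le_mul_of_nonneg_left hαu (by positivity)
            linarith
    have e2 : Real.exp (-(K * (u / a))) ≤ u * Real.exp (-(K / a)) + (1 - u) := by
      have := convexOn_exp.2 (Set.mem_univ (-(K / a : ℝ))) (Set.mem_univ (0 : ℝ)) hu0
        (by linarith : 0 ≤ 1 - u) (by ring)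
      simp only [smul_eq_mul, mul_zero, add_zero, Real.exp_zero, mul_one] at this
      calc _ = Real.exp (u * -(K / a)) := by congr 1; ring
        _ ≤ _ := this
    have e3 : u * Real.exp (-(K / a)) ≤ Real.exp (-(K / a)) :=
      mul_le_of_le_one_left (Real.exp_pos _).le hu1
    rw [huq]
    have : q * (1 - α) ^ K ≤ q * ((1 - u) + Real.exp (-(K / a))) :=
      mul_le_mul_of_nonneg_left (by linarith) hq
    linarith

lemma aux_pack {S Y Z : Type} [Fintype S] [Fintype Y] [Fintype Z] (q : S → ℝ) (g : S → Y)
    (PZ : Z → ℝ) (qY : Y → ℝ) (PYZ : Y → Z → ℝ)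
    (hqY : ∀ F : Y → ℝ, ∑ s, q s * F (g s) = ∑ y, qY y * F y)
    (h0 : ∀ y z, 0 ≤ PYZ y z) (h1 : ∑ y, ∑ z, PYZ y z = 1) (a : ℝ) (ha : 0 < a) :
    ∑ s, q s * (∑ z, PZ z * (if a * (qY (g s) * PZ z) ≤ PYZ (g s) z then 1 else 0)) ≤ 1 / a := by
  rw [hqY (fun y => ∑ z, PZ z * (if a * (qY y * PZ z) ≤ PYZ y z then 1 else 0))]
  have h1a : 1 / a = (∑ y, ∑ z, PYZ y z) / a := by rw [h1]
  rw [h1a, Finset.sum_div]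
  apply Finset.sum_le_sum
  intro y _
  rw [Finset.mul_sum, Finset.sum_div]
  apply Finset.sum_le_sum
  intro z _
  split_ifs with h
  · rw [le_div_iff₀ ha]; linarith
  · simp; exact div_nonneg (h0 _ _) ha.le

lemma aux_oneshot2 {X Y Z : Type} [Fintype X] [Fintype Y] [Fintype Z]
    (P : X × Y → Z → ℝ) (hP0 : ∀ s z, 0 ≤ P s z)
    (q : X × Y → ℝ) (hq0 : ∀ s, 0 ≤ q s) (hq1 : ∑ s, q s = 1) (hPq : ∀ s, ∑ z, P s z = q s)
    (PZ : Z → ℝ) (h0 : ∀ z, 0 ≤ PZ z) (h1 : ∑ z, PZ z = 1)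
    (qY : Y → ℝ) (PYZ : Y → Z → ℝ)
    (hqY : ∀ F : Y → ℝ, ∑ s, q s * F s.2 = ∑ y, qY y * F y)
    (hY0 : ∀ y z, 0 ≤ PYZ y z) (hY1 : ∑ y, ∑ z, PYZ y z = 1)
    (qX : X → ℝ) (PXZ : X → Z → ℝ)
    (hqX : ∀ F : X → ℝ, ∑ s, q s * F s.1 = ∑ x, qX x * F x)
    (hX0 : ∀ x z, 0 ≤ PXZ x z) (hX1 : ∑ x, ∑ z, PXZ x z = 1)
    (a a1 a2 : ℝ) (ha : 0 < a) (ha1 : 0 < a1) (ha2 : 0 < a2)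
    (A : X × Y → Z → Prop)
    (hA : ∀ s z, A s z → P s z ≤ a * (q s * PZ z))
    (hA1 : ∀ s z, A s z → a1 * (qY s.2 * PZ z) ≤ PYZ s.2 z)
    (hA2 : ∀ s z, A s z → a2 * (qX s.1 * PZ z) ≤ PXZ s.1 z)
    (K M : ℕ) (hK : 0 < K) (hM : 0 < M) :
    ∃ (f : X × Y → Fin M) (e1 : Fin M → Y → Z) (e2 : Fin M → X → Z),
      ∑ s, q s * (if A s (e1 (f s) s.2) ∧ e1 (f s) s.2 = e2 (f s) s.1 then 0 else 1) ≤
      (∑ s, ∑ z, P s z * (if A s z then 0 else 1)) + Real.exp (-(K / a)) +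
        K / M * (1 / a1 + 1 / a2) := by
  obtain ⟨f, e1, e2, h⟩ := aux_oneshot q hq0 PZ h0 h1 A
    (fun y z => a1 * (qY y * PZ z) ≤ PYZ y z) (fun x z => a2 * (qX x * PZ z) ≤ PXZ x z)
    hA1 hA2 K M hK hM
  refine ⟨f, e1, e2, h.trans ?_⟩
  simp_rw [mul_add]
  rw [Finset.sum_add_distrib, Finset.sum_add_distrib]
  have p1 := aux_pack q (fun s : X × Y => s.2) PZ qY PYZ hqY hY0 hY1 a1 ha1
  have p2 := aux_pack q (fun s : X × Y => s.1) PZ qX PXZ hqX hX0 hX1 a2 ha2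
  have hKM : 0 ≤ (K : ℝ) / M := by positivity
  have c : ∑ s, q s * (1 - ∑ z, PZ z * (if A s z then 1 else 0)) ^ K ≤
      (∑ s, ∑ z, P s z * (if A s z then 0 else 1)) + Real.exp (-(K / a)) := by
    calc _ ≤ ∑ s, ((q s - ∑ z, P s z * (if A s z then 1 else 0)) + q s * Real.exp (-(K / a))) := by
          apply Finset.sum_le_sum
          intro s _
          apply aux_cover _ _ _ _ _ (hq0 s)
          · refine le_of_le_of_eq ?_ h1
            apply Finset.sum_le_sum
            intro z _
            split_ifs <;> simp [h0 z]
          · apply Finset.sum_nonneg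
            intro z _
            split_ifs <;> simp [hP0 s z]
          · rw [← hPq s]
            apply Finset.sum_le_sum
            intro z _
            split_ifs <;> simp [hP0 s z]
          · exact ha
          · rw [Finset.mul_sum, Finset.mul_sum]
            apply Finset.sum_le_sum
            intro z _
            split_ifs with h
            · simpa using hA s z h
            · simp
      _ = _ := by
          rw [Finset.sum_add_distrib, ← Finset.sum_mul, hq1, one_mul]
          congr 1
          refine Finset.sum_congr rfl fun s _ => ?_
          rw [← hPq s, ← Finset.sum_sub_distrib]
          refine Finset.sum_congr rfl fun z _ => ?_
          split_ifs <;> simp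
  have d1 : ∑ s, q s * ((K : ℝ) / M * ∑ z, PZ z *
      (if a1 * (qY s.2 * PZ z) ≤ PYZ s.2 z then 1 else 0)) ≤ K / M * (1 / a1) := by
    calc _ = (K : ℝ) / M * ∑ s, q s * (∑ z, PZ z *
        (if a1 * (qY s.2 * PZ z) ≤ PYZ s.2 z then 1 else 0)) := by
          rw [Finset.mul_sum]; exact Finset.sum_congr rfl fun _ _ => by ring
      _ ≤ _ := mul_le_mul_of_nonneg_left p1 hKM
  have d2 : ∑ s, q s * ((K : ℝ) / M * ∑ z, PZ z *
      (if a2 * (qX s.1 * PZ z) ≤ PXZ s.1 z then 1 else 0)) ≤ K / M * (1 / a2) := by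
    calc _ = (K : ℝ) / M * ∑ s, q s * (∑ z, PZ z *
        (if a2 * (qX s.1 * PZ z) ≤ PXZ s.1 z then 1 else 0)) := by
          rw [Finset.mul_sum]; exact Finset.sum_congr rfl fun _ _ => by ring
      _ ≤ _ := mul_le_mul_of_nonneg_left p2 hKM
  linarith

/-- Gibbs-type inequality. -/
lemma aux_gibbs {α : Type} [Fintype α] (p r : α → ℝ) (hp : ∀ a, 0 ≤ p a) (hr : ∀ a, 0 ≤ r a)
    (hpr : ∀ a, 0 < p a → 0 < r a) (hs : ∑ a, r a ≤ ∑ a, p a) :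
    ∑ a, p a * Real.logb 2 (r a) ≤ ∑ a, p a * Real.logb 2 (p a) := by
  have hl : 0 < Real.log 2 := Real.log_pos (by norm_num)
  have key : ∀ a, p a * Real.logb 2 (r a) - p a * Real.logb 2 (p a) ≤ (r a - p a) / Real.log 2 := by
    intro a
    rcases (hp a).eq_or_lt with h | h
    · rw [← h]; simp; exact div_nonneg (hr a) hl.le
    · have h2 := hpr a h
      unfold Real.logb
      rw [le_div_iff₀ hl]
      have h3 := Real.log_le_sub_one_of_pos (div_pos h2 h)
      rw [Real.log_div h2.ne' h.ne'] at h3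
      have h4 := mul_le_mul_of_nonneg_left h3 h.le
      have h5 : p a * (r a / p a - 1) = r a - p a := by field_simp
      rw [h5] at h4
      calc _ = p a * (Real.log (r a) - Real.log (p a)) := by field_simp
        _ ≤ _ := h4
  have := Finset.sum_le_sum (fun a (_ : a ∈ Finset.univ) => key a)
  rw [Finset.sum_sub_distrib, ← Finset.sum_div, Finset.sum_sub_distrib] at this
  have h6 : (∑ a, r a - ∑ a, p a) / Real.log 2 ≤ 0 :=
    div_nonpos_of_nonpos_of_nonneg (by linarith) hl.le
  linarith

lemma aux_condMI_nonneg {α β γ : Type} [Fintype α] [Fintype β] [Fintype γ] (p : α × β × γ → ℝ)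
    (hp : ∀ t, 0 ≤ p t) : 0 ≤ condMI p := by
  set pab : α × β → ℝ := fun ab => ∑ c, p (ab.1, ab.2, c) with hab
  set pbc : β × γ → ℝ := fun bc => ∑ a, p (a, bc.1, bc.2) with hbc
  set pb : β → ℝ := fun b => ∑ a, ∑ c, p (a, b, c) with hb
  have hab0 : ∀ t, 0 ≤ pab t := fun t => Finset.sum_nonneg fun _ _ => hp _
  have hbc0 : ∀ t, 0 ≤ pbc t := fun t => Finset.sum_nonneg fun _ _ => hp _
  have hb0 : ∀ t, 0 ≤ pb t := fun t => Finset.sum_nonneg fun _ _ => Finset.sum_nonneg fun _ _ => hp _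
  have lab : ∀ a b c, p (a, b, c) ≤ pab (a, b) := fun a b c =>
    Finset.single_le_sum (f := fun c => p (a, b, c)) (fun _ _ => hp _) (Finset.mem_univ c)
  have lbc : ∀ a b c, p (a, b, c) ≤ pbc (b, c) := fun a b c =>
    Finset.single_le_sum (f := fun a => p (a, b, c)) (fun _ _ => hp _) (Finset.mem_univ a)
  have lb : ∀ a b, pab (a, b) ≤ pb b := fun a b =>
    Finset.single_le_sum (f := fun a => pab (a, b)) (fun _ _ => hab0 _) (Finset.mem_univ a)
  have sbc : ∀ b, ∑ c, pbc (b, c) = pb b := fun b => Finset.sum_comm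
  have sab : ∀ b, ∑ a, pab (a, b) = pb b := fun b => rfl
  have spb : ∑ t, p t = ∑ b, pb b := by
    rw [Fintype.sum_prod_type]
    simp_rw [Fintype.sum_prod_type]
    rw [Finset.sum_comm]
  have g := aux_gibbs p (fun t => pab (t.1, t.2.1) * pbc t.2 / pb t.2.1) hp
    (fun t => div_nonneg (mul_nonneg (hab0 _) (hbc0 _)) (hb0 _))
    (fun t ht => by
      have := lab t.1 t.2.1 t.2.2
      have := lbc t.1 t.2.1 t.2.2
      have := lb t.1 t.2.1
      exact div_pos (mul_pos (by linarith) (by linarith)) (by linarith))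
    (by
      rw [spb, Fintype.sum_prod_type, Finset.sum_comm]
      rw [Fintype.sum_prod_type]
      apply Finset.sum_le_sum
      intro b _
      have : ∑ c, ∑ a, pab (a, b) * pbc (b, c) / pb b = pb b * pb b / pb b := by
        calc _ = ∑ c, (pb b / pb b) * pbc (b, c) := by
              refine Finset.sum_congr rfl fun c _ => ?_
              rw [← Finset.sum_div, ← Finset.sum_mul, sab]; ring
          _ = _ := by rw [← Finset.mul_sum, sbc]; ring
      simp only at this ⊢
      rw [this]
      rcases (hb0 b).eq_or_lt with h | h
      · rw [← h]; simp
      · rw [mul_div_assoc, div_self h.ne', mul_one])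
  have e : ∀ t, p t * Real.logb 2 (pab (t.1, t.2.1) * pbc t.2 / pb t.2.1) =
      p t * Real.logb 2 (pab (t.1, t.2.1)) + p t * Real.logb 2 (pbc t.2)
        - p t * Real.logb 2 (pb t.2.1) := by
    intro t
    rcases (hp t).eq_or_lt with h | h
    · rw [← h]; simp
    · have h1 := lab t.1 t.2.1 t.2.2
      have h2 := lbc t.1 t.2.1 t.2.2
      have h3 := lb t.1 t.2.1
      have i1 : 0 < pab (t.1, t.2.1) := by linarith
      have i2 : 0 < pbc t.2 := by linarith
      have i3 : 0 < pb t.2.1 := by linarith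
      rw [Real.logb_div (mul_pos i1 i2).ne' i3.ne', Real.logb_mul i1.ne' i2.ne']
      ring
  simp_rw [e] at g
  rw [Finset.sum_sub_distrib, Finset.sum_add_distrib] at g
  have f1 : ∑ t : α × β × γ, p t * Real.logb 2 (pab (t.1, t.2.1)) =
      ∑ t, pab t * Real.logb 2 (pab t) := by
    rw [Fintype.sum_prod_type, Fintype.sum_prod_type]
    refine Finset.sum_congr rfl fun a _ => ?_
    rw [Fintype.sum_prod_type]
    refine Finset.sum_congr rfl fun b _ => ?_
    exact (Finset.sum_mul Finset.univ (fun c => p (a, b, c)) (Real.logb 2 (pab (a, b)))).symm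
  have f2 : ∑ t : α × β × γ, p t * Real.logb 2 (pbc t.2) =
      ∑ t, pbc t * Real.logb 2 (pbc t) := by
    rw [Fintype.sum_prod_type, Finset.sum_comm]
    refine Finset.sum_congr rfl fun a _ => ?_
    exact (Finset.sum_mul Finset.univ (fun x => p (x, a)) (Real.logb 2 (pbc a))).symm
  have f3 : ∑ t : α × β × γ, p t * Real.logb 2 (pb t.2.1) =
      ∑ t, pb t * Real.logb 2 (pb t) := by
    rw [Fintype.sum_prod_type, Finset.sum_comm, Fintype.sum_prod_type]
    refine Finset.sum_congr rfl fun a _ => ?_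
    simp only
    simp_rw [← Finset.sum_mul]
    rw [sbc]
  have : condMI p = -∑ t, pab t * Real.logb 2 (pab t) + -∑ t, pbc t * Real.logb 2 (pbc t)
    - -∑ t, p t * Real.logb 2 (p t) - -∑ t, pb t * Real.logb 2 (pb t) := rfl
  rw [this]
  linarith

end TWR

namespace TWR

lemma aux_pairs {α β : Type} [Fintype α] [Fintype β] (n : ℕ) (F : (Fin n → α × β) → ℝ) :
    ∑ s : (Fin n → α) × (Fin n → β), F (fun i => (s.1 i, s.2 i)) = ∑ t, F t :=
  Equiv.sum_comp (Equiv.arrowProdEquivProdArrow (Fin n) (fun _ => α) (fun _ => β)).symm F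

lemma aux_triple {α β γ : Type} [Fintype α] [Fintype β] [Fintype γ] (n : ℕ)
    (F : (Fin n → (α × β) × γ) → ℝ) :
    ∑ s : (Fin n → α) × (Fin n → β), ∑ z : Fin n → γ, F (fun i => ((s.1 i, s.2 i), z i)) =
      ∑ t, F t := by
  rw [aux_pairs n (fun u => ∑ z : Fin n → γ, F (fun i => (u i, z i)))]
  rw [← aux_pairs n F, Fintype.sum_prod_type]

lemma aux_MI_eq {α β : Type} [Fintype α] [Fintype β] (p : α × β → ℝ) :
    ∑ t, p t * (Real.logb 2 (p t) - Real.logb 2 (∑ b, p (t.1, b)) - Real.logb 2 (∑ a, p (a, t.2)))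
      = MI p := by
  unfold MI H2
  simp_rw [mul_sub]
  rw [Finset.sum_sub_distrib, Finset.sum_sub_distrib]
  have h1 : ∑ t : α × β, p t * Real.logb 2 (∑ b, p (t.1, b)) =
      ∑ a, (∑ b, p (a, b)) * Real.logb 2 (∑ b, p (a, b)) := by
    rw [Fintype.sum_prod_type]
    simp_rw [Finset.sum_mul]
  have h2 : ∑ t : α × β, p t * Real.logb 2 (∑ a, p (a, t.2)) =
      ∑ b, (∑ a, p (a, b)) * Real.logb 2 (∑ a, p (a, b)) := by
    rw [Fintype.sum_prod_type, Finset.sum_comm]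
    simp_rw [Finset.sum_mul]
  rw [h1, h2]
  ring

lemma aux_logprod {n : ℕ} (u v w : Fin n → ℝ) (hu : ∀ i, 0 < u i) (hv : ∀ i, 0 < v i)
    (hw : ∀ i, 0 < w i) :
    ∏ i, u i = (2 : ℝ) ^ (∑ i, (Real.logb 2 (u i) - Real.logb 2 (v i) - Real.logb 2 (w i))) *
      ((∏ i, v i) * ∏ i, w i) := by
  rw [← Finset.prod_mul_distrib, Real.rpow_sum_of_pos (by norm_num), ← Finset.prod_mul_distrib]
  refine Finset.prod_congr rfl fun i _ => ?_
  rw [Real.rpow_sub (by norm_num), Real.rpow_sub (by norm_num),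
    Real.rpow_logb (by norm_num) (by norm_num) (hu i),
    Real.rpow_logb (by norm_num) (by norm_num) (hv i),
    Real.rpow_logb (by norm_num) (by norm_num) (hw i)]
  have := (hv i).ne'
  have := (hw i).ne'
  field_simp

set_option maxHeartbeats 1600000 in
lemma aux_block {𝒳 𝒴 Z : Type} [Fintype 𝒳] [Fintype 𝒴] [Fintype Z]
    (p : (𝒳 × 𝒴) × Z → ℝ) (hp0 : ∀ t, 0 ≤ p t) (hp1 : ∑ t, p t = 1)
    (q : 𝒳 × 𝒴 → ℝ) (hq : ∀ s, ∑ z, p (s, z) = q s)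
    (c1 : 𝒳 → Z → ℝ) (c2 : 𝒴 → Z → ℝ) (d1 d2 : ℝ)
    (hc1 : ∑ t, p t * c1 t.1.1 t.2 ≤ d1) (hc2 : ∑ t, p t * c2 t.1.2 t.2 ≤ d2)
    (I IX IY : ℝ) (hI : I = MI p)
    (hIX : IX = MI (fun t : 𝒳 × Z => ∑ y, p ((t.1, y), t.2)))
    (hIY : IY = MI (fun t : 𝒴 × Z => ∑ x, p ((x, t.1), t.2)))
    (η : ℝ) (hη : 0 < η) :
    ∃ V : ℝ, ∀ (n K M : ℕ), 0 < n → 0 < K → 0 < M →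
    ∃ (f : (Fin n → 𝒳) × (Fin n → 𝒴) → Fin M) (e1 : Fin M → (Fin n → 𝒴) → Fin n → Z)
      (e2 : Fin M → (Fin n → 𝒳) → Fin n → Z),
      ∑ s, iid q n s * (if (∑ i, c1 (s.1 i) (e1 (f s) s.2 i) ≤ n * (d1 + η) ∧
          ∑ i, c2 (s.2 i) (e1 (f s) s.2 i) ≤ n * (d2 + η)) ∧
          e1 (f s) s.2 = e2 (f s) s.1 then 0 else 1) ≤
        V / (η ^ 2 * n) + Real.exp (-(K / (2 : ℝ) ^ (n * (I + η)))) +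
        K / M * (1 / (2 : ℝ) ^ (n * (IY - η)) + 1 / (2 : ℝ) ^ (n * (IX - η))) := by
  -- single-letter marginals
  set pZ : Z → ℝ := fun z => ∑ s, p (s, z) with hpZ
  set pXZ : 𝒳 × Z → ℝ := fun t => ∑ y, p ((t.1, y), t.2) with hpXZ
  set pYZ : 𝒴 × Z → ℝ := fun t => ∑ x, p ((x, t.1), t.2) with hpYZ
  set qX : 𝒳 → ℝ := fun x => ∑ y, q (x, y) with hqX
  set qY : 𝒴 → ℝ := fun y => ∑ x, q (x, y) with hqY
  have hq0 : ∀ s, 0 ≤ q s := fun s => by rw [← hq]; exact Finset.sum_nonneg fun _ _ => hp0 _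
  have pZ0 : ∀ z, 0 ≤ pZ z := fun z => Finset.sum_nonneg fun _ _ => hp0 _
  have pXZ0 : ∀ z, 0 ≤ pXZ z := fun z => Finset.sum_nonneg fun _ _ => hp0 _
  have pYZ0 : ∀ z, 0 ≤ pYZ z := fun z => Finset.sum_nonneg fun _ _ => hp0 _
  have hqsum : ∑ s, q s = 1 := by
    rw [← hp1, Fintype.sum_prod_type (f := p)]; exact Finset.sum_congr rfl fun s _ => (hq s).symm
  have hpZsum : ∑ z, pZ z = 1 := by
    rw [← hp1, Fintype.sum_prod_type, Finset.sum_comm]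
  have hXZ1 : ∀ x, ∑ z, pXZ (x, z) = qX x := fun x => by
    simp only [hpXZ, hqX]
    rw [Finset.sum_comm]
    exact Finset.sum_congr rfl fun y _ => hq _
  have hYZ1 : ∀ x, ∑ z, pYZ (x, z) = qY x := fun x => by
    simp only [hpYZ, hqY]
    rw [Finset.sum_comm]
    exact Finset.sum_congr rfl fun y _ => hq _
  have hXZ2 : ∀ z, ∑ x, pXZ (x, z) = pZ z := fun z => by
    simp only [hpXZ, hpZ]
    rw [Fintype.sum_prod_type]
  have hYZ2 : ∀ z, ∑ x, pYZ (x, z) = pZ z := fun z => by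
    simp only [hpYZ, hpZ]
    rw [Fintype.sum_prod_type, Finset.sum_comm]
  have hqXsum : ∑ x, qX x = 1 := by rw [← hqsum, Fintype.sum_prod_type]
  have hqYsum : ∑ x, qY x = 1 := by rw [← hqsum, Fintype.sum_prod_type, Finset.sum_comm]
  -- positivity on the support
  have posq : ∀ t, 0 < p t → 0 < q t.1 := fun t h => by
    rw [← hq]
    exact lt_of_lt_of_le h (Finset.single_le_sum (f := fun z => p (t.1, z))
      (fun _ _ => hp0 _) (Finset.mem_univ t.2))
  have posZ : ∀ t, 0 < p t → 0 < pZ t.2 := fun t h =>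
    lt_of_lt_of_le h (Finset.single_le_sum (f := fun s => p (s, t.2))
      (fun _ _ => hp0 _) (Finset.mem_univ t.1))
  have posXZ : ∀ t, 0 < p t → 0 < pXZ (t.1.1, t.2) := fun t h =>
    lt_of_lt_of_le h (Finset.single_le_sum (f := fun y => p ((t.1.1, y), t.2))
      (fun _ _ => hp0 _) (Finset.mem_univ t.1.2))
  have posYZ : ∀ t, 0 < p t → 0 < pYZ (t.1.2, t.2) := fun t h =>
    lt_of_lt_of_le h (Finset.single_le_sum (f := fun x => p ((x, t.1.2), t.2))
      (fun _ _ => hp0 _) (Finset.mem_univ t.1.1))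
  have posX : ∀ t, 0 < p t → 0 < qX t.1.1 := fun t h =>
    lt_of_lt_of_le (posq t h) (Finset.single_le_sum (f := fun y => q (t.1.1, y))
      (fun _ _ => hq0 _) (Finset.mem_univ t.1.2))
  have posY : ∀ t, 0 < p t → 0 < qY t.1.2 := fun t h =>
    lt_of_lt_of_le (posq t h) (Finset.single_le_sum (f := fun x => q (x, t.1.2))
      (fun _ _ => hq0 _) (Finset.mem_univ t.1.1))
  -- the five statistics
  let φ : (𝒳 × 𝒴) × Z → ℝ := fun t =>
    Real.logb 2 (p t) - Real.logb 2 (q t.1) - Real.logb 2 (pZ t.2)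
  let φX : (𝒳 × 𝒴) × Z → ℝ := fun t => -(
    Real.logb 2 (pXZ (t.1.1, t.2)) - Real.logb 2 (qX t.1.1) - Real.logb 2 (pZ t.2))
  let φY : (𝒳 × 𝒴) × Z → ℝ := fun t => -(
    Real.logb 2 (pYZ (t.1.2, t.2)) - Real.logb 2 (qY t.1.2) - Real.logb 2 (pZ t.2))
  let φ1 : (𝒳 × 𝒴) × Z → ℝ := fun t => c1 t.1.1 t.2
  let φ2 : (𝒳 × 𝒴) × Z → ℝ := fun t => c2 t.1.2 t.2
  have mI : ∑ t, p t * φ t = I := by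
    rw [hI, ← aux_MI_eq]
    simp only [hq, φ, hpZ]
  have mX : ∑ t, p t * φX t = -IX := by
    rw [hIX, ← aux_MI_eq]
    simp only [hXZ1, hXZ2, φX]
    simp only [Fintype.sum_prod_type]
    rw [← Finset.sum_neg_distrib]
    refine Finset.sum_congr rfl fun x _ => ?_
    rw [Finset.sum_comm, ← Finset.sum_neg_distrib]
    refine Finset.sum_congr rfl fun z _ => ?_
    rw [← Finset.sum_mul, mul_neg]
  have mY : ∑ t, p t * φY t = -IY := by
    rw [hIY, ← aux_MI_eq]
    simp only [hYZ1, hYZ2, φY]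
    simp only [Fintype.sum_prod_type]
    rw [← Finset.sum_neg_distrib, Finset.sum_comm]
    refine Finset.sum_congr rfl fun x _ => ?_
    rw [Finset.sum_comm, ← Finset.sum_neg_distrib]
    refine Finset.sum_congr rfl fun z _ => ?_
    rw [← Finset.sum_mul, mul_neg]
  let v : ((𝒳 × 𝒴) × Z → ℝ) → ℝ := fun ψ => ∑ t, p t * (ψ t - ∑ t, p t * ψ t) ^ 2
  refine ⟨v φ + v φX + v φY + v φ1 + v φ2, ?_⟩
  intro n K M hn hK hM
  have hn' : (0 : ℝ) < n := by exact_mod_cast hn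
  let A : (Fin n → 𝒳) × (Fin n → 𝒴) → (Fin n → Z) → Prop := fun s z =>
    (∏ i, p ((s.1 i, s.2 i), z i) ≤ (2 : ℝ) ^ (n * (I + η)) * (iid q n s * ∏ i, pZ (z i))) ∧
    ((2 : ℝ) ^ (n * (IY - η)) * ((∏ i, qY (s.2 i)) * ∏ i, pZ (z i)) ≤ ∏ i, pYZ (s.2 i, z i)) ∧
    ((2 : ℝ) ^ (n * (IX - η)) * ((∏ i, qX (s.1 i)) * ∏ i, pZ (z i)) ≤ ∏ i, pXZ (s.1 i, z i)) ∧
    (∑ i, c1 (s.1 i) (z i) ≤ n * (d1 + η)) ∧ (∑ i, c2 (s.2 i) (z i) ≤ n * (d2 + η))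
  obtain ⟨f, e1, e2, h⟩ := aux_oneshot2
    (fun (s : (Fin n → 𝒳) × (Fin n → 𝒴)) (z : Fin n → Z) => ∏ i, p ((s.1 i, s.2 i), z i))
    (fun s z => Finset.prod_nonneg fun _ _ => hp0 _)
    (iid q n) (fun s => Finset.prod_nonneg fun _ _ => hq0 _)
    (by
      unfold iid
      rw [aux_pairs n (fun t => ∏ i, q (t i))]
      exact aux_E_one q hqsum)
    (fun s => by
      rw [aux_sum_pi_prod (fun i z => p ((s.1 i, s.2 i), z))]
      simp only [hq]; rfl)
    (fun z => ∏ i, pZ (z i)) (fun z => Finset.prod_nonneg fun _ _ => pZ0 _)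
    (aux_E_one pZ hpZsum)
    (fun y => ∏ i, qY (y i)) (fun y z => ∏ i, pYZ (y i, z i))
    (fun F => by
      rw [Fintype.sum_prod_type, Finset.sum_comm]
      refine Finset.sum_congr rfl fun y _ => ?_
      simp only
      rw [← Finset.sum_mul]
      congr 1
      exact aux_sum_pi_prod (fun i x => q (x, y i)))
    (fun y z => Finset.prod_nonneg fun _ _ => pYZ0 _)
    (by
      calc _ = ∑ y : Fin n → 𝒴, ∏ i, qY (y i) := by
            refine Finset.sum_congr rfl fun y _ => ?_
            rw [aux_sum_pi_prod (fun i z => pYZ (y i, z))]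
            simp only [hYZ1]
        _ = 1 := aux_E_one qY hqYsum)
    (fun x => ∏ i, qX (x i)) (fun x z => ∏ i, pXZ (x i, z i))
    (fun F => by
      rw [Fintype.sum_prod_type]
      refine Finset.sum_congr rfl fun y _ => ?_
      simp only
      rw [← Finset.sum_mul]
      congr 1
      exact aux_sum_pi_prod (fun i x => q (y i, x)))
    (fun y z => Finset.prod_nonneg fun _ _ => pXZ0 _)
    (by
      calc _ = ∑ y : Fin n → 𝒳, ∏ i, qX (y i) := by
            refine Finset.sum_congr rfl fun y _ => ?_
            rw [aux_sum_pi_prod (fun i z => pXZ (y i, z))]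
            simp only [hXZ1]
        _ = 1 := aux_E_one qX hqXsum)
    ((2 : ℝ) ^ (n * (I + η))) ((2 : ℝ) ^ (n * (IY - η))) ((2 : ℝ) ^ (n * (IX - η)))
    (by positivity) (by positivity) (by positivity) A
    (fun s z h => h.1) (fun s z h => h.2.1) (fun s z h => h.2.2.1) K M hK hM
  refine ⟨f, e1, e2, le_trans (Finset.sum_le_sum fun s _ => ?_) (h.trans ?_)⟩
  · apply mul_le_mul_of_nonneg_left _ (Finset.prod_nonneg fun _ _ => hq0 _)
    split_ifs with g1 g2 g2
    · norm_num
    · norm_num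
    · exact absurd ⟨⟨g2.1.2.2.2.1, g2.1.2.2.2.2⟩, g2.2⟩ g1
    · norm_num
  gcongr
  -- bad event
  let J : ((𝒳 × 𝒴) × Z → ℝ) → (Fin n → (𝒳 × 𝒴) × Z) → ℝ := fun ψ t =>
    if n * ((∑ a, p a * ψ a) + η) < ∑ i, ψ (t i) then 1 else 0
  have hJ0 : ∀ ψ t, 0 ≤ J ψ t := by
    intro ψ t; simp only [J]; split_ifs <;> norm_num
  have hch : ∀ ψ, ∑ t : Fin n → (𝒳 × 𝒴) × Z, (∏ i, p (t i)) * J ψ t ≤ v ψ / (η ^ 2 * n) :=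
    fun ψ => aux_cheb p hp0 hp1 ψ η hη n hn
  calc _ ≤ ∑ s : (Fin n → 𝒳) × (Fin n → 𝒴), ∑ z : Fin n → Z,
        (fun t : Fin n → (𝒳 × 𝒴) × Z => (∏ i, p (t i)) * J φ t + (∏ i, p (t i)) * J φX t +
          (∏ i, p (t i)) * J φY t + (∏ i, p (t i)) * J φ1 t + (∏ i, p (t i)) * J φ2 t)
          (fun i => ((s.1 i, s.2 i), z i)) := by
        refine Finset.sum_le_sum fun s _ => Finset.sum_le_sum fun z _ => ?_
        simp only
        rw [← mul_add, ← mul_add, ← mul_add, ← mul_add]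
        have hnn : 0 ≤ ∏ i, p ((s.1 i, s.2 i), z i) := Finset.prod_nonneg fun _ _ => hp0 _
        rcases hnn.eq_or_lt with hz | hz
        · rw [← hz, zero_mul, zero_mul]
        apply mul_le_mul_of_nonneg_left _ hnn
        have hpi : ∀ i, 0 < p ((s.1 i, s.2 i), z i) := by
          intro i
          rcases (hp0 ((s.1 i, s.2 i), z i)).eq_or_lt with h0 | h0
          · exact absurd (Finset.prod_eq_zero (Finset.mem_univ i) h0.symm) hz.ne'
          · exact h0
        set t : Fin n → (𝒳 × 𝒴) × Z := fun i => ((s.1 i, s.2 i), z i) with ht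
        have b0 := hJ0 φ t
        have b1 := hJ0 φX t
        have b2 := hJ0 φY t
        have b3 := hJ0 φ1 t
        have b4 := hJ0 φ2 t
        split_ifs with hA
        · linarith
        have hJ1 : ∀ ψ, n * ((∑ a, p a * ψ a) + η) < ∑ i, ψ (t i) → J ψ t = 1 := by
          intro ψ h; simp only [J, if_pos h]
        by_cases g0 : n * ((∑ a, p a * φ a) + η) < ∑ i, φ (t i)
        · have := hJ1 _ g0; linarith
        by_cases g1 : n * ((∑ a, p a * φX a) + η) < ∑ i, φX (t i)
        · have := hJ1 _ g1; linarith
        by_cases g2 : n * ((∑ a, p a * φY a) + η) < ∑ i, φY (t i)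
        · have := hJ1 _ g2; linarith
        by_cases g3 : n * ((∑ a, p a * φ1 a) + η) < ∑ i, φ1 (t i)
        · have := hJ1 _ g3; linarith
        by_cases g4 : n * ((∑ a, p a * φ2 a) + η) < ∑ i, φ2 (t i)
        · have := hJ1 _ g4; linarith
        exfalso
        apply hA
        push Not at g0 g1 g2 g3 g4
        rw [mI] at g0
        rw [mX] at g1
        rw [mY] at g2
        refine ⟨?_, ?_, ?_, ?_, ?_⟩
        · rw [aux_logprod (fun i => p ((s.1 i, s.2 i), z i)) (fun i => q (s.1 i, s.2 i))
            (fun i => pZ (z i)) hpi (fun i => posq _ (hpi i)) (fun i => posZ _ (hpi i))]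
          unfold iid
          apply mul_le_mul_of_nonneg_right
          · exact Real.rpow_le_rpow_of_exponent_le (by norm_num) g0
          · exact mul_nonneg (Finset.prod_nonneg fun _ _ => hq0 _)
              (Finset.prod_nonneg fun _ _ => pZ0 _)
        · rw [aux_logprod (fun i => pYZ (s.2 i, z i)) (fun i => qY (s.2 i))
            (fun i => pZ (z i)) (fun i => posYZ _ (hpi i)) (fun i => posY _ (hpi i))
            (fun i => posZ _ (hpi i))]
          apply mul_le_mul_of_nonneg_right
          · apply Real.rpow_le_rpow_of_exponent_le (by norm_num)
            simp only [φY, t, Finset.sum_neg_distrib] at g2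
            linarith
          · exact mul_nonneg (Finset.prod_nonneg fun i _ => (posY _ (hpi i)).le)
              (Finset.prod_nonneg fun _ _ => pZ0 _)
        · rw [aux_logprod (fun i => pXZ (s.1 i, z i)) (fun i => qX (s.1 i))
            (fun i => pZ (z i)) (fun i => posXZ _ (hpi i)) (fun i => posX _ (hpi i))
            (fun i => posZ _ (hpi i))]
          apply mul_le_mul_of_nonneg_right
          · apply Real.rpow_le_rpow_of_exponent_le (by norm_num)
            simp only [φX, t, Finset.sum_neg_distrib] at g1
            linarith
          · exact mul_nonneg (Finset.prod_nonneg fun i _ => (posX _ (hpi i)).le)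
              (Finset.prod_nonneg fun _ _ => pZ0 _)
        · refine le_trans g3 (mul_le_mul_of_nonneg_left ?_ hn'.le)
          exact add_le_add_left hc1 η
        · refine le_trans g4 (mul_le_mul_of_nonneg_left ?_ hn'.le)
          exact add_le_add_left hc2 η
    _ = ∑ t : Fin n → (𝒳 × 𝒴) × Z, ((∏ i, p (t i)) * J φ t + (∏ i, p (t i)) * J φX t +
          (∏ i, p (t i)) * J φY t + (∏ i, p (t i)) * J φ1 t + (∏ i, p (t i)) * J φ2 t) :=
        aux_triple n (fun t : Fin n → (𝒳 × 𝒴) × Z => (∏ i, p (t i)) * J φ t +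
          (∏ i, p (t i)) * J φX t + (∏ i, p (t i)) * J φY t + (∏ i, p (t i)) * J φ1 t +
          (∏ i, p (t i)) * J φ2 t)
    _ ≤ _ := by
        simp_rw [Finset.sum_add_distrib, add_div]
        have := hch φ
        have := hch φX
        have := hch φY
        have := hch φ1
        have := hch φ2
        linarith

end TWR

namespace TWR

lemma aux_H2_equiv {α β : Type} [Fintype α] [Fintype β] (e : α ≃ β) (p : β → ℝ) :
    H2 (fun a => p (e a)) = H2 p := by
  unfold H2
  rw [Equiv.sum_comp e (fun b => p b * Real.logb 2 (p b))]

lemma aux_MI_nonneg {α β : Type} [Fintype α] [Fintype β] (p : α × β → ℝ)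
    (hp : ∀ t, 0 ≤ p t) (hp1 : ∑ t, p t = 1) : 0 ≤ MI p := by
  rw [← aux_MI_eq]
  have la : ∀ t : α × β, p t ≤ ∑ b, p (t.1, b) := fun t =>
    Finset.single_le_sum (f := fun b => p (t.1, b)) (fun _ _ => hp _) (Finset.mem_univ t.2)
  have lb : ∀ t : α × β, p t ≤ ∑ a, p (a, t.2) := fun t =>
    Finset.single_le_sum (f := fun a => p (a, t.2)) (fun _ _ => hp _) (Finset.mem_univ t.1)
  have g := aux_gibbs p (fun t => (∑ b, p (t.1, b)) * ∑ a, p (a, t.2)) hp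
    (fun t => mul_nonneg (Finset.sum_nonneg fun _ _ => hp _) (Finset.sum_nonneg fun _ _ => hp _))
    (fun t h => mul_pos (lt_of_lt_of_le h (la t)) (lt_of_lt_of_le h (lb t)))
    (by
      rw [Fintype.sum_prod_type]
      simp only
      rw [← Finset.sum_mul_sum, ← Fintype.sum_prod_type' (fun a b => p (a, b)),
        Finset.sum_comm, ← Fintype.sum_prod_type' (fun a b => p (a, b))]
      simp [hp1])
  rw [← sub_nonneg, ← Finset.sum_sub_distrib] at g
  refine g.trans_eq (Finset.sum_congr rfl fun t _ => ?_)
  rcases (hp t).eq_or_lt with h | h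
  · rw [← h]; simp
  · rw [Real.logb_mul (lt_of_lt_of_le h (la t)).ne' (lt_of_lt_of_le h (lb t)).ne']
    ring

lemma aux_dpX {α β γ : Type} [Fintype α] [Fintype β] [Fintype γ] (p : (α × β) × γ → ℝ)
    (hp : ∀ t, 0 ≤ p t) : MI (fun t : α × γ => ∑ y, p ((t.1, y), t.2)) ≤ MI p := by
  have h := aux_condMI_nonneg (fun t : β × α × γ => p ((t.2.1, t.1), t.2.2)) (fun t => hp _)
  unfold condMI at h
  unfold MI
  have e1 : H2 (fun ab : β × α => ∑ c, p ((ab.2, ab.1), c)) = H2 (fun s => ∑ c, p (s, c)) :=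
    aux_H2_equiv (Equiv.prodComm β α) (fun s => ∑ c, p (s, c))
  have e2 : H2 (fun t : β × α × γ => p ((t.2.1, t.1), t.2.2)) = H2 p :=
    aux_H2_equiv ((Equiv.prodAssoc β α γ).symm.trans
      ((Equiv.prodComm β α).prodCongr (Equiv.refl γ))) p
  have e3 : (fun b : γ => ∑ a : α, ∑ y : β, p ((a, y), b)) = (fun b => ∑ s, p (s, b)) := by
    funext b; rw [Fintype.sum_prod_type]
  have e4 : (fun a : α => ∑ b : γ, ∑ y : β, p ((a, y), b)) =
      (fun a => ∑ y : β, ∑ b : γ, p ((a, y), b)) := by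
    funext a; rw [Finset.sum_comm]
  simp only at h ⊢
  rw [e1, e2] at h
  rw [e3, e4]
  linarith

lemma aux_dpY {α β γ : Type} [Fintype α] [Fintype β] [Fintype γ] (p : (α × β) × γ → ℝ)
    (hp : ∀ t, 0 ≤ p t) : MI (fun t : β × γ => ∑ x, p ((x, t.1), t.2)) ≤ MI p := by
  have h := aux_condMI_nonneg (fun t : α × β × γ => p ((t.1, t.2.1), t.2.2)) (fun t => hp _)
  unfold condMI at h
  unfold MI
  have e2 : H2 (fun t : α × β × γ => p ((t.1, t.2.1), t.2.2)) = H2 p :=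
    aux_H2_equiv (Equiv.prodAssoc α β γ).symm p
  have e3 : (fun b : γ => ∑ y : β, ∑ a : α, p ((a, y), b)) = (fun b => ∑ s, p (s, b)) := by
    funext b; rw [Fintype.sum_prod_type, Finset.sum_comm]
  have e4 : (fun y : β => ∑ b : γ, ∑ a : α, p ((a, y), b)) =
      (fun y => ∑ a : α, ∑ b : γ, p ((a, y), b)) := by
    funext a; rw [Finset.sum_comm]
  simp only at h ⊢
  rw [e2] at h
  rw [e3, e4]
  linarith

lemma aux_dp1 {α β γ : Type} [Fintype α] [Fintype β] [Fintype γ] (r : α × β × γ → ℝ)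
    (hr : ∀ t, 0 ≤ r t) : MI (fun t : α × β => ∑ c, r (t.1, t.2, c)) ≤ MI r := by
  have h := aux_condMI_nonneg r hr
  unfold condMI at h
  unfold MI
  have e3 : (fun a : α => ∑ b : β, ∑ c : γ, r (a, b, c)) = (fun a => ∑ s, r (a, s)) := by
    funext b; rw [Fintype.sum_prod_type]
  simp only at h ⊢
  rw [e3]
  linarith

lemma aux_dp2 {α β γ : Type} [Fintype α] [Fintype β] [Fintype γ] (r : α × β × γ → ℝ)
    (hr : ∀ t, 0 ≤ r t) : MI (fun t : α × γ => ∑ b, r (t.1, b, t.2)) ≤ MI r := by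
  have h := aux_dp1 (fun t : α × γ × β => r (t.1, t.2.2, t.2.1)) (fun t => hr _)
  have e : MI (fun t : α × γ × β => r (t.1, t.2.2, t.2.1)) = MI r := by
    unfold MI
    have e1 : (fun a : α => ∑ b : γ × β, r (a, b.2, b.1)) = (fun a => ∑ s, r (a, s)) := by
      funext a; exact Equiv.sum_comp (Equiv.prodComm γ β) (fun s => r (a, s))
    have e2 : H2 (fun t : α × γ × β => r (t.1, t.2.2, t.2.1)) = H2 r :=
      aux_H2_equiv ((Equiv.refl α).prodCongr (Equiv.prodComm γ β)) r
    have e3 : H2 (fun b : γ × β => ∑ a : α, r (a, b.2, b.1)) = H2 (fun b => ∑ a, r (a, b)) :=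
      aux_H2_equiv (Equiv.prodComm γ β) (fun b => ∑ a, r (a, b))
    simp only
    rw [e1, e2, e3]
  rw [e] at h
  exact h

lemma aux_marg_le {α β : Type} [Fintype α] [Fintype β] [Nonempty β] (r : α × β → ℝ)
    (hr : ∀ t, 0 ≤ r t) (hr1 : ∑ t, r t = 1) (qA : α → ℝ) (hqA : ∀ a, ∑ b, r (a, b) = qA a)
    (δ : α → β → ℝ) (d : ℝ) (hd : ∑ t, r t * δ t.1 t.2 ≤ d) : margRD qA δ d ≤ MI r := by
  have hq0 : ∀ a, 0 ≤ qA a := fun a => by rw [← hqA]; exact Finset.sum_nonneg fun _ _ => hr _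
  have hq1 : ∑ a, qA a = 1 := by
    rw [← hr1, Fintype.sum_prod_type]
    exact Finset.sum_congr rfl fun a _ => (hqA a).symm
  apply csInf_le
  · refine ⟨0, ?_⟩
    rintro _ ⟨W, hW, -, rfl⟩
    apply aux_MI_nonneg
    · intro t; exact mul_nonneg (hq0 _) ((hW _).1 _)
    · rw [Fintype.sum_prod_type]
      simp only
      simp_rw [← Finset.mul_sum, (hW _).2, mul_one]
      exact hq1
  · obtain ⟨b0⟩ := ‹Nonempty β›
    let W : α → β → ℝ := fun a b => if qA a = 0 then (if b = b0 then 1 else 0) else r (a, b) / qA a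
    have hW : ∀ a b, qA a * W a b = r (a, b) := by
      intro a b
      simp only [W]
      by_cases h : qA a = 0
      · have := Finset.single_le_sum (f := fun b => r (a, b)) (fun _ _ => hr _) (Finset.mem_univ b)
        rw [hqA, h] at this
        rw [h, zero_mul]
        exact le_antisymm (hr _) this
      · rw [if_neg h]; field_simp
    refine ⟨W, ?_, ?_, ?_⟩
    · intro a
      constructor
      · intro b
        simp only [W]
        split_ifs
        · norm_num
        · norm_num
        · exact div_nonneg (hr _) (hq0 _)
      · simp only [W]
        by_cases h : qA a = 0
        · simp [h]
        · simp only [h, if_false]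
          rw [← Finset.sum_div, hqA, div_self h]
    · simp_rw [hW]
      rw [← Fintype.sum_prod_type' (fun a b => r (a, b) * δ a b)]
      exact hd
    · simp_rw [hW]

end TWR

namespace TWR

lemma aux_two_pow_mul (n x y : ℝ) : (2 : ℝ) ^ (n * x) * (2 : ℝ) ^ (n * y) = (2 : ℝ) ^ (n * (x + y)) := by
  rw [← Real.rpow_add (by norm_num), mul_add]

lemma aux_ceil (x : ℝ) (hx : 0 ≤ x) : 0 < ⌈(2 : ℝ) ^ x⌉₊ ∧ (2 : ℝ) ^ x ≤ ⌈(2 : ℝ) ^ x⌉₊ ∧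
    (⌈(2 : ℝ) ^ x⌉₊ : ℝ) ≤ 2 * (2 : ℝ) ^ x := by
  have h1 : 1 ≤ (2 : ℝ) ^ x := Real.one_le_rpow (by norm_num) hx
  refine ⟨Nat.ceil_pos.2 (by positivity), Nat.le_ceil _, ?_⟩
  have := (Nat.ceil_lt_add_one (by positivity : 0 ≤ (2 : ℝ) ^ x)).le
  linarith

lemma aux_ach {𝒳 𝒴 Xh Yh : Type} [Fintype 𝒳] [Fintype 𝒴] [Fintype Xh] [Fintype Yh]
    (q : 𝒳 × 𝒴 → ℝ) (hqp : IsPmf q)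
    (δ1 : 𝒳 → Xh → ℝ) (δ2 : 𝒴 → Yh → ℝ) (d1max d2max : ℝ)
    (hδ1 : ∀ x xh, 0 ≤ δ1 x xh ∧ δ1 x xh ≤ d1max)
    (hδ2 : ∀ y yh, 0 ≤ δ2 y yh ∧ δ2 y yh ≤ d2max)
    (d1 d2 : ℝ) (hd1 : 0 ≤ d1) (hd2 : 0 ≤ d2)
    (p : (𝒳 × 𝒴) × (Xh × Yh) → ℝ) (hp0 : ∀ t, 0 ≤ p t) (hp1 : ∑ t, p t = 1)
    (hq : ∀ s, ∑ z, p (s, z) = q s)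
    (hc1 : ∑ t, p t * δ1 t.1.1 t.2.1 ≤ d1) (hc2 : ∑ t, p t * δ2 t.1.2 t.2.2 ≤ d2)
    (I IX IY : ℝ) (hI : I = MI p)
    (hIX : IX = MI (fun t : 𝒳 × (Xh × Yh) => ∑ y, p ((t.1, y), t.2)))
    (hIY : IY = MI (fun t : 𝒴 × (Xh × Yh) => ∑ x, p ((x, t.1), t.2))) :
    CRAchievable q δ1 δ2 d1 d2 (I - min IX IY) := by
  intro ε hε
  have hI0 : 0 ≤ I := hI ▸ aux_MI_nonneg p hp0 hp1
  set R := I - min IX IY with hR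
  have hR0 : 0 ≤ R := by
    have h1 := aux_dpX p hp0
    rw [← hI, ← hIX] at h1
    have := min_le_left IX IY
    linarith
  set η := ε / 8 with hη
  have hη0 : 0 < η := by positivity
  obtain ⟨V, hV⟩ := aux_block p hp0 hp1 q hq (fun x z => δ1 x z.1) (fun y z => δ2 y z.2) d1 d2
    hc1 hc2 I IX IY hI hIX hIY η hη0
  set ε' := ε / (2 * (1 + |d1max| + |d2max|)) with hε'
  have hden : 0 < 1 + |d1max| + |d2max| := by positivity
  have hε'0 : 0 < ε' := by positivity
  have hε'eq : ε' * (1 + |d1max| + |d2max|) = ε / 2 := by rw [hε']; field_simp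
  have hb1 : |d1max| * ε' ≤ ε / 2 := by nlinarith [abs_nonneg d1max, abs_nonneg d2max]
  have hb2 : |d2max| * ε' ≤ ε / 2 := by nlinarith [abs_nonneg d1max, abs_nonneg d2max]
  have hb0 : ε' ≤ ε := by nlinarith [abs_nonneg d1max, abs_nonneg d2max]
  -- choose n
  have hlim : Filter.Tendsto (fun n : ℕ => V / η ^ 2 * (1 / (n : ℝ)) + 5 * ((2 : ℝ) ^ (-η)) ^ n)
      Filter.atTop (nhds (V / η ^ 2 * 0 + 5 * 0)) := by
    apply Filter.Tendsto.add
    · exact tendsto_one_div_atTop_nhds_zero_nat.const_mul _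
    · exact (tendsto_pow_atTop_nhds_zero_of_lt_one (by positivity)
        (Real.rpow_lt_one_of_one_lt_of_neg (by norm_num) (by linarith))).const_mul _
  have hev1 := hlim.eventually (gt_mem_nhds (show V / η ^ 2 * 0 + 5 * 0 < ε' by simpa using hε'0))
  have hev2 := (tendsto_one_div_atTop_nhds_zero_nat (𝕜 := ℝ)).eventually (gt_mem_nhds hη0)
  obtain ⟨n, ⟨hn1, hn2⟩, hn⟩ := ((hev1.and hev2).and (Filter.eventually_gt_atTop 0)).exists
  have hn' : (0 : ℝ) < n := by exact_mod_cast hn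
  have hu : ((2 : ℝ) ^ (-η)) ^ n = (2 : ℝ) ^ ((n : ℝ) * (-η)) := by
    rw [← Real.rpow_natCast, ← Real.rpow_mul (by norm_num), mul_comm]
  rw [hu] at hn1
  obtain ⟨hK0, hK1, hK2⟩ := aux_ceil (n * (I + 2 * η)) (by positivity)
  obtain ⟨hM0, hM1, hM2⟩ := aux_ceil (n * (R + 4 * η)) (by positivity)
  set K := ⌈(2 : ℝ) ^ ((n : ℝ) * (I + 2 * η))⌉₊
  set M := ⌈(2 : ℝ) ^ ((n : ℝ) * (R + 4 * η))⌉₊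
  have hM0' : (0 : ℝ) < M := by exact_mod_cast hM0
  obtain ⟨f, e1, e2, herr⟩ := hV n K M hn hK0 hM0
  -- bound on error
  have hexp : Real.exp (-(K / (2 : ℝ) ^ (n * (I + η)))) ≤ (2 : ℝ) ^ ((n : ℝ) * (-η)) := by
    have h1 : (2 : ℝ) ^ ((n : ℝ) * η) ≤ K / (2 : ℝ) ^ (n * (I + η)) := by
      rw [le_div_iff₀ (by positivity), aux_two_pow_mul]
      refine le_trans (le_of_eq ?_) hK1
      ring_nf
    have h2 : (2 : ℝ) ^ ((n : ℝ) * (-η)) = ((2 : ℝ) ^ ((n : ℝ) * η))⁻¹ := by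
      rw [← Real.rpow_neg (by norm_num)]; ring_nf
    rw [h2, Real.exp_neg]
    apply inv_anti₀ (by positivity)
    have := Real.add_one_le_exp (K / (2 : ℝ) ^ (n * (I + η)))
    linarith
  have hpk : ∀ J : ℝ, min IX IY ≤ J →
      K / M * (1 / (2 : ℝ) ^ (n * (J - η))) ≤ 2 * (2 : ℝ) ^ ((n : ℝ) * (-η)) := by
    intro J hJ
    rw [div_mul_div_comm, mul_one, div_le_iff₀ (by positivity)]
    calc (K : ℝ) ≤ 2 * (2 : ℝ) ^ ((n : ℝ) * (I + 2 * η)) := hK2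
      _ ≤ 2 * ((2 : ℝ) ^ ((n : ℝ) * (-η)) * ((2 : ℝ) ^ ((n : ℝ) * (R + 4 * η)) * (2 : ℝ) ^ (n * (J - η)))) := by
          rw [aux_two_pow_mul, aux_two_pow_mul]
          apply mul_le_mul_of_nonneg_left _ (by norm_num)
          apply Real.rpow_le_rpow_of_exponent_le (by norm_num)
          apply mul_le_mul_of_nonneg_left _ hn'.le
          linarith
      _ ≤ 2 * ((2 : ℝ) ^ ((n : ℝ) * (-η)) * (M * (2 : ℝ) ^ (n * (J - η)))) := by gcongr
      _ = _ := by ring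
  set good : (Fin n → 𝒳) × (Fin n → 𝒴) → Prop := fun s =>
    (∑ i, δ1 (s.1 i) (e1 (f s) s.2 i).1 ≤ n * (d1 + η) ∧
          ∑ i, δ2 (s.2 i) (e1 (f s) s.2 i).2 ≤ n * (d2 + η)) ∧
          e1 (f s) s.2 = e2 (f s) s.1 with hgood
  have hE : ∑ s, iid q n s * (if good s then 0 else 1) ≤ ε' := by
    refine le_trans (le_of_eq (Finset.sum_congr rfl fun s _ => by congr)) (herr.trans ?_)
    have k1 := hpk IX (min_le_left _ _)
    have k2 := hpk IY (min_le_right _ _)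
    have k3 : V / (η ^ 2 * n) = V / η ^ 2 * (1 / (n : ℝ)) := by
      rw [div_mul_div_comm, mul_one]
    rw [k3, mul_add ((K : ℝ) / M)]
    linarith
  have hiid0 : ∀ s, 0 ≤ iid q n s := fun s => Finset.prod_nonneg fun _ _ => hqp.1 _
  have hiid1 : ∑ s, iid q n s = 1 := by
    unfold iid
    rw [aux_pairs n (fun t => ∏ i, q (t i))]
    exact aux_E_one q hqp.2
  have hdist : ∀ (D d : ℝ) (c : (Fin n → 𝒳) × (Fin n → 𝒴) → Fin n → ℝ), 0 ≤ d →
      |D| * ε' ≤ ε / 2 → (∀ s i, c s i ≤ D) → (∀ s, good s → ∑ i, c s i ≤ n * (d + η)) →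
      ∑ s, iid q n s * ((n : ℝ)⁻¹ * ∑ i, c s i) ≤ d + ε := by
    intro D d c hd hD hcD hcg
    calc _ ≤ ∑ s, (iid q n s * (d + η) + |D| * (iid q n s * (if good s then 0 else 1))) := by
          apply Finset.sum_le_sum
          intro s _
          have : (n : ℝ)⁻¹ * ∑ i, c s i ≤ (d + η) + |D| * (if good s then 0 else 1) := by
            rw [inv_mul_le_iff₀ hn']
            by_cases hs : good s
            · rw [if_pos hs]; simpa using hcg s hs
            · rw [if_neg hs]
              calc ∑ i, c s i ≤ ∑ _i : Fin n, |D| :=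
                    Finset.sum_le_sum fun i _ => (hcD s i).trans (le_abs_self D)
                _ = n * |D| := by simp
                _ ≤ _ := by
                    apply mul_le_mul_of_nonneg_left _ hn'.le
                    linarith
          have := mul_le_mul_of_nonneg_left this (hiid0 s)
          linarith
      _ = (d + η) + |D| * ∑ s, (iid q n s * (if good s then 0 else 1)) := by
          rw [Finset.sum_add_distrib, ← Finset.sum_mul, hiid1, one_mul, Finset.mul_sum]
      _ ≤ (d + η) + |D| * ε' := by gcongr
      _ ≤ _ := by linarith
  have hcr : ∀ (Q : (Fin n → 𝒳) × (Fin n → 𝒴) → Prop) [∀ s, Decidable (Q s)], (∀ s, good s → Q s) →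
      (∑ s, if Q s then 0 else iid q n s) ≤ ε := by
    intro Q _ hQ
    refine le_trans (Finset.sum_le_sum fun s _ => ?_) (hE.trans hb0)
    by_cases hs : good s
    · simp [hs, hQ s hs]
    · rw [if_neg hs]
      split_ifs
      · simpa using hiid0 s
      · simp
  refine ⟨n, M, f, fun a i => (e1 a.1 a.2 i).1, fun a i => (e2 a.1 a.2 i).2,
    fun a i => (e1 a.1 a.2 i).2, fun a i => (e2 a.1 a.2 i).1, hn, ?_, ?_, ?_, ?_, ?_⟩
  · have h1 : Real.logb 2 M ≤ 1 + n * (R + 4 * η) := by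
      calc Real.logb 2 M ≤ Real.logb 2 (2 * (2 : ℝ) ^ ((n : ℝ) * (R + 4 * η))) :=
            Real.logb_le_logb_of_le (by norm_num) hM0' hM2
        _ = _ := by
            rw [Real.logb_mul (by norm_num) (by positivity), Real.logb_rpow (by norm_num) (by norm_num),
              Real.logb_self_eq_one (by norm_num)]
    calc Real.logb 2 M / n ≤ (1 + n * (R + 4 * η)) / n := by gcongr
      _ = 1 / n + (R + 4 * η) := by field_simp
      _ ≤ _ := by linarith
  · exact hdist d1max d1 (fun s i => δ1 (s.1 i) (e1 (f s) s.2 i).1) hd1 hb1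
      (fun s i => (hδ1 _ _).2) (fun s hs => hs.1.1)
  · exact hdist d2max d2 (fun s i => δ2 (s.2 i) (e2 (f s) s.1 i).2) hd2 hb2
      (fun s i => (hδ2 _ _).2) (fun s hs => by rw [← hs.2]; exact hs.1.2)
  · refine hcr (fun s => (fun i => (e2 (f s) s.1 i).1) = (fun i => (e1 (f s) s.2 i).1)) ?_
    intro s hs
    simp only [hs.2]
  · refine hcr (fun s => (fun i => (e1 (f s) s.2 i).2) = (fun i => (e2 (f s) s.1 i).2)) ?_
    intro s hs
    simp only [hs.2]

end TWR
open TWR in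
/-- Corollary 7: the CR-RD function is bounded above via the
joint and marginal RD functions:
`R_CR(d1,d2) ≤ max{R_{XY}(d1,d2) − R_X(d1), R_{XY}(d1,d2) − R_Y(d2)}`. -/
theorem crrd_joint_marginal_upper_bound
    {𝒳 𝒴 Xh Yh : Type} [Fintype 𝒳] [Fintype 𝒴] [Fintype Xh] [Fintype Yh]
    (q : 𝒳 × 𝒴 → ℝ) (hq : IsPmf q)
    (δ1 : 𝒳 → Xh → ℝ) (δ2 : 𝒴 → Yh → ℝ) (d1max d2max : ℝ)
    (hδ1 : ∀ x xh, 0 ≤ δ1 x xh ∧ δ1 x xh ≤ d1max)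
    (hδ2 : ∀ y yh, 0 ≤ δ2 y yh ∧ δ2 y yh ≤ d2max)
    (hδ1n : ∀ x, ∃ xh, δ1 x xh = 0) (hδ2n : ∀ y, ∃ yh, δ2 y yh = 0)
    (d1 d2 : ℝ) (hd1 : 0 ≤ d1) (hd2 : 0 ≤ d2) :
    CRRD q δ1 δ2 d1 d2 ≤
      max (jointRD q δ1 δ2 d1 d2 - margRD (margX q) δ1 d1)
          (jointRD q δ1 δ2 d1 d2 - margRD (margY q) δ2 d2) := by
  have hne : Nonempty (𝒳 × 𝒴) := by
    by_contra h
    rw [not_nonempty_iff] at h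
    have := hq.2
    simp at this
  obtain ⟨x0, y0⟩ := hne
  have : Nonempty Xh := ⟨(hδ1n x0).choose⟩
  have : Nonempty Yh := ⟨(hδ2n y0).choose⟩
  have key : CRRD q δ1 δ2 d1 d2 + min (margRD (margX q) δ1 d1) (margRD (margY q) δ2 d2) ≤
      jointRD q δ1 δ2 d1 d2 := by
    apply le_csInf
    · choose xh hxh using hδ1n
      choose yh hyh using hδ2n
      refine ⟨_, fun xy z => if z = (xh xy.1, yh xy.2) then 1 else 0, ?_, ?_, ?_, rfl⟩
      · intro s
        constructor
        · intro z; dsimp only; split_ifs <;> norm_num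
        · simp
      · simp [hxh, hd1]
      · simp [hyh, hd2]
    · rintro _ ⟨W, hW, hw1, hw2, rfl⟩
      set p : (𝒳 × 𝒴) × (Xh × Yh) → ℝ := fun t => q t.1 * W t.1 t.2 with hp
      have hp0 : ∀ t, 0 ≤ p t := fun t => mul_nonneg (hq.1 _) ((hW _).1 _)
      have hpq : ∀ s, ∑ z, p (s, z) = q s := fun s => by
        simp only [hp]; rw [← Finset.mul_sum, (hW s).2, mul_one]
      have hp1 : ∑ t, p t = 1 := by
        rw [Fintype.sum_prod_type, ← hq.2]
        exact Finset.sum_congr rfl fun s _ => hpq s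
      have hc1 : ∑ t, p t * δ1 t.1.1 t.2.1 ≤ d1 := by
        rw [Fintype.sum_prod_type]; exact hw1
      have hc2 : ∑ t, p t * δ2 t.1.2 t.2.2 ≤ d2 := by
        rw [Fintype.sum_prod_type]; exact hw2
      set rX : 𝒳 × Xh × Yh → ℝ := fun t => ∑ y, p ((t.1, y), t.2) with hrX
      set rY : 𝒴 × Xh × Yh → ℝ := fun t => ∑ x, p ((x, t.1), t.2) with hrY
      have hrX0 : ∀ t, 0 ≤ rX t := fun t => Finset.sum_nonneg fun _ _ => hp0 _
      have hrY0 : ∀ t, 0 ≤ rY t := fun t => Finset.sum_nonneg fun _ _ => hp0 _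
      have hach := aux_ach q hq δ1 δ2 d1max d2max hδ1 hδ2 d1 d2 hd1 hd2 p hp0 hp1 hpq hc1 hc2
        (MI p) (MI rX) (MI rY) rfl rfl rfl
      have hnonneg : 0 ≤ MI p - min (MI rX) (MI rY) := by
        have h1 := aux_dpX p hp0
        have := min_le_left (MI rX) (MI rY)
        linarith
      have hcr : CRRD q δ1 δ2 d1 d2 ≤ MI p - min (MI rX) (MI rY) :=
        csInf_le ⟨0, fun r hr => hr.1⟩ ⟨hnonneg, hach⟩
      have sumX : ∀ F : 𝒳 → Xh → ℝ, ∑ t : 𝒳 × Xh, (∑ c, rX (t.1, t.2, c)) * F t.1 t.2 =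
          ∑ t, p t * F t.1.1 t.2.1 := by
        intro F
        simp only [Fintype.sum_prod_type, hrX, Finset.sum_mul]
        refine Finset.sum_congr rfl fun x _ => ?_
        conv_rhs => rw [Finset.sum_comm]
        refine Finset.sum_congr rfl fun xh _ => ?_
        exact Finset.sum_comm
      have sumY : ∀ F : 𝒴 → Yh → ℝ, ∑ t : 𝒴 × Yh, (∑ c, rY (t.1, c, t.2)) * F t.1 t.2 =
          ∑ t, p t * F t.1.2 t.2.2 := by
        intro F
        simp only [Fintype.sum_prod_type, hrY, Finset.sum_mul]
        conv_rhs => rw [Finset.sum_comm]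
        refine Finset.sum_congr rfl fun y _ => ?_
        rw [Finset.sum_comm]
        conv_rhs => rw [Finset.sum_comm]
        refine Finset.sum_congr rfl fun xh _ => ?_
        exact Finset.sum_comm
      have hX : margRD (margX q) δ1 d1 ≤ MI rX := by
        refine le_trans (aux_marg_le (fun t : 𝒳 × Xh => ∑ c, rX (t.1, t.2, c))
          (fun t => Finset.sum_nonneg fun _ _ => hrX0 _) ?_ _ ?_ δ1 d1 ?_) (aux_dp1 rX hrX0)
        · have := sumX (fun _ _ => 1)
          simp only [mul_one] at this
          rw [this, hp1]
        · intro x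
          simp only [hrX, margX]
          rw [← Fintype.sum_prod_type' (fun a b => ∑ y, p ((x, y), a, b)), Finset.sum_comm]
          exact Finset.sum_congr rfl fun y _ => hpq (x, y)
        · rw [sumX]; exact hc1
      have hY : margRD (margY q) δ2 d2 ≤ MI rY := by
        refine le_trans (aux_marg_le (fun t : 𝒴 × Yh => ∑ c, rY (t.1, c, t.2))
          (fun t => Finset.sum_nonneg fun _ _ => hrY0 _) ?_ _ ?_ δ2 d2 ?_) (aux_dp2 rY hrY0)
        · have := sumY (fun _ _ => 1)
          simp only [mul_one] at this
          rw [this, hp1]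
        · intro y
          simp only [hrY, margY]
          rw [Finset.sum_comm, ← Fintype.sum_prod_type' (fun a b => ∑ x, p ((x, y), a, b)),
            Finset.sum_comm]
          exact Finset.sum_congr rfl fun x _ => hpq (x, y)
        · rw [sumY]; exact hc2
      have := min_le_min hX hY
      linarith
  rcases min_cases (margRD (margX q) δ1 d1) (margRD (margY q) δ2 d2) with ⟨h, -⟩ | ⟨h, -⟩
  · rw [h] at key
    exact le_max_of_le_left (by linarith)
  · rw [h] at key
    exact le_max_of_le_right (by linarith)
end
end
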